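/- arXiv:1909.07948 — 4 statements merged into one kernel-verified Lean document; each statement's English description precedes it below -/
import Mathlib

section
/- Let N ≥ 2, let Ω ⊆ ℝ^N be a nonempty open connected set, let p > 1 and C > 0. Let u : ℝ^N → ℝ be four times continuously differentiable on Ω and satisfy |Δ(Δu)(x)| ≤ C·|u(x)|^p for all x ∈ Ω. If u vanishes with infinite order at some point x₀ ∈ Ω, then u ≡ 0 on Ω. -/
/-!
The nonlinearity is harmless: on a small ball `|u| ^ p ≤ K |u|`, so with `f = Δu` the pair
`(u, f)` satisfies the second-order system `Δu = f`, `|Δf| ≤ K |u|`, and strong unique continuation follows from a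
Carleman estimate for the Laplacian with a weight singular at the point where `u` vanishes.

**Carleman estimate.** Write `s = ‖x‖ ^ 2`, `W = s ^ (-τ/2) exp (τ s)` (so `W = r ^ (-τ) exp (τ r²)`)
and `v = W w`. Conjugation turns `W s Δw` into
`conjLap τ v = s Δv + 2 τ (1 - 2 s) x·∇v + c(s) v`. With the measure `s ^ (-N/2) dx`, the square of
`conjLap τ v` equals a divergence plus a sum of squares plus a multiple of `v ^ 2` that is at least
`4 τ³ s` for `τ ≥ 4`, `s ≤ 1/4` (`carleman_algebra`, `bracket_ge`). Integration gives
`∫ cw (4 τ³ s w²) ≤ ∫ cw (s Δw)²` with `cw = s ^ (-N/2) W²`, first for `w` supported away from the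
origin (`carleman_away`), and by cutting off near the origin and dominated convergence for every
`w` which is flat there together with its first derivatives and its Laplacian (`carleman_flat`).

**Flatness.** For a `C¹` function, vanishing to infinite order in the `L^ε` sense implies the
pointwise bounds `u = O(‖x - x₀‖ ^ m)` for all `m` (`flat_of_vanishes`), because a Lipschitz function
large at a point is large on a ball of comparable radius. Flatness passes to first derivatives of
a `C²` function by interpolation (`Flat.pd`), and to `Δ(Δu)` by the differential inequality.

**Conclusion.** The estimate applied to `χ u` and `χ Δu`, `χ` a cutoff on a ball of radius `R`,
added up, and the monotonicity of the weight give `2 τ³ J ≤ M V` for all large `τ`, where `J` is a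
weighted `L²` norm of `(u, Δu)` near the origin and `M`, `V` do not depend on `τ`; so `J = 0`
(`local_ucp`). As the radius on which `u` vanishes is half the radius of any admissible ball, the
interior of the zero set is relatively closed in `Ω`, and connectedness finishes the proof.
-/


open MeasureTheory Asymptotics Filter Metric Set

noncomputable def laplacian {N : ℕ} (u : EuclideanSpace ℝ (Fin N) → ℝ)
    (x : EuclideanSpace ℝ (Fin N)) : ℝ :=
  ∑ i : Fin N, iteratedFDeriv ℝ 2 u x ![EuclideanSpace.single i 1, EuclideanSpace.single i 1]

noncomputable def laplacianWithin {N : ℕ} (u : EuclideanSpace ℝ (Fin N) → ℝ)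
    (s : Set (EuclideanSpace ℝ (Fin N))) (x : EuclideanSpace ℝ (Fin N)) : ℝ :=
  ∑ i : Fin N, iteratedFDerivWithin ℝ 2 u s x ![EuclideanSpace.single i 1, EuclideanSpace.single i 1]

def VanishesInfOrder {N : ℕ} (w : EuclideanSpace ℝ (Fin N) → ℝ)
    (x₀ : EuclideanSpace ℝ (Fin N)) : Prop :=
  ∃ ε > (0:ℝ), ∀ m > (0:ℝ),
    (fun r : ℝ => ∫ x in ball x₀ r, |w x| ^ ε) =o[nhdsWithin 0 (Ioi 0)] fun r : ℝ => r ^ m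

noncomputable def spow (t s : ℝ) : ℝ := Real.sign t * |t| ^ s

noncomputable def distToInt (x : ℝ) : ℝ := min (Int.fract x) (1 - Int.fract x)

def IsRadial {N : ℕ} (u : EuclideanSpace ℝ (Fin N) → ℝ) : Prop :=
  ∃ U : ℝ → ℝ, ∀ x, u x = U ‖x‖

/-! ### Partial derivatives and the Laplacian -/

/-- Euclidean space `ℝ^N`. -/
abbrev Eu (N : ℕ) : Type := EuclideanSpace ℝ (Fin N)

/-- The partial derivative `∂ᵢ f`; it is `0` where `f` is not differentiable. -/
noncomputable def pd {N : ℕ} (i : Fin N) (f : Eu N → ℝ) (x : Eu N) : ℝ :=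
  fderiv ℝ f x (EuclideanSpace.single i 1)

section basics
variable {N : ℕ} {f g : Eu N → ℝ} {x : Eu N} {i j : Fin N}

lemma pd_mul (hf : DifferentiableAt ℝ f x) (hg : DifferentiableAt ℝ g x) :
    pd i (fun y => f y * g y) x = pd i f x * g x + f x * pd i g x := by
  simp only [pd]
  rw [fderiv_fun_mul hf hg]
  simp
  ring

lemma pd_add (hf : DifferentiableAt ℝ f x) (hg : DifferentiableAt ℝ g x) :
    pd i (fun y => f y + g y) x = pd i f x + pd i g x := by
  simp only [pd]
  rw [fderiv_fun_add hf hg]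
  simp

lemma pd_sub (hf : DifferentiableAt ℝ f x) (hg : DifferentiableAt ℝ g x) :
    pd i (fun y => f y - g y) x = pd i f x - pd i g x := by
  simp only [pd]
  rw [fderiv_fun_sub hf hg]
  simp

lemma pd_const (c : ℝ) : pd i (fun _ => c) x = 0 := by
  simp [pd]

lemma pd_sum {ι : Type*} (s : Finset ι) {F : ι → Eu N → ℝ}
    (hF : ∀ k ∈ s, DifferentiableAt ℝ (F k) x) :
    pd i (fun y => ∑ k ∈ s, F k y) x = ∑ k ∈ s, pd i (F k) x := by
  simp only [pd]
  rw [fderiv_fun_sum hF]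
  simp

lemma differentiableAt_coord : DifferentiableAt ℝ (fun y : Eu N => y j) x := by
  fun_prop

lemma pd_coord : pd i (fun y : Eu N => y j) x = if i = j then 1 else 0 := by
  have h : HasFDerivAt (fun y : Eu N => y j) (EuclideanSpace.proj (𝕜 := ℝ) j : Eu N →L[ℝ] ℝ) x :=
    (EuclideanSpace.proj (𝕜 := ℝ) j : Eu N →L[ℝ] ℝ).hasFDerivAt
  rw [pd, h.fderiv]
  simp [eq_comm]

lemma pd_congr (h : f =ᶠ[nhds x] g) : pd i f x = pd i g x := by
  rw [pd, pd, h.fderiv_eq]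

lemma contDiffAt_pd {n m : WithTop ℕ∞} (hf : ContDiffAt ℝ n f x) (h : m + 1 ≤ n) :
    ContDiffAt ℝ m (pd i f) x :=
  (hf.fderiv_right h).clm_apply contDiffAt_const

lemma pd_pd_eq (hf : ContDiffAt ℝ 2 f x) :
    pd i (pd j f) x = fderiv ℝ (fderiv ℝ f) x (EuclideanSpace.single i 1)
      (EuclideanSpace.single j 1) := by
  have h1 : DifferentiableAt ℝ (fderiv ℝ f) x :=
    (hf.fderiv_right (m := 1) (by norm_num)).differentiableAt (by norm_num)
  show fderiv ℝ (fun y => fderiv ℝ f y (EuclideanSpace.single j 1)) x _ = _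
  rw [fderiv_clm_apply h1 (by fun_prop)]
  simp

lemma pd_comm (hf : ContDiffAt ℝ 2 f x) : pd i (pd j f) x = pd j (pd i f) x := by
  rw [pd_pd_eq hf, pd_pd_eq hf]
  exact (hf.isSymmSndFDerivAt (by simp)) _ _

lemma laplacian_eq (hf : ContDiffAt ℝ 2 f x) : laplacian f x = ∑ i, pd i (pd i f) x := by
  simp only [laplacian]
  refine Finset.sum_congr rfl fun i _ => ?_
  rw [iteratedFDeriv_two_apply, pd_pd_eq hf]
  simp

lemma laplacian_congr (h : f =ᶠ[nhds x] g) : laplacian f x = laplacian g x := by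
  simp only [laplacian]
  rw [(h.iteratedFDeriv ℝ 2).eq_of_nhds]

lemma contDiffAt_laplacian {m : ℕ} (hf : ContDiffAt ℝ (m + 2 : ℕ) f x) :
    ContDiffAt ℝ m (laplacian f) x := by
  have h : laplacian f =ᶠ[nhds x] fun y => ∑ i, pd i (pd i f) y := by
    filter_upwards [hf.eventually
      (by intro h; exact ENat.natCast_ne_top (m + 2) (WithTop.coe_injective h))] with y hy
    exact laplacian_eq (hy.of_le (by exact_mod_cast Nat.le_add_left 2 m))
  refine ContDiffAt.congr_of_eventuallyEq ?_ h
  refine ContDiffAt.sum fun i _ => ?_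
  exact contDiffAt_pd (n := ((m + 1 : ℕ) : WithTop ℕ∞))
    (contDiffAt_pd hf (by norm_cast)) (by norm_cast)

lemma tsupport_pd_subset : tsupport (pd i f) ⊆ tsupport f :=
  (closure_mono (fun y hy => by
    refine support_fderiv_subset ℝ (f := f) ?_
    intro h; apply hy; simp [pd, h])).trans (closure_minimal subset_rfl (isClosed_tsupport f))

lemma sum_sq_eq (x : Eu N) : ∑ i, x i * x i = ‖x‖ ^ 2 := by
  rw [EuclideanSpace.real_norm_sq_eq]
  exact Finset.sum_congr rfl fun i _ => by ring

lemma hasFDerivAt_normsq (x : Eu N) :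
    HasFDerivAt (fun y : Eu N => ‖y‖ ^ 2) (2 • innerSL ℝ x) x := by
  simpa using (hasStrictFDerivAt_norm_sq x).hasFDerivAt

lemma pd_radial {A : ℝ → ℝ} {A' : ℝ} (hA : HasDerivAt A A' (‖x‖ ^ 2)) :
    pd i (fun y : Eu N => A (‖y‖ ^ 2)) x = x i * (2 * A') := by
  have h := hA.comp_hasFDerivAt x (hasFDerivAt_normsq x)
  rw [pd]
  have h2 : fderiv ℝ (fun y : Eu N => A (‖y‖ ^ 2)) x = A' • (2 • innerSL ℝ x) := h.fderiv
  rw [h2]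
  simp [EuclideanSpace.inner_single_right]
  ring

/-- The divergence theorem in its simplest form: no boundary term for compactly supported functions. -/
lemma integral_pd_eq_zero {F : Eu N → ℝ} (hF : ContDiff ℝ 1 F) (hc : HasCompactSupport F) :
    Integrable (pd i F) ∧ ∫ y, pd i F y = 0 := by
  have hint : Integrable (pd i F) := by
    refine Continuous.integrable_of_hasCompactSupport ?_ ?_
    · exact ((hF.continuous_fderiv (by norm_num)).clm_apply continuous_const)
    · exact hc.of_isClosed_subset (isClosed_tsupport _) tsupport_pd_subset
  refine ⟨hint, ?_⟩
  have := integral_mul_fderiv_eq_neg_fderiv_mul_of_integrable (𝕜 := ℝ) (μ := volume)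
    (f := fun _ : Eu N => (1 : ℝ)) (g := F) (v := EuclideanSpace.single i 1) (by simp)
    (by simp only [one_mul]; exact hint) (by simpa using hF.continuous.integrable_of_hasCompactSupport hc)
    (by intros; fun_prop) (fun y _ => hF.differentiable (by norm_num) y)
  simpa [pd] using this

end basics

/-! ### A divergence identity of Rellich type -/

section divergence
variable {N : ℕ}

/-- The Euler operator `x·∇v`. -/
noncomputable def eul (v : Eu N → ℝ) (x : Eu N) : ℝ := ∑ j, x j * pd j v x

/-- The squared norm of the gradient, `|∇v|²`. -/
noncomputable def gradSq (v : Eu N → ℝ) (x : Eu N) : ℝ := ∑ j, pd j v x * pd j v x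

/-- The `i`-th component of the vector field `h (x·∇v) ∇v - ½ h |∇v|² x + k v ∇v + l v² x`, whose
divergence produces the terms `h (x·∇v) Δv` and `k v Δv`. -/
noncomputable def flux (v h k l : Eu N → ℝ) (i : Fin N) (x : Eu N) : ℝ :=
  h x * (eul v x * pd i v x) - (1 / 2 : ℝ) * (h x * (x i * gradSq v x))
    + k x * (v x * pd i v x) + l x * (x i * (v x * v x))

lemma contDiffAt_eul {v : Eu N → ℝ} {x : Eu N} (hv : ContDiffAt ℝ 2 v x) :
    ContDiffAt ℝ 1 (eul v) x := by
  refine ContDiffAt.sum fun i _ => ?_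
  have := contDiffAt_pd (i := i) (m := 1) hv (by norm_num)
  have h2 : ContDiffAt ℝ 1 (fun y : Eu N => y i) x := by fun_prop
  exact h2.mul this

lemma contDiffAt_gradSq {v : Eu N → ℝ} {x : Eu N} (hv : ContDiffAt ℝ 2 v x) :
    ContDiffAt ℝ 1 (gradSq v) x := by
  refine ContDiffAt.sum fun i _ => ?_
  have := contDiffAt_pd (i := i) (m := 1) hv (by norm_num)
  exact this.mul this

lemma contDiffAt_flux {v h k l : Eu N → ℝ} {i : Fin N} {x : Eu N} (hv : ContDiffAt ℝ 2 v x)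
    (hh : ContDiffAt ℝ 1 h x) (hk : ContDiffAt ℝ 1 k x) (hl : ContDiffAt ℝ 1 l x) :
    ContDiffAt ℝ 1 (flux v h k l i) x := by
  have h1 := contDiffAt_eul hv
  have h2 := contDiffAt_gradSq hv
  have h3 := contDiffAt_pd (i := i) (m := 1) hv (by norm_num)
  have h4 : ContDiffAt ℝ 1 (fun y : Eu N => y i) x := by fun_prop
  have h5 : ContDiffAt ℝ 1 v x := hv.of_le (by norm_num)
  exact (((hh.mul (h1.mul h3)).sub (contDiffAt_const.mul (hh.mul (h4.mul h2)))).add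
    (hk.mul (h5.mul h3))).add (hl.mul (h4.mul (h5.mul h5)))

lemma pd_eul {v : Eu N → ℝ} {x : Eu N} {i : Fin N} (hv : ContDiffAt ℝ 2 v x) :
    pd i (eul v) x = pd i v x + ∑ j, x j * pd i (pd j v) x := by
  have hd : ∀ j : Fin N, DifferentiableAt ℝ (pd j v) x := fun j =>
    (contDiffAt_pd (m := 1) hv (by norm_num)).differentiableAt (by norm_num)
  have : pd i (eul v) x = ∑ j, pd i (fun y : Eu N => y j * pd j v y) x :=
    pd_sum _ fun j _ => differentiableAt_coord.mul (hd j)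
  rw [this]
  have h2 : ∀ j, pd i (fun y : Eu N => y j * pd j v y) x
      = (if i = j then pd j v x else 0) + x j * pd i (pd j v) x := by
    intro j
    rw [pd_mul differentiableAt_coord (hd j), pd_coord]
    split_ifs <;> simp
  simp [h2, Finset.sum_add_distrib]

lemma pd_gradSq {v : Eu N → ℝ} {x : Eu N} {i : Fin N} (hv : ContDiffAt ℝ 2 v x) :
    pd i (gradSq v) x = 2 * ∑ j, pd j v x * pd i (pd j v) x := by
  have hd : ∀ j : Fin N, DifferentiableAt ℝ (pd j v) x := fun j =>
    (contDiffAt_pd (m := 1) hv (by norm_num)).differentiableAt (by norm_num)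
  have : pd i (gradSq v) x = ∑ j, pd i (fun y : Eu N => pd j v y * pd j v y) x :=
    pd_sum _ fun j _ => (hd j).mul (hd j)
  rw [this, Finset.mul_sum]
  refine Finset.sum_congr rfl fun j _ => ?_
  rw [pd_mul (hd j) (hd j)]
  ring

lemma pd_flux {v h k l : Eu N → ℝ} {i : Fin N} {x : Eu N} (hv : ContDiffAt ℝ 2 v x)
    (hh : ContDiffAt ℝ 1 h x) (hk : ContDiffAt ℝ 1 k x) (hl : ContDiffAt ℝ 1 l x)
    {h1 k1 l1 : ℝ} (hh1 : pd i h x = x i * h1) (hk1 : pd i k x = x i * k1)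
    (hl1 : pd i l x = x i * l1) :
    pd i (flux v h k l i) x =
      h1 * eul v x * (x i * pd i v x) + h x * (pd i v x * pd i v x)
      + h x * ∑ j, x j * (pd i v x * pd i (pd j v) x)
      + h x * eul v x * pd i (pd i v) x
      - (1 / 2 : ℝ) * (h1 * gradSq v x * (x i * x i) + h x * gradSq v x)
      - h x * ∑ j, x i * (pd j v x * pd i (pd j v) x)
      + k1 * v x * (x i * pd i v x) + k x * (pd i v x * pd i v x) + k x * v x * pd i (pd i v) x
      + l1 * (v x * v x) * (x i * x i) + l x * (v x * v x)
      + 2 * l x * v x * (x i * pd i v x) := by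
  have d1 := (contDiffAt_eul hv).differentiableAt (by norm_num)
  have d2 := (contDiffAt_gradSq hv).differentiableAt (by norm_num)
  have d3 := (contDiffAt_pd (i := i) (m := 1) hv (by norm_num)).differentiableAt (by norm_num)
  have d4 : DifferentiableAt ℝ (fun y : Eu N => y i) x := differentiableAt_coord
  have d5 : DifferentiableAt ℝ v x := hv.differentiableAt (by norm_num)
  have dh := hh.differentiableAt (by norm_num)
  have dk := hk.differentiableAt (by norm_num)
  have dl := hl.differentiableAt (by norm_num)
  have dc : DifferentiableAt ℝ (fun _ : Eu N => (1 / 2 : ℝ)) x := by fun_prop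
  have e1 : pd i (fun y => h y * (eul v y * pd i v y)) x =
      pd i h x * (eul v x * pd i v x)
        + h x * (pd i (eul v) x * pd i v x + eul v x * pd i (pd i v) x) := by
    rw [pd_mul dh (d1.fun_mul d3), pd_mul d1 d3]
  have e2 : pd i (fun y => (1 / 2 : ℝ) * (h y * (y i * gradSq v y))) x =
      (1 / 2 : ℝ) * (pd i h x * (x i * gradSq v x)
        + h x * (gradSq v x + x i * pd i (gradSq v) x)) := by
    rw [pd_mul (dc) (dh.fun_mul (d4.fun_mul d2)), pd_const, pd_mul dh (d4.fun_mul d2),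
      pd_mul d4 d2, pd_coord]
    simp
  have e3 : pd i (fun y => k y * (v y * pd i v y)) x =
      pd i k x * (v x * pd i v x) + k x * (pd i v x * pd i v x + v x * pd i (pd i v) x) := by
    rw [pd_mul dk (d5.fun_mul d3), pd_mul d5 d3]
  have e4 : pd i (fun y => l y * (y i * (v y * v y))) x =
      pd i l x * (x i * (v x * v x)) + l x * (v x * v x + x i * (2 * v x * pd i v x)) := by
    rw [pd_mul dl (d4.fun_mul (d5.fun_mul d5)), pd_mul d4 (d5.fun_mul d5), pd_mul d5 d5, pd_coord]
    simp only [if_true]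
    ring
  have e0 : pd i (flux v h k l i) x = _ :=
    pd_add (((dh.fun_mul (d1.fun_mul d3)).fun_sub ((dc).fun_mul
      (dh.fun_mul (d4.fun_mul d2)))).fun_add (dk.fun_mul (d5.fun_mul d3))) (dl.fun_mul (d4.fun_mul (d5.fun_mul d5)))
  rw [e0, pd_add ((dh.fun_mul (d1.fun_mul d3)).fun_sub ((dc).fun_mul
      (dh.fun_mul (d4.fun_mul d2)))) (dk.fun_mul (d5.fun_mul d3)), pd_sub (dh.fun_mul (d1.fun_mul d3))
      ((dc).fun_mul (dh.fun_mul (d4.fun_mul d2))), e1, e2, e3, e4,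
      pd_eul hv, pd_gradSq hv, hh1, hk1, hl1]
  have s1 : ∑ j, x j * (pd i v x * pd i (pd j v) x) =
      pd i v x * ∑ j, x j * pd i (pd j v) x := by
    rw [Finset.mul_sum]; exact Finset.sum_congr rfl fun j _ => by ring
  have s2 : ∑ j, x i * (pd j v x * pd i (pd j v) x) =
      x i * ∑ j, pd j v x * pd i (pd j v) x := by
    rw [Finset.mul_sum]
  rw [s1, s2]
  ring

/-- The divergence of `flux` for radial `h`, `k`, `l`, whose gradients are `h1 x`, `k1 x`, `l1 x`. -/
lemma div_flux {v h k l : Eu N → ℝ} {x : Eu N} (hv : ContDiffAt ℝ 2 v x)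
    (hh : ContDiffAt ℝ 1 h x) (hk : ContDiffAt ℝ 1 k x) (hl : ContDiffAt ℝ 1 l x)
    {h1 k1 l1 : ℝ} (hh1 : ∀ i, pd i h x = x i * h1) (hk1 : ∀ i, pd i k x = x i * k1)
    (hl1 : ∀ i, pd i l x = x i * l1) :
    ∑ i, pd i (flux v h k l i) x =
      h x * eul v x * laplacian v x + h x * gradSq v x + h1 * eul v x ^ 2
      - (1 / 2 : ℝ) * (N * h x + ‖x‖ ^ 2 * h1) * gradSq v x
      + k x * v x * laplacian v x + k x * gradSq v x + k1 * v x * eul v x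
      + (N * l x + ‖x‖ ^ 2 * l1) * v x ^ 2 + 2 * l x * v x * eul v x := by
  rw [Finset.sum_congr rfl fun i _ => pd_flux hv hh hk hl (hh1 i) (hk1 i) (hl1 i)]
  simp only [Finset.sum_add_distrib, Finset.sum_sub_distrib, ← Finset.mul_sum]
  rw [← laplacian_eq hv, sum_sq_eq]
  have hs : ∑ i, ∑ j, x j * (pd i v x * pd i (pd j v) x)
      = ∑ i, x i * ∑ j, pd j v x * pd i (pd j v) x := by
    rw [Finset.sum_comm]
    refine Finset.sum_congr rfl fun i _ => ?_
    rw [Finset.mul_sum]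
    refine Finset.sum_congr rfl fun j _ => ?_
    rw [pd_comm hv]
  rw [hs]
  simp only [Finset.sum_const, Finset.card_univ, Fintype.card_fin, nsmul_eq_mul]
  have a1 : ∑ i, x i * pd i v x = eul v x := rfl
  have a2 : ∑ i, pd i v x * pd i v x = gradSq v x := rfl
  rw [a1, a2]
  ring

lemma contDiff_of_tsupport' {n : WithTop ℕ∞} {F : Eu N → ℝ}
    (h : ∀ x ∈ tsupport F, ContDiffAt ℝ n F x) : ContDiff ℝ n F := by
  rw [contDiff_iff_contDiffAt]
  intro x
  by_cases hx : x ∈ tsupport F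
  · exact h x hx
  · exact contDiffAt_const.congr_of_eventuallyEq
      (notMem_tsupport_iff_eventuallyEq.1 hx)

lemma tsupport_subset_aux {F v : Eu N → ℝ}
    (h : ∀ x, x ∉ tsupport v → F x = 0) : tsupport F ⊆ tsupport v :=
  closure_minimal (fun x hx => by by_contra hc; exact hx (h x hc)) (isClosed_tsupport v)

lemma integral_div_flux {v h k l : Eu N → ℝ} (hv : ContDiff ℝ 2 v) (hc : HasCompactSupport v)
    (h0 : (0 : Eu N) ∉ tsupport v)
    (hh : ∀ x ≠ 0, ContDiffAt ℝ 1 h x) (hk : ∀ x ≠ 0, ContDiffAt ℝ 1 k x)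
    (hl : ∀ x ≠ 0, ContDiffAt ℝ 1 l x) :
    Integrable (fun x => ∑ i, pd i (flux v h k l i) x) ∧
      ∫ x, ∑ i, pd i (flux v h k l i) x = 0 := by
  have hts : ∀ i, tsupport (flux v h k l i) ⊆ tsupport v := by
    intro i
    refine tsupport_subset_aux fun x hx => ?_
    have h1 : v x = 0 := image_eq_zero_of_notMem_tsupport hx
    have h2 : ∀ j, pd j v x = 0 := fun j =>
      image_eq_zero_of_notMem_tsupport fun h => hx (tsupport_pd_subset h)
    simp [flux, gradSq, h1, h2]
  have key : ∀ i, Integrable (pd i (flux v h k l i)) ∧ ∫ y, pd i (flux v h k l i) y = 0 := by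
    intro i
    refine integral_pd_eq_zero (contDiff_of_tsupport' fun x hx => ?_)
      (hc.of_isClosed_subset (isClosed_tsupport _) (hts i))
    have hx0 : x ≠ 0 := by rintro rfl; exact h0 (hts i hx)
    exact contDiffAt_flux hv.contDiffAt (hh x hx0) (hk x hx0) (hl x hx0)
  refine ⟨integrable_finsetSum _ fun i _ => (key i).1, ?_⟩
  rw [integral_finsetSum _ fun i _ => (key i).1]
  exact Finset.sum_eq_zero fun i _ => (key i).2

end divergence

/-! ### The conjugated Carleman inequality -/

section carleman
variable {N : ℕ}

/-- With `n` the dimension and `s = ‖x‖²`: the coefficient `(n - 2) + 2 τ (1 - 2 s)` of `x·∇v` that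
remains in `conjLap` once `s Δv - (n - 2) x·∇v`, symmetric for `s ^ (-n/2) dx`, is split off. -/
noncomputable def cb (n τ s : ℝ) : ℝ := (n - 2) + 2 * τ - 4 * τ * s

/-- The zeroth-order coefficient of `conjLap`, as a function of `s = ‖x‖²`. -/
noncomputable def cc (n τ s : ℝ) : ℝ :=
  τ ^ 2 * (1 - 2 * s) ^ 2 + (n - 2) * τ * (1 - 2 * s) - 4 * τ * s

/-- The coefficient `l` of `flux` used in the Carleman inequality, up to the factor `s ^ (-n/2)`. -/
noncomputable def cl (n τ s : ℝ) : ℝ := cb n τ s * cc n τ s + 8 * τ * s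

/-- The derivative of `cl` in `s`. -/
noncomputable def cl' (n τ s : ℝ) : ℝ :=
  -4 * τ * cc n τ s + cb n τ s * (-2 * τ * cb n τ s - 4 * τ) + 8 * τ

lemma hasDerivAt_cl (n τ s : ℝ) : HasDerivAt (cl n τ) (cl' n τ s) s := by
  have hb : HasDerivAt (cb n τ) (-4 * τ) s := by
    have := ((hasDerivAt_id s).const_mul (4 * τ)).const_sub ((n - 2) + 2 * τ)
    refine this.congr_deriv ?_
    ring
  have h1 : HasDerivAt (fun s : ℝ => 1 - 2 * s) (-2) s := by
    have := ((hasDerivAt_id s).const_mul 2).const_sub 1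
    refine this.congr_deriv ?_
    ring
  have hc : HasDerivAt (cc n τ) (-2 * τ * cb n τ s - 4 * τ) s := by
    have := (((h1.pow 2).const_mul (τ ^ 2)).add (h1.const_mul ((n - 2) * τ))).sub
      ((hasDerivAt_id s).const_mul (4 * τ))
    refine this.congr_deriv ?_
    simp only [cb]
    push_cast
    ring
  have := (hb.mul hc).add ((hasDerivAt_id s).const_mul (8 * τ))
  refine this.congr_deriv ?_
  simp only [cl', cb, cc]
  ring

/-- The pointwise identity behind the Carleman inequality. Here `m` stands for `s ^ (-n/2)`, and `A`, `G`,
`L`, `v` for `x·∇v`, `|∇v|²`, `Δv`, `v`. The left side is `m (conjLap τ v)²` minus the divergence of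
`flux` as given by `div_flux`; the right side is a sum of squares plus the term of `bracket_ge`. -/
lemma carleman_algebra (n τ s m A G L v : ℝ) (hs : s ≠ 0) :
    m * (s * L + 2 * τ * (1 - 2 * s) * A + cc n τ s * v) ^ 2
      - ((m * (2 * s * cb n τ s)) * A * L + (m * (2 * s * cb n τ s)) * G
        + (2 * (m * (-n / 2 * (2 * cb n τ s) + (2 * cb n τ s + 2 * s * (-4 * τ))))) * A ^ 2
        - (1 / 2 : ℝ) * (n * (m * (2 * s * cb n τ s))
          + s * (2 * (m * (-n / 2 * (2 * cb n τ s) + (2 * cb n τ s + 2 * s * (-4 * τ)))))) * G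
        + (m * (-8 * τ * s ^ 2)) * v * L + (m * (-8 * τ * s ^ 2)) * G
        + (2 * (m * (-n / 2 * (-8 * τ * s) - 16 * τ * s))) * v * A
        + (n * (m * cl n τ s) + s * (2 * (m * (-n / 2 * cl n τ s / s + cl' n τ s)))) * v ^ 2
        + 2 * (m * cl n τ s) * v * A)
      = m * ((s * L - (n - 2) * A + cc n τ s * v + 4 * τ * s * v) ^ 2 + (cb n τ s * A) ^ 2
        + 16 * τ * s * A ^ 2
        + (4 * s * τ * cb n τ s ^ 2 + 8 * s * τ * cb n τ s - 16 * τ * s - 16 * τ ^ 2 * s ^ 2)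
          * v ^ 2) := by
  field_simp
  simp only [cl, cl', cb, cc]
  ring

/-- The coefficient of `v²` in `carleman_algebra` is of size `τ³ s`. -/
lemma bracket_ge {n τ s : ℝ} (hn : 2 ≤ n) (hτ : 4 ≤ τ) (hs : 0 ≤ s) (hs' : s ≤ 1 / 4) :
    4 * τ ^ 3 * s ≤
      4 * s * τ * cb n τ s ^ 2 + 8 * s * τ * cb n τ s - 16 * τ * s - 16 * τ ^ 2 * s ^ 2 := by
  have hb : τ ≤ cb n τ s := by
    simp only [cb]; nlinarith
  have h1 : τ ^ 2 ≤ cb n τ s ^ 2 := by gcongr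
  have h2 : 0 ≤ 4 * cb n τ s ^ 2 + 8 * cb n τ s - 16 - 16 * τ * s - 4 * τ ^ 2 := by
    nlinarith
  have h3 : 0 ≤ s * τ := by positivity
  nlinarith [mul_nonneg h3 h2]

lemma hasDerivAt_rpow_mul {q s p p' : ℝ} {P : ℝ → ℝ} (hs : 0 < s) (hP : HasDerivAt P p' s)
    (hp : P s = p * s) :
    HasDerivAt (fun t => t ^ q * P t) (s ^ q * (q * p + p')) s := by
  have := (Real.hasDerivAt_rpow_const (p := q) (Or.inl hs.ne')).mul hP
  refine this.congr_deriv ?_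
  rw [hp, Real.rpow_sub_one hs.ne']
  field_simp

/-- The operator `‖x‖² Δ` conjugated with the weight `wf τ (‖x‖²)`; see `conjLap_wf_mul`. -/
noncomputable def conjLap (τ : ℝ) (v : Eu N → ℝ) (x : Eu N) : ℝ :=
  ‖x‖ ^ 2 * laplacian v x + 2 * τ * (1 - 2 * ‖x‖ ^ 2) * eul v x + cc N τ (‖x‖ ^ 2) * v x

lemma contDiffAt_radial {A : ℝ → ℝ} {n : WithTop ℕ∞} {x : Eu N}
    (h : ContDiffAt ℝ n A (‖x‖ ^ 2)) : ContDiffAt ℝ n (fun y : Eu N => A (‖y‖ ^ 2)) x :=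
  ContDiffAt.comp x (g := A) (f := fun y : Eu N => ‖y‖ ^ 2) h (contDiff_norm_sq ℝ).contDiffAt

lemma normsq_pos {x : Eu N} (hx : x ≠ 0) : 0 < ‖x‖ ^ 2 := by
  have := norm_pos_iff.2 hx
  positivity

/-- A weight that may be singular at the origin does not harm functions supported away from it. -/
lemma integrable_weight_mul {w f v : Eu N → ℝ} (hc : HasCompactSupport v)
    (h0 : (0 : Eu N) ∉ tsupport v) (hw : ∀ x ≠ 0, ContinuousAt w x) (hf : Continuous f)
    (hfv : ∀ x, x ∉ tsupport v → f x = 0) : Integrable (fun x => w x * f x) := by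
  have hts : tsupport (fun x => w x * f x) ⊆ tsupport v :=
    tsupport_subset_aux fun x hx => by simp [hfv x hx]
  refine Continuous.integrable_of_hasCompactSupport ?_
    (hc.of_isClosed_subset (isClosed_tsupport _) hts)
  rw [continuous_iff_continuousAt]
  intro x
  by_cases hx : x = 0
  · subst hx
    have : (fun x => w x * f x) =ᶠ[nhds 0] fun _ => 0 :=
      notMem_tsupport_iff_eventuallyEq.1 fun h => h0 (hts h)
    exact continuousAt_const.congr this.symm
  · exact (hw x hx).mul hf.continuousAt

lemma continuous_laplacian {v : Eu N → ℝ} (hv : ContDiff ℝ 2 v) : Continuous (laplacian v) := by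
  rw [continuous_iff_continuousAt]
  intro x
  exact (contDiffAt_laplacian (m := 0) (f := v) (x := x) (by exact_mod_cast hv.contDiffAt)).continuousAt

lemma laplacian_zero_of_notMem {v : Eu N → ℝ} {x : Eu N} (hx : x ∉ tsupport v) :
    laplacian v x = 0 := by
  have h : v =ᶠ[nhds x] fun _ => 0 := notMem_tsupport_iff_eventuallyEq.1 hx
  rw [laplacian_congr h, laplacian_eq contDiffAt_const]
  refine Finset.sum_eq_zero fun i _ => ?_
  have : pd i (fun _ : Eu N => (0 : ℝ)) = fun _ => 0 := by
    funext y; exact pd_const 0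
  rw [this, pd_const]

lemma pd_zero_of_notMem {v : Eu N → ℝ} {x : Eu N} (i : Fin N) (hx : x ∉ tsupport v) :
    pd i v x = 0 :=
  image_eq_zero_of_notMem_tsupport fun h => hx (tsupport_pd_subset h)

lemma conjLap_zero_of_notMem {τ : ℝ} {v : Eu N → ℝ} {x : Eu N} (hx : x ∉ tsupport v) :
    conjLap τ v x = 0 := by
  simp [conjLap, laplacian_zero_of_notMem hx, eul, pd_zero_of_notMem _ hx,
    image_eq_zero_of_notMem_tsupport hx]

lemma continuous_conjLap {τ : ℝ} {v : Eu N → ℝ} (hv : ContDiff ℝ 2 v) :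
    Continuous (conjLap τ v) := by
  have h1 := continuous_laplacian hv
  have h2 : Continuous (eul v) := continuous_iff_continuousAt.2 fun x =>
    (contDiffAt_eul hv.contDiffAt).continuousAt
  have h3 := hv.continuous
  unfold conjLap cc
  fun_prop

lemma continuousAt_weight {q : ℝ} {x : Eu N} (hx : x ≠ 0) :
    ContinuousAt (fun y : Eu N => (‖y‖ ^ 2) ^ q) x :=
  (continuous_norm.pow 2).continuousAt.rpow_const (Or.inl (normsq_pos hx).ne')

theorem carleman_conj (hN : 2 ≤ N) {τ : ℝ} (hτ : 4 ≤ τ) {v : Eu N → ℝ} (hv : ContDiff ℝ 2 v)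
    (h0 : (0 : Eu N) ∉ tsupport v) (hsupp : tsupport v ⊆ closedBall 0 (1 / 2)) :
    ∫ x : Eu N, (‖x‖ ^ 2) ^ (-(N : ℝ) / 2) * (4 * τ ^ 3 * ‖x‖ ^ 2 * v x ^ 2) ≤
      ∫ x : Eu N, (‖x‖ ^ 2) ^ (-(N : ℝ) / 2) * conjLap τ v x ^ 2 := by
  have hc : HasCompactSupport v :=
    (isCompact_closedBall (0 : Eu N) (1 / 2)).of_isClosed_subset (isClosed_tsupport v) hsupp
  set q : ℝ := -(N : ℝ) / 2 with hq
  set h : Eu N → ℝ := fun x => (‖x‖ ^ 2) ^ q * (2 * ‖x‖ ^ 2 * cb N τ (‖x‖ ^ 2)) with hh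
  set k : Eu N → ℝ := fun x => (‖x‖ ^ 2) ^ q * (-8 * τ * (‖x‖ ^ 2) ^ 2) with hk
  set l : Eu N → ℝ := fun x => (‖x‖ ^ 2) ^ q * cl N τ (‖x‖ ^ 2) with hl
  have cw : ∀ s : ℝ, 0 < s → ContDiffAt ℝ 1 (fun t : ℝ => t ^ q) s := fun s hs =>
    contDiffAt_id.rpow_const_of_ne hs.ne'
  have ch : ∀ x ≠ 0, ContDiffAt ℝ 1 h x := fun x hx =>
    contDiffAt_radial (A := fun s => s ^ q * (2 * s * cb N τ s))
      ((cw _ (normsq_pos hx)).mul (by unfold cb; fun_prop))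
  have ck : ∀ x ≠ 0, ContDiffAt ℝ 1 k x := fun x hx =>
    contDiffAt_radial (A := fun s => s ^ q * (-8 * τ * s ^ 2))
      ((cw _ (normsq_pos hx)).mul (by fun_prop))
  have cl_ : ∀ x ≠ 0, ContDiffAt ℝ 1 l x := fun x hx =>
    contDiffAt_radial (A := fun s => s ^ q * cl N τ s)
      ((cw _ (normsq_pos hx)).mul (by unfold cl cb cc; fun_prop))
  obtain ⟨hDi, hD0⟩ := integral_div_flux hv hc h0 ch ck cl_
  have i1 : Integrable (fun x : Eu N => (‖x‖ ^ 2) ^ q * (4 * τ ^ 3 * ‖x‖ ^ 2 * v x ^ 2)) := by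
    refine integrable_weight_mul hc h0 (fun x hx => continuousAt_weight hx) ?_ ?_
    · have := hv.continuous
      fun_prop
    · intro x hx
      simp [image_eq_zero_of_notMem_tsupport hx]
  have i2 : Integrable (fun x : Eu N => (‖x‖ ^ 2) ^ q * conjLap τ v x ^ 2) := by
    refine integrable_weight_mul hc h0 (fun x hx => continuousAt_weight hx)
      ((continuous_conjLap hv).pow 2) ?_
    intro x hx
    simp [conjLap_zero_of_notMem hx]
  have key : ∫ x : Eu N, ((‖x‖ ^ 2) ^ q * (4 * τ ^ 3 * ‖x‖ ^ 2 * v x ^ 2)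
      + ∑ i, pd i (flux v h k l i) x) ≤ ∫ x : Eu N, (‖x‖ ^ 2) ^ q * conjLap τ v x ^ 2 := by
    have : Nonempty (Fin N) := ⟨⟨0, by omega⟩⟩
    have : Nontrivial (Eu N) := inferInstance
    refine integral_mono_ae (i1.add hDi) i2 ?_
    have hne : ∀ᵐ x : Eu N, x ≠ 0 := by
      simp [ae_iff]
    filter_upwards [hne] with x hx
    have hs := normsq_pos hx
    have d1 : ∀ i, pd i h x = x i * (2 * ((‖x‖ ^ 2) ^ q * (q * (2 * cb N τ (‖x‖ ^ 2))
        + (2 * cb N τ (‖x‖ ^ 2) + 2 * ‖x‖ ^ 2 * (-4 * τ))))) := fun i =>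
      pd_radial (A := fun s => s ^ q * (2 * s * cb N τ s)) (hasDerivAt_rpow_mul hs (by
        have hb : HasDerivAt (cb N τ) (-4 * τ) (‖x‖ ^ 2) := by
          have := ((hasDerivAt_id (‖x‖ ^ 2)).const_mul (4 * τ)).const_sub (((N : ℝ) - 2) + 2 * τ)
          refine this.congr_deriv ?_
          ring
        have := ((hasDerivAt_id (‖x‖ ^ 2)).const_mul 2).mul hb
        refine this.congr_deriv ?_
        simp) (by ring))
    have d2 : ∀ i, pd i k x = x i * (2 * ((‖x‖ ^ 2) ^ q * (q * (-8 * τ * ‖x‖ ^ 2)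
        + -16 * τ * ‖x‖ ^ 2))) := fun i =>
      pd_radial (A := fun s => s ^ q * (-8 * τ * s ^ 2)) (hasDerivAt_rpow_mul hs (by
        have := (hasDerivAt_pow 2 (‖x‖ ^ 2)).const_mul (-8 * τ)
        refine this.congr_deriv ?_
        push_cast
        ring) (by ring))
    have d3 : ∀ i, pd i l x = x i * (2 * ((‖x‖ ^ 2) ^ q * (q * (cl N τ (‖x‖ ^ 2) / ‖x‖ ^ 2)
        + cl' N τ (‖x‖ ^ 2)))) := fun i =>
      pd_radial (A := fun s => s ^ q * cl N τ s) (hasDerivAt_rpow_mul hs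
        (hasDerivAt_cl _ _ _) (by field_simp))
    have hdiv := div_flux hv.contDiffAt (ch x hx) (ck x hx) (cl_ x hx) d1 d2 d3
    have halg := carleman_algebra N τ (‖x‖ ^ 2) ((‖x‖ ^ 2) ^ q) (eul v x) (gradSq v x)
      (laplacian v x) (v x) hs.ne'
    have hm : 0 ≤ (‖x‖ ^ 2) ^ q := Real.rpow_nonneg hs.le q
    have hbr : 4 * τ ^ 3 * ‖x‖ ^ 2 * v x ^ 2 ≤
        (4 * ‖x‖ ^ 2 * τ * cb N τ (‖x‖ ^ 2) ^ 2 + 8 * ‖x‖ ^ 2 * τ * cb N τ (‖x‖ ^ 2)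
          - 16 * τ * ‖x‖ ^ 2 - 16 * τ ^ 2 * (‖x‖ ^ 2) ^ 2) * v x ^ 2 := by
      by_cases hxs : x ∈ tsupport v
      · have hx2 : ‖x‖ ≤ 1 / 2 := by simpa using hsupp hxs
        have : ‖x‖ ^ 2 ≤ 1 / 4 := by nlinarith [norm_nonneg x]
        exact mul_le_mul_of_nonneg_right
          (bracket_ge (by exact_mod_cast hN) hτ hs.le this) (sq_nonneg _)
      · simp [image_eq_zero_of_notMem_tsupport hxs]
    show (‖x‖ ^ 2) ^ q * (4 * τ ^ 3 * ‖x‖ ^ 2 * v x ^ 2) + ∑ i, pd i (flux v h k l i) x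
      ≤ (‖x‖ ^ 2) ^ q * conjLap τ v x ^ 2
    have h1 := mul_le_mul_of_nonneg_left hbr hm
    have h2 : 0 ≤ (‖x‖ ^ 2) ^ q * ((‖x‖ ^ 2 * laplacian v x - (N - 2) * eul v x
        + cc N τ (‖x‖ ^ 2) * v x + 4 * τ * ‖x‖ ^ 2 * v x) ^ 2 + (cb N τ (‖x‖ ^ 2) * eul v x) ^ 2
        + 16 * τ * ‖x‖ ^ 2 * eul v x ^ 2) := by positivity
    have h3 : ∑ i, pd i (flux v h k l i) x = _ := hdiv
    simp only [conjLap]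
    rw [h3]
    simp only [hh, hk, hl, hq] at *
    have e1 : (-(N : ℝ) / 2 * (cl N τ (‖x‖ ^ 2) / ‖x‖ ^ 2))
      = (-(N : ℝ) / 2 * cl N τ (‖x‖ ^ 2) / ‖x‖ ^ 2) := by ring
    rw [e1]
    linarith [halg]
  rwa [integral_add i1 hDi, hD0, add_zero] at key

end carleman

/-! ### The Carleman inequality for functions vanishing near the origin -/

section weight
variable {N : ℕ}

lemma contDiffAt_deriv {A : ℝ → ℝ} {s : ℝ} (hA : ContDiffAt ℝ 2 A s) :
    ContDiffAt ℝ 1 (deriv A) s := by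
  have h := (hA.fderiv_right (m := 1) (by norm_num)).clm_apply (contDiffAt_const (c := (1 : ℝ)))
  exact h

lemma eventually_pd_radial {A : ℝ → ℝ} {x : Eu N} (hA : ContDiffAt ℝ 2 A (‖x‖ ^ 2)) :
    ∀ᶠ y in nhds x, ∀ i, pd i (fun y : Eu N => A (‖y‖ ^ 2)) y
      = y i * (2 * deriv A (‖y‖ ^ 2)) := by
  have hcont : Tendsto (fun y : Eu N => ‖y‖ ^ 2) (nhds x) (nhds (‖x‖ ^ 2)) :=
    (continuous_norm.pow 2).continuousAt
  filter_upwards [hcont.eventually (hA.eventually (by simp))] with y hy i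
  exact pd_radial (hy.differentiableAt (by norm_num)).hasDerivAt

lemma eul_radial_mul {A : ℝ → ℝ} {u : Eu N → ℝ} {x : Eu N} (hA : ContDiffAt ℝ 2 A (‖x‖ ^ 2))
    (hu : ContDiffAt ℝ 2 u x) :
    eul (fun y => A (‖y‖ ^ 2) * u y) x
      = A (‖x‖ ^ 2) * eul u x + 2 * ‖x‖ ^ 2 * deriv A (‖x‖ ^ 2) * u x := by
  have ha := (contDiffAt_radial hA).differentiableAt (by norm_num)
  have hud := hu.differentiableAt (by norm_num)
  have h1 := (eventually_pd_radial hA).self_of_nhds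
  have ht : ∀ i, x i * pd i (fun y => A (‖y‖ ^ 2) * u y) x
      = A (‖x‖ ^ 2) * (x i * pd i u x) + 2 * deriv A (‖x‖ ^ 2) * u x * (x i * x i) := by
    intro i
    rw [pd_mul ha hud, h1]
    ring
  simp only [eul, ht, Finset.sum_add_distrib, ← Finset.mul_sum, sum_sq_eq]
  ring

lemma laplacian_radial_mul {A : ℝ → ℝ} {u : Eu N → ℝ} {x : Eu N}
    (hA : ContDiffAt ℝ 2 A (‖x‖ ^ 2)) (hu : ContDiffAt ℝ 2 u x) :
    laplacian (fun y => A (‖y‖ ^ 2) * u y) x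
      = A (‖x‖ ^ 2) * laplacian u x + 4 * deriv A (‖x‖ ^ 2) * eul u x
        + (2 * N * deriv A (‖x‖ ^ 2) + 4 * ‖x‖ ^ 2 * deriv (deriv A) (‖x‖ ^ 2)) * u x := by
  have hca := contDiffAt_radial hA
  have ha := hca.differentiableAt (by norm_num)
  have hud := hu.differentiableAt (by norm_num)
  have hA1 := contDiffAt_deriv hA
  have hd1 : DifferentiableAt ℝ (fun y : Eu N => deriv A (‖y‖ ^ 2)) x :=
    (contDiffAt_radial hA1).differentiableAt (by norm_num)
  have h1 := eventually_pd_radial hA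
  have h2 : ∀ i, pd i (fun y : Eu N => deriv A (‖y‖ ^ 2)) x
      = x i * (2 * deriv (deriv A) (‖x‖ ^ 2)) := fun i =>
    pd_radial (hA1.differentiableAt (by norm_num)).hasDerivAt
  have hterm : ∀ i, pd i (pd i (fun y => A (‖y‖ ^ 2) * u y)) x
      = A (‖x‖ ^ 2) * pd i (pd i u) x + 4 * deriv A (‖x‖ ^ 2) * (x i * pd i u x)
        + 2 * deriv A (‖x‖ ^ 2) * u x
        + 4 * deriv (deriv A) (‖x‖ ^ 2) * u x * (x i * x i) := by
    intro i
    have hev : pd i (fun y => A (‖y‖ ^ 2) * u y) =ᶠ[nhds x]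
        fun y => 2 * (y i * (deriv A (‖y‖ ^ 2) * u y)) + A (‖y‖ ^ 2) * pd i u y := by
      filter_upwards [h1, hca.eventually (by simp), hu.eventually (by simp)] with y hy hay huy
      rw [pd_mul (hay.differentiableAt (by norm_num)) (huy.differentiableAt (by norm_num)), hy]
      ring
    have hpd : DifferentiableAt ℝ (pd i u) x :=
      (contDiffAt_pd (m := 1) hu (by norm_num)).differentiableAt (by norm_num)
    have dcoord : DifferentiableAt ℝ (fun y : Eu N => y i) x := differentiableAt_coord
    have dc : DifferentiableAt ℝ (fun _ : Eu N => (2 : ℝ)) x := by fun_prop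
    rw [pd_congr hev, pd_add (dc.fun_mul (dcoord.fun_mul (hd1.fun_mul hud))) (ha.fun_mul hpd),
      pd_mul dc (dcoord.fun_mul (hd1.fun_mul hud)), pd_const, pd_mul dcoord (hd1.fun_mul hud),
      pd_mul hd1 hud, pd_mul ha hpd, h2, pd_coord, h1.self_of_nhds]
    simp only [if_true]
    ring
  rw [laplacian_eq (hca.mul hu), laplacian_eq hu]
  rw [Finset.sum_congr rfl fun i _ => hterm i]
  simp only [Finset.sum_add_distrib, ← Finset.mul_sum, sum_sq_eq]
  simp only [eul, Finset.sum_const, Finset.card_univ, Fintype.card_fin, nsmul_eq_mul]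
  ring

/-- The Carleman weight `r ^ (-τ) exp (τ r²)` as a function of `s = r²`. -/
noncomputable def wf (τ s : ℝ) : ℝ := s ^ (-τ / 2) * Real.exp (τ * s)

lemma wf_pos {τ s : ℝ} (hs : 0 < s) : 0 < wf τ s :=
  mul_pos (Real.rpow_pos_of_pos hs _) (Real.exp_pos _)

lemma contDiffAt_wf {n : WithTop ℕ∞} {τ s : ℝ} (hs : 0 < s) : ContDiffAt ℝ n (wf τ) s :=
  ContDiffAt.mul (contDiffAt_id.rpow_const_of_ne hs.ne')
    (Real.contDiff_exp.contDiffAt.comp s (by fun_prop))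

lemma hasDerivAt_wf {τ s : ℝ} (hs : 0 < s) :
    HasDerivAt (wf τ) (wf τ s * (τ - τ / (2 * s))) s := by
  have h1 := Real.hasDerivAt_rpow_const (p := -τ / 2) (Or.inl hs.ne')
  have h2 : HasDerivAt (fun t => Real.exp (τ * t)) (Real.exp (τ * s) * τ) s := by
    have := ((hasDerivAt_id s).const_mul τ).exp
    simpa using this
  refine (h1.mul h2).congr_deriv ?_
  rw [Real.rpow_sub_one hs.ne', wf]
  field_simp
  ring

lemma deriv_wf {τ s : ℝ} (hs : 0 < s) : deriv (wf τ) s = wf τ s * (τ - τ / (2 * s)) :=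
  (hasDerivAt_wf hs).deriv

lemma deriv_deriv_wf {τ s : ℝ} (hs : 0 < s) :
    deriv (deriv (wf τ)) s = wf τ s * ((τ - τ / (2 * s)) ^ 2 + τ / (2 * s ^ 2)) := by
  have hev : deriv (wf τ) =ᶠ[nhds s] fun t => wf τ t * (τ - τ / (2 * t)) := by
    filter_upwards [lt_mem_nhds hs] with t ht
    exact deriv_wf ht
  rw [hev.deriv_eq]
  have h2 : HasDerivAt (fun t : ℝ => τ - τ / (2 * t)) (τ / (2 * s ^ 2)) s := by
    have := ((hasDerivAt_inv hs.ne').const_mul (τ / 2)).const_sub τ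
    refine (this.congr_of_eventuallyEq ?_).congr_deriv ?_
    · filter_upwards [lt_mem_nhds hs] with t ht
      field_simp
    · field_simp
  refine HasDerivAt.deriv (((hasDerivAt_wf hs).mul h2).congr_deriv ?_)
  ring

lemma conjLap_wf_mul {τ : ℝ} {u : Eu N → ℝ} {x : Eu N} (hx : x ≠ 0) (hu : ContDiffAt ℝ 2 u x) :
    conjLap τ (fun y => wf τ (‖y‖ ^ 2) * u y) x
      = wf τ (‖x‖ ^ 2) * (‖x‖ ^ 2 * laplacian u x) := by
  have hs := normsq_pos hx
  have hA : ContDiffAt ℝ 2 (wf τ) (‖x‖ ^ 2) := contDiffAt_wf hs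
  rw [conjLap, laplacian_radial_mul hA hu, eul_radial_mul hA hu, deriv_deriv_wf hs, deriv_wf hs, cc]
  generalize ‖x‖ ^ 2 = s at *
  field_simp
  ring

/-- The weight of the Carleman inequality, `s ^ (-N/2) (wf τ s)²`; it is nonnegative for `s ≥ 0`. -/
noncomputable def cw (N : ℕ) (τ s : ℝ) : ℝ := s ^ (-(N : ℝ) / 2) * wf τ s ^ 2

/-- Carleman inequality for functions whose support avoids the origin. -/
theorem carleman_away (hN : 2 ≤ N) {τ : ℝ} (hτ : 4 ≤ τ) {u : Eu N → ℝ} (hu : ContDiff ℝ 2 u)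
    (h0 : (0 : Eu N) ∉ tsupport u) (hsupp : tsupport u ⊆ closedBall 0 (1 / 2)) :
    ∫ x : Eu N, cw N τ (‖x‖ ^ 2) * (4 * τ ^ 3 * ‖x‖ ^ 2 * u x ^ 2) ≤
      ∫ x : Eu N, cw N τ (‖x‖ ^ 2) * (‖x‖ ^ 2 * laplacian u x) ^ 2 := by
  set v : Eu N → ℝ := fun y => wf τ (‖y‖ ^ 2) * u y with hv
  have hts : tsupport v ⊆ tsupport u := tsupport_subset_aux fun x hx => by
    simp [hv, image_eq_zero_of_notMem_tsupport hx]
  have hvc : ContDiff ℝ 2 v := contDiff_of_tsupport' fun x hx => by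
    have hx0 : x ≠ 0 := by rintro rfl; exact h0 (hts hx)
    exact (contDiffAt_radial (contDiffAt_wf (normsq_pos hx0))).mul hu.contDiffAt
  have key := carleman_conj hN hτ hvc (fun h => h0 (hts h)) (hts.trans hsupp)
  have e1 : ∀ x : Eu N, (‖x‖ ^ 2) ^ (-(N : ℝ) / 2) * (4 * τ ^ 3 * ‖x‖ ^ 2 * v x ^ 2)
      = cw N τ (‖x‖ ^ 2) * (4 * τ ^ 3 * ‖x‖ ^ 2 * u x ^ 2) := fun x => by
    simp only [hv, cw]; ring
  have e2 : ∀ x : Eu N, (‖x‖ ^ 2) ^ (-(N : ℝ) / 2) * conjLap τ v x ^ 2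
      = cw N τ (‖x‖ ^ 2) * (‖x‖ ^ 2 * laplacian u x) ^ 2 := fun x => by
    -- At the origin both sides vanish, since `u` and `v` vanish nearby.
    by_cases hx : x = 0
    · subst hx
      rw [conjLap_zero_of_notMem fun h => h0 (hts h), laplacian_zero_of_notMem h0]
      simp
    · rw [hv, conjLap_wf_mul hx hu.contDiffAt, cw]; ring
  simpa only [e1, e2] using key

end weight

/-! ### Flat functions and the singular weight -/

section flat
variable {N : ℕ}

/-- `f` is `O(‖x‖ ^ m)` at the origin for every `m`; in particular `f 0 = 0`. -/
def Flat (f : Eu N → ℝ) : Prop := ∀ m : ℕ, f =O[nhds 0] fun x : Eu N => ‖x‖ ^ m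

lemma Flat.mul_left {f g : Eu N → ℝ} (hf : Flat f) (hg : ContinuousAt g 0) :
    Flat (fun x => g x * f x) := fun m => by
  simpa using (hg.isBigO_one ℝ).mul (hf m)

lemma Flat.add {f g : Eu N → ℝ} (hf : Flat f) (hg : Flat g) :
    Flat (fun x => f x + g x) := fun m => (hf m).add (hg m)

lemma Flat.abs {f : Eu N → ℝ} (hf : Flat f) : Flat (fun x => |f x|) := fun m => (hf m).norm_left

lemma Flat.sum {ι : Type*} {s : Finset ι} {f : ι → Eu N → ℝ} (hf : ∀ i ∈ s, Flat (f i)) :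
    Flat (fun x => ∑ i ∈ s, f i x) := fun m => IsBigO.fun_sum fun i hi => hf i hi m

lemma Flat.congr {f g : Eu N → ℝ} (hf : Flat f) (h : f =ᶠ[nhds 0] g) : Flat g := fun m =>
  (hf m).congr' h EventuallyEq.rfl

lemma Flat.of_le {f g : Eu N → ℝ} (hf : Flat f) {K : ℝ}
    (h : ∀ᶠ x in nhds 0, |g x| ≤ K * |f x|) : Flat g := fun m =>
  (IsBigO.of_bound K h).trans (hf m)

lemma cw_eq {τ s : ℝ} (hs : 0 < s) :
    cw N τ s = Real.exp (-((N : ℝ) / 2 + τ) * Real.log s + 2 * τ * s) := by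
  rw [cw, wf, mul_pow, Real.rpow_def_of_pos hs, Real.rpow_def_of_pos hs, ← Real.exp_nat_mul,
    ← Real.exp_nat_mul, ← Real.exp_add, ← Real.exp_add]
  congr 1
  push_cast
  ring

lemma cw_nonneg {τ s : ℝ} (hs : 0 ≤ s) : 0 ≤ cw N τ s :=
  mul_nonneg (Real.rpow_nonneg hs _) (sq_nonneg _)

lemma cw_pos {τ s : ℝ} (hs : 0 < s) : 0 < cw N τ s := by
  rw [cw_eq hs]; exact Real.exp_pos _

/-- The weight is decreasing for `s ≤ 1/2`: the factor `exp (2 τ s)` is dominated by `s ^ (-τ)`. -/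
lemma cw_anti {τ s t : ℝ} (hτ : 0 ≤ τ) (hs : 0 < s) (hst : s ≤ t) (ht : t ≤ 1 / 2) :
    cw N τ t ≤ cw N τ s := by
  have ht0 : 0 < t := hs.trans_le hst
  rw [cw_eq hs, cw_eq ht0, Real.exp_le_exp]
  have h1 : 1 - s / t ≤ Real.log t - Real.log s := by
    have := Real.one_sub_inv_le_log_of_pos (div_pos ht0 hs)
    rwa [inv_div, Real.log_div ht0.ne' hs.ne'] at this
  have h2 : 2 * (t - s) ≤ 1 - s / t := by
    rw [le_sub_iff_add_le, ← le_sub_iff_add_le', div_le_iff₀ ht0]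
    nlinarith
  have h3 : 2 * τ * (t - s) ≤ τ * (Real.log t - Real.log s) := by nlinarith
  have h4 : 0 ≤ (N : ℝ) / 2 * (Real.log t - Real.log s) := by
    have : 0 ≤ Real.log t - Real.log s := by linarith
    positivity
  linarith

lemma cw_mul_pow_le {τ s : ℝ} {m : ℕ} (hτ : 0 ≤ τ) (hs : 0 < s) (hs1 : s ≤ 1)
    (hm : (N : ℝ) / 2 + τ ≤ m) : cw N τ s * s ^ m ≤ Real.exp (2 * τ) := by
  rw [cw_eq hs]
  have : s ^ m = Real.exp (m * Real.log s) := by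
    rw [← Real.rpow_natCast, Real.rpow_def_of_pos hs, mul_comm]
  rw [this, ← Real.exp_add, Real.exp_le_exp]
  have hl : Real.log s ≤ 0 := Real.log_nonpos hs.le hs1
  nlinarith [mul_nonneg (sub_nonneg.2 hm) (neg_nonneg.2 hl)]

lemma measurable_cw_mul {τ : ℝ} {f : Eu N → ℝ} (hf : Continuous f) :
    Measurable (fun x : Eu N => cw N τ (‖x‖ ^ 2) * f x) := by
  have := hf.measurable
  unfold cw wf
  fun_prop

/-- Flatness compensates the singularity of the weight at the origin, for every `τ ≥ 0`. -/
lemma integrable_cw_mul {τ : ℝ} (hτ : 0 ≤ τ) {f : Eu N → ℝ} (hf : Continuous f) (hfl : Flat f)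
    (hz : ∀ x, x ∉ closedBall (0 : Eu N) (1 / 2) → f x = 0) :
    Integrable (fun x => cw N τ (‖x‖ ^ 2) * f x) := by
  obtain ⟨m, hm⟩ := exists_nat_ge ((N : ℝ) / 2 + τ)
  obtain ⟨C, hC⟩ := (hfl (2 * m)).bound
  obtain ⟨C', hC'⟩ := (hfl 1).bound
  have hf0 : f 0 = 0 := by simpa using hC'.self_of_nhds
  obtain ⟨δ, hδ, hball⟩ := Metric.eventually_nhds_iff.1 hC
  obtain ⟨M, hM⟩ := (isCompact_closedBall (0 : Eu N) (1 / 2)).exists_bound_of_continuousOn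
    hf.continuousOn
  have hM0 : 0 ≤ M := (norm_nonneg _).trans (hM 0 (by simp))
  have hmeas := measurable_cw_mul (τ := τ) hf
  have hbd : ∀ x ∈ closedBall (0 : Eu N) (1 / 2), ‖cw N τ (‖x‖ ^ 2) * f x‖ ≤
      |C| * Real.exp (2 * τ) + cw N τ (δ ^ 2) * M := by
    intro x hx
    have hx' : ‖x‖ ≤ 1 / 2 := by simpa using hx
    have hp : 0 ≤ cw N τ (δ ^ 2) * M := mul_nonneg (cw_nonneg (sq_nonneg _)) hM0
    rw [norm_mul, Real.norm_of_nonneg (cw_nonneg (sq_nonneg _))]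
    by_cases hx0 : x = 0
    · subst hx0
      have hf0' : ‖f 0‖ = 0 := by rw [hf0, norm_zero]
      have : 0 ≤ |C| * Real.exp (2 * τ) := by positivity
      rw [hf0', mul_zero]
      linarith
    have hs := normsq_pos hx0
    by_cases hxd : ‖x‖ < δ
    · have h1 := hball (y := x) (by simpa using hxd)
      have h2 : ‖f x‖ ≤ |C| * (‖x‖ ^ 2) ^ m := by
        rw [← pow_mul]
        refine h1.trans ?_
        rw [norm_pow, norm_norm]
        gcongr
        exact le_abs_self C
      have h3 := cw_mul_pow_le (N := N) hτ hs (by nlinarith [norm_nonneg x]) hm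
      calc cw N τ (‖x‖ ^ 2) * ‖f x‖ ≤ cw N τ (‖x‖ ^ 2) * (|C| * (‖x‖ ^ 2) ^ m) :=
            mul_le_mul_of_nonneg_left h2 (cw_nonneg (sq_nonneg _))
        _ = |C| * (cw N τ (‖x‖ ^ 2) * (‖x‖ ^ 2) ^ m) := by ring
        _ ≤ |C| * Real.exp (2 * τ) := by gcongr
        _ ≤ _ := by linarith
    · have h1 : cw N τ (‖x‖ ^ 2) ≤ cw N τ (δ ^ 2) := by
        refine cw_anti hτ (by positivity) ?_ (by nlinarith [norm_nonneg x])
        have := not_lt.1 hxd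
        gcongr
      have h2 : cw N τ (‖x‖ ^ 2) * ‖f x‖ ≤ cw N τ (δ ^ 2) * M :=
        mul_le_mul h1 (hM x hx) (norm_nonneg _) (cw_nonneg (sq_nonneg _))
      have : 0 ≤ |C| * Real.exp (2 * τ) := by positivity
      linarith
  have hsub : Function.support (fun x => cw N τ (‖x‖ ^ 2) * f x) ⊆ closedBall (0 : Eu N) (1 / 2) := by
    intro x hx
    by_contra hc
    exact hx (by simp [hz x hc])
  rw [← integrableOn_iff_integrable_of_support_subset hsub]
  refine Measure.integrableOn_of_bounded (M := |C| * Real.exp (2 * τ) + cw N τ (δ ^ 2) * M)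
    measure_closedBall_lt_top.ne hmeas.aestronglyMeasurable ?_
  exact (ae_restrict_iff' measurableSet_closedBall).2 (Eventually.of_forall hbd)

/-- A smooth cutoff, `0` for `y ≤ 1` and `1` for `y ≥ 2`. -/
noncomputable def cutG (y : ℝ) : ℝ := Real.smoothTransition (y - 1)

lemma contDiff_cutG : ContDiff ℝ 2 cutG := by
  have h : ContDiff ℝ 2 Real.smoothTransition := Real.smoothTransition.contDiff (n := 2)
  exact h.comp (contDiff_id.sub contDiff_const)

lemma cutG_of_lt {y : ℝ} (h : y < 1) : cutG =ᶠ[nhds y] fun _ => 0 := by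
  filter_upwards [gt_mem_nhds h] with z hz
  exact Real.smoothTransition.zero_of_nonpos (by linarith)

lemma cutG_of_gt {y : ℝ} (h : 2 < y) : cutG =ᶠ[nhds y] fun _ => 1 := by
  filter_upwards [lt_mem_nhds h] with z hz
  exact Real.smoothTransition.one_of_one_le (by linarith)

lemma cutG_deriv_eq_zero {y : ℝ} (h : y ∉ Icc (1 : ℝ) 2) :
    deriv cutG y = 0 ∧ deriv (deriv cutG) y = 0 := by
  obtain ⟨c, hc⟩ : ∃ c : ℝ, cutG =ᶠ[nhds y] fun _ => c := by
    rw [mem_Icc, not_and_or, not_le, not_le] at h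
    rcases h with h | h
    · exact ⟨0, cutG_of_lt h⟩
    · exact ⟨1, cutG_of_gt h⟩
  refine ⟨by rw [hc.deriv_eq]; simp, by rw [hc.deriv.deriv_eq]; simp⟩

/-- The scale-invariant bounds that make the cutoffs `cutG (c ‖x‖²)` uniformly controlled in `c`. -/
lemma cutG_bound : ∃ M : ℝ, 0 ≤ M ∧ ∀ y, |y * deriv cutG y| ≤ M ∧
    |y ^ 2 * deriv (deriv cutG) y| ≤ M := by
  have c1 : Continuous (deriv cutG) := contDiff_cutG.continuous_deriv (by norm_num)
  have c2 : Continuous (deriv (deriv cutG)) := by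
    have : ContDiff ℝ 1 (deriv cutG) := contDiff_iff_contDiffAt.2 fun y =>
      contDiffAt_deriv contDiff_cutG.contDiffAt
    exact this.continuous_deriv (by norm_num)
  obtain ⟨M1, h1⟩ := (isCompact_Icc (a := (1 : ℝ)) (b := 2)).exists_bound_of_continuousOn
    (f := fun y => y * deriv cutG y) (by fun_prop)
  obtain ⟨M2, h2⟩ := (isCompact_Icc (a := (1 : ℝ)) (b := 2)).exists_bound_of_continuousOn
    (f := fun y => y ^ 2 * deriv (deriv cutG) y) (by fun_prop)
  refine ⟨max 0 (max M1 M2), le_max_left _ _, fun y => ?_⟩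
  by_cases hy : y ∈ Icc (1 : ℝ) 2
  · exact ⟨(h1 y hy).trans (by simp), (h2 y hy).trans (by simp)⟩
  · obtain ⟨e1, e2⟩ := cutG_deriv_eq_zero hy
    simp [e1, e2]

end flat

/-! ### The Carleman inequality for flat functions -/

section carlemanflat
variable {N : ℕ}

lemma deriv_scale (c s : ℝ) : deriv (fun t => cutG (c * t)) s = c * deriv cutG (c * s) := by
  simpa using deriv_comp_mul_left (f := cutG) (x := s) c

lemma deriv_deriv_scale (c s : ℝ) :
    deriv (deriv (fun t => cutG (c * t))) s = c ^ 2 * deriv (deriv cutG) (c * s) := by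
  have : deriv (fun t => cutG (c * t)) = fun t => c * deriv cutG (c * t) := by
    funext t; exact deriv_scale c t
  rw [this, deriv_const_mul_field]
  have h := deriv_comp_mul_left (f := deriv cutG) (x := s) c
  rw [h, smul_eq_mul]
  ring

lemma contDiff_scale (c : ℝ) : ContDiff ℝ 2 (fun t => cutG (c * t)) :=
  contDiff_cutG.comp (contDiff_const.mul contDiff_id)

lemma cutG_nonneg (y : ℝ) : 0 ≤ cutG y := Real.smoothTransition.nonneg _
lemma cutG_le_one (y : ℝ) : cutG y ≤ 1 := Real.smoothTransition.le_one _

/-- Carleman inequality for functions flat at the origin up to second order, obtained by applying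
`carleman_away` to `cutG ((n + 1) ‖x‖²) * w` and letting `n → ∞`. -/
theorem carleman_flat (hN : 2 ≤ N) {τ : ℝ} (hτ : 4 ≤ τ) {w : Eu N → ℝ} (hw : ContDiff ℝ 2 w)
    (hsupp : tsupport w ⊆ closedBall 0 (1 / 2)) (hf0 : Flat w) (hf1 : ∀ i, Flat (pd i w))
    (hf2 : Flat (laplacian w)) :
    ∫ x : Eu N, cw N τ (‖x‖ ^ 2) * (4 * τ ^ 3 * ‖x‖ ^ 2 * w x ^ 2) ≤
      ∫ x : Eu N, cw N τ (‖x‖ ^ 2) * (‖x‖ ^ 2 * laplacian w x) ^ 2 := by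
  have hτ0 : 0 ≤ τ := by linarith
  obtain ⟨M, hM0, hM⟩ := cutG_bound
  set c : ℕ → ℝ := fun n => (n : ℝ) + 1 with hc
  have hcpos : ∀ n, 0 < c n := fun n => by positivity
  set v : ℕ → Eu N → ℝ := fun n y => cutG (c n * ‖y‖ ^ 2) * w y with hv
  have hwc := hw.continuous
  have hpdc : ∀ i, Continuous (pd i w) := fun i => continuous_iff_continuousAt.2 fun x =>
    (contDiffAt_pd (m := 1) hw.contDiffAt (by norm_num)).continuousAt
  have hlc := continuous_laplacian hw
  have heulc : Continuous (eul w) := by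
    unfold eul
    fun_prop
  have heul : Flat (eul w) := Flat.sum fun i _ => (hf1 i).mul_left (by fun_prop)
  have hvC : ∀ n, ContDiff ℝ 2 (v n) := fun n => by
    refine contDiff_iff_contDiffAt.2 fun x => ?_
    exact (contDiffAt_radial (A := fun t => cutG (c n * t)) (contDiff_scale _).contDiffAt).mul
      hw.contDiffAt
  have hts : ∀ n, tsupport (v n) ⊆ tsupport w := fun n => tsupport_subset_aux fun x hx => by
    simp [hv, image_eq_zero_of_notMem_tsupport hx]
  have hv0 : ∀ n, (0 : Eu N) ∉ tsupport (v n) := fun n => by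
    rw [notMem_tsupport_iff_eventuallyEq]
    have ht : Tendsto (fun y : Eu N => c n * ‖y‖ ^ 2) (nhds 0) (nhds 0) := by
      have : Continuous (fun y : Eu N => c n * ‖y‖ ^ 2) := by fun_prop
      simpa using this.tendsto 0
    filter_upwards [ht.eventually (cutG_of_lt (y := 0) (by norm_num))] with y hy
    simp [hv, hy]
  have hlap : ∀ n x, |‖x‖ ^ 2 * laplacian (v n) x| ≤
      ‖x‖ ^ 2 * |laplacian w x| + 4 * M * |eul w x| + (2 * N + 4) * M * |w x| := by
    intro n x
    have e := laplacian_radial_mul (A := fun t => cutG (c n * t)) (u := w) (x := x)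
      (contDiff_scale _).contDiffAt hw.contDiffAt
    rw [deriv_scale, deriv_deriv_scale] at e
    obtain ⟨h1, h2⟩ := hM (c n * ‖x‖ ^ 2)
    have hg : |cutG (c n * ‖x‖ ^ 2)| ≤ 1 := by
      rw [abs_of_nonneg (cutG_nonneg _)]; exact cutG_le_one _
    have e' : ‖x‖ ^ 2 * laplacian (v n) x = cutG (c n * ‖x‖ ^ 2) * (‖x‖ ^ 2 * laplacian w x)
        + 4 * (c n * ‖x‖ ^ 2 * deriv cutG (c n * ‖x‖ ^ 2)) * eul w x
        + (2 * N * (c n * ‖x‖ ^ 2 * deriv cutG (c n * ‖x‖ ^ 2))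
          + 4 * ((c n * ‖x‖ ^ 2) ^ 2 * deriv (deriv cutG) (c n * ‖x‖ ^ 2))) * w x := by
      rw [hv]
      simp only
      rw [e]
      ring
    rw [e']
    generalize c n * ‖x‖ ^ 2 * deriv cutG (c n * ‖x‖ ^ 2) = a at *
    generalize (c n * ‖x‖ ^ 2) ^ 2 * deriv (deriv cutG) (c n * ‖x‖ ^ 2) = b at *
    generalize cutG (c n * ‖x‖ ^ 2) = g at *
    have b1 : |g * (‖x‖ ^ 2 * laplacian w x)| ≤ ‖x‖ ^ 2 * |laplacian w x| := by
      rw [abs_mul, abs_mul, abs_of_nonneg (sq_nonneg ‖x‖)]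
      exact mul_le_of_le_one_left (by positivity) hg
    have b2 : |4 * a * eul w x| ≤ 4 * M * |eul w x| := by
      rw [abs_mul, abs_mul, abs_of_pos (by norm_num : (0 : ℝ) < 4)]
      gcongr
    have b3 : |(2 * N * a + 4 * b) * w x| ≤ (2 * N + 4) * M * |w x| := by
      rw [abs_mul]
      gcongr
      refine (abs_add_le _ _).trans ?_
      rw [abs_mul, abs_mul 4 b, abs_of_nonneg (by positivity : (0 : ℝ) ≤ 2 * N),
        abs_of_pos (by norm_num : (0 : ℝ) < 4)]
      have : 2 * (N : ℝ) * |a| ≤ 2 * N * M := by gcongr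
      linarith
    exact (abs_add_three _ _ _).trans (by linarith)
  set D : Eu N → ℝ := fun x =>
    ‖x‖ ^ 2 * |laplacian w x| + 4 * M * |eul w x| + (2 * N + 4) * M * |w x| with hD
  have hDc : Continuous D := by fun_prop
  have hDf : Flat D := ((hf2.abs.mul_left (by fun_prop)).add
    (heul.abs.mul_left (by fun_prop))).add (hf0.abs.mul_left (by fun_prop))
  have hz : ∀ x, x ∉ closedBall (0 : Eu N) (1 / 2) → x ∉ tsupport w := fun x hx h => hx (hsupp h)
  have hDz : ∀ x, x ∉ tsupport w → D x = 0 := fun x hx => by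
    simp [hD, laplacian_zero_of_notMem hx, image_eq_zero_of_notMem_tsupport hx, eul,
      pd_zero_of_notMem _ hx]
  have i1 : Integrable (fun x : Eu N => cw N τ (‖x‖ ^ 2) * (4 * τ ^ 3 * ‖x‖ ^ 2 * w x ^ 2)) := by
    refine integrable_cw_mul hτ0 (by fun_prop) ?_ fun x hx => by
      simp [image_eq_zero_of_notMem_tsupport (hz x hx)]
    have : Flat fun x => (4 * τ ^ 3 * ‖x‖ ^ 2 * w x) * w x := hf0.mul_left (by fun_prop)
    exact this.congr (Eventually.of_forall fun x => by ring)
  have i2 : Integrable (fun x : Eu N => cw N τ (‖x‖ ^ 2) * D x ^ 2) := by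
    refine integrable_cw_mul hτ0 (by fun_prop) ?_ fun x hx => by
      simp [hDz x (hz x hx)]
    have : Flat fun x => D x * D x := hDf.mul_left (by fun_prop)
    exact this.congr (Eventually.of_forall fun x => by ring)
  have : Nontrivial (Fin N) := Fin.nontrivial_iff_two_le.2 hN
  have : Nonempty (Fin N) := inferInstance
  have : Nontrivial (Eu N) := inferInstance
  have hne : ∀ᵐ x : Eu N, x ≠ 0 := by
    simp [ae_iff]
  -- Away from the origin the cutoffs are eventually `1` near each point.
  have hev : ∀ x : Eu N, x ≠ 0 → ∀ᶠ n in atTop, v n =ᶠ[nhds x] w := by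
    intro x hx
    have hs := normsq_pos hx
    have hct : Tendsto (fun n => c n * ‖x‖ ^ 2) atTop atTop :=
      (tendsto_atTop_add_const_right _ 1 tendsto_natCast_atTop_atTop).atTop_mul_const hs
    filter_upwards [hct.eventually_gt_atTop 2] with n hn
    have ht : Tendsto (fun y : Eu N => c n * ‖y‖ ^ 2) (nhds x) (nhds (c n * ‖x‖ ^ 2)) := by
      have : Continuous (fun y : Eu N => c n * ‖y‖ ^ 2) := by fun_prop
      exact this.tendsto x
    filter_upwards [ht.eventually (cutG_of_gt hn)] with y hy
    simp [hv, hy]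
  have t1 : Tendsto (fun n => ∫ x : Eu N, cw N τ (‖x‖ ^ 2) * (4 * τ ^ 3 * ‖x‖ ^ 2 * v n x ^ 2))
      atTop (nhds (∫ x : Eu N, cw N τ (‖x‖ ^ 2) * (4 * τ ^ 3 * ‖x‖ ^ 2 * w x ^ 2))) := by
    refine tendsto_integral_of_dominated_convergence _ (fun n => ?_) i1 (fun n => ?_) ?_
    · have := (hvC n).continuous
      exact (measurable_cw_mul (by fun_prop)).aestronglyMeasurable
    · refine Eventually.of_forall fun x => ?_
      have h0 : 0 ≤ cw N τ (‖x‖ ^ 2) := cw_nonneg (sq_nonneg _)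
      rw [Real.norm_of_nonneg (by positivity)]
      have : v n x ^ 2 ≤ w x ^ 2 := by
        rw [hv]; simp only
        rw [mul_pow]
        exact mul_le_of_le_one_left (sq_nonneg _) (pow_le_one₀ (cutG_nonneg _) (cutG_le_one _))
      gcongr
    · filter_upwards [hne] with x hx
      refine tendsto_const_nhds.congr' ?_
      filter_upwards [hev x hx] with n hn
      rw [hn.self_of_nhds]
  have t2 : Tendsto (fun n => ∫ x : Eu N, cw N τ (‖x‖ ^ 2) * (‖x‖ ^ 2 * laplacian (v n) x) ^ 2)
      atTop (nhds (∫ x : Eu N, cw N τ (‖x‖ ^ 2) * (‖x‖ ^ 2 * laplacian w x) ^ 2)) := by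
    refine tendsto_integral_of_dominated_convergence _ (fun n => ?_) i2 (fun n => ?_) ?_
    · have := continuous_laplacian (hvC n)
      exact (measurable_cw_mul (by fun_prop)).aestronglyMeasurable
    · refine Eventually.of_forall fun x => ?_
      have h0 : 0 ≤ cw N τ (‖x‖ ^ 2) := cw_nonneg (sq_nonneg _)
      rw [Real.norm_of_nonneg (by positivity), ← sq_abs (_ * laplacian (v n) x)]
      have := hlap n x
      gcongr
    · filter_upwards [hne] with x hx
      refine tendsto_const_nhds.congr' ?_
      filter_upwards [hev x hx] with n hn
      rw [laplacian_congr hn]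
  exact le_of_tendsto_of_tendsto' t1 t2 fun n =>
    carleman_away hN hτ (hvC n) (hv0 n) ((hts n).trans hsupp)

end carlemanflat

/-! ### Flatness of derivatives and flatness from vanishing of infinite order -/

section flatness
variable {N : ℕ}

lemma Flat.eq_zero {f : Eu N → ℝ} (hf : Flat f) : f 0 = 0 := by
  obtain ⟨C, hC⟩ := (hf 1).bound
  simpa using hC.self_of_nhds

/-- Interpolation: with `h = ‖x‖ ^ (m + 1)`, the difference quotient of `f` at scale `h` differs from
`∂ᵢ f x` by `O(h)`, while `f` itself is `O(h²)` at both points. -/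
theorem Flat.pd {f : Eu N → ℝ} (hf : Flat f) (hfc : ContDiffAt ℝ 2 f 0) (i : Fin N) :
    Flat (pd i f) := by
  intro m
  have hzero : fderiv ℝ f 0 = 0 := by
    refine HasFDerivAt.fderiv (IsBigO.hasFDerivAt (n := 2) ?_ (by norm_num))
    simpa using hf 2
  obtain ⟨K, t, ht, hK⟩ :=
    (hfc.fderiv_right (m := 1) (by norm_num)).exists_lipschitzOnWith
  obtain ⟨C, hC⟩ := (hf (2 * (m + 1))).bound
  have hd : ∀ᶠ x in nhds (0 : Eu N), ContDiffAt ℝ 2 f x := hfc.eventually (by simp)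
  obtain ⟨δ, hδ, hball⟩ := Metric.eventually_nhds_iff.1 (hC.and (hd.and ht))
  simp only [dist_zero_right] at hball
  refine IsBigO.of_bound (K + |C| * (2 ^ (2 * (m + 1)) + 1)) ?_
  have hδ2 : 0 < min (δ / 2) 1 := by positivity
  filter_upwards [Metric.ball_mem_nhds (0 : Eu N) hδ2] with x hx
  have hx' : ‖x‖ < min (δ / 2) 1 := by simpa using hx
  have hxδ : ‖x‖ < δ / 2 := hx'.trans_le (min_le_left _ _)
  have hx1 : ‖x‖ < 1 := hx'.trans_le (min_le_right _ _)
  have hKn : (0 : ℝ) ≤ K := K.2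
  by_cases hx0 : x = 0
  · have : _root_.pd i f x = 0 := by simp [_root_.pd, hx0, hzero]
    rw [this, norm_zero]
    positivity
  have hxp : 0 < ‖x‖ := norm_pos_iff.2 hx0
  set h := ‖x‖ ^ (m + 1) with hh
  have hhp : 0 < h := by positivity
  have hhx : h ≤ ‖x‖ := by
    rw [hh, pow_succ]
    exact mul_le_of_le_one_left hxp.le (pow_le_one₀ hxp.le hx1.le)
  have hcb : ∀ z ∈ closedBall x h, ‖z‖ ≤ 2 * ‖x‖ := by
    intro z hz
    have : ‖z - x‖ ≤ h := by simpa [dist_eq_norm] using hz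
    calc ‖z‖ = ‖(z - x) + x‖ := by simp
      _ ≤ ‖z - x‖ + ‖x‖ := norm_add_le _ _
      _ ≤ _ := by linarith
  set y : Eu N := x + h • EuclideanSpace.single i (1 : ℝ) with hy
  have hyx : y - x = h • EuclideanSpace.single i (1 : ℝ) := by simp [hy]
  have hyn : ‖y - x‖ = h := by
    rw [hyx, norm_smul, Real.norm_of_nonneg hhp.le]; simp
  have hymem : y ∈ closedBall x h := by
    rw [mem_closedBall, dist_eq_norm, hyn]
  have hxmem : x ∈ closedBall x h := mem_closedBall_self hhp.le
  have hmv := (convex_closedBall x h).norm_image_sub_le_of_norm_fderiv_le' (𝕜 := ℝ) (f := f)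
    (C := K * h) (φ := fderiv ℝ f x)
    (fun z hz => (hball ((hcb z hz).trans_lt (by linarith))).2.1.differentiableAt (by norm_num))
    (fun z hz => by
      have h1 := hK.dist_le_mul z (hball ((hcb z hz).trans_lt (by linarith))).2.2 x
        (hball ((hcb x hxmem).trans_lt (by linarith))).2.2
      rw [dist_eq_norm, dist_eq_norm] at h1
      refine h1.trans ?_
      have : ‖z - x‖ ≤ h := by simpa [dist_eq_norm] using hz
      gcongr) hxmem hymem
  rw [hyn, hyx, map_smul, smul_eq_mul] at hmv
  change ‖f y - f x - h * _root_.pd i f x‖ ≤ K * h * h at hmv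
  have b1 : |f x| ≤ |C| * h ^ 2 := by
    have := (hball (hxδ.trans (by linarith))).1
    rw [Real.norm_eq_abs, norm_pow, norm_norm, mul_comm 2, pow_mul] at this
    exact this.trans (by gcongr; exact le_abs_self C)
  have b2 : |f y| ≤ |C| * 2 ^ (2 * (m + 1)) * h ^ 2 := by
    have := (hball ((hcb y hymem).trans_lt (by linarith))).1
    rw [Real.norm_eq_abs, norm_pow, norm_norm] at this
    refine this.trans ?_
    calc C * ‖y‖ ^ (2 * (m + 1)) ≤ |C| * (2 * ‖x‖) ^ (2 * (m + 1)) := by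
          gcongr
          · exact le_abs_self C
          · exact hcb y hymem
      _ = |C| * 2 ^ (2 * (m + 1)) * h ^ 2 := by
          rw [mul_pow, hh, ← pow_mul, mul_comm (m + 1) 2]; ring
  have b3 : h * |_root_.pd i f x| ≤ h * ((K + |C| * (2 ^ (2 * (m + 1)) + 1)) * h) := by
    rw [Real.norm_eq_abs, abs_le] at hmv
    rw [abs_le] at b1 b2
    rw [← abs_of_pos hhp, ← abs_mul, abs_of_pos hhp, abs_le]
    constructor <;> nlinarith
  have b4 := le_of_mul_le_mul_left b3 hhp
  rw [Real.norm_eq_abs, norm_pow, norm_norm]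
  refine b4.trans ?_
  have : h ≤ ‖x‖ ^ m := pow_le_pow_of_le_one hxp.le hx1.le (Nat.le_succ m)
  gcongr

lemma Flat.laplacian {f : Eu N → ℝ} (hf : Flat f) (hfc : ContDiffAt ℝ 3 f 0) :
    Flat (laplacian f) := by
  have h2 : ContDiffAt ℝ 2 f 0 := hfc.of_le (by norm_num)
  have h : Flat fun x => ∑ i, _root_.pd i (_root_.pd i f) x := Flat.sum fun i _ =>
    (hf.pd h2 i).pd (contDiffAt_pd hfc (by norm_num)) i
  refine h.congr ?_
  filter_upwards [h2.eventually (by simp)] with x hx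
  exact (laplacian_eq hx).symm

/-- If `|u x| > ρ ^ (m + 1)` with `ρ = ‖x - x₀‖`, then `|u| ≥ ρ ^ (m + 1) / 2` on the ball of radius
`ρ ^ (m + 1) / (2 L)`, `L` a Lipschitz constant, which contradicts the decay of the integral. -/
theorem flat_of_vanishes (hN : 2 ≤ N) {u : Eu N → ℝ} {x₀ : Eu N} (hu : ContDiffAt ℝ 1 u x₀)
    (h : VanishesInfOrder u x₀) : Flat (fun x => u (x + x₀)) := by
  have : Nontrivial (Fin N) := Fin.nontrivial_iff_two_le.2 hN
  have : Nonempty (Fin N) := inferInstance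
  have : Nontrivial (Eu N) := inferInstance
  obtain ⟨ε, hε, hvan⟩ := h
  obtain ⟨K, t, ht, hK⟩ := hu.exists_lipschitzOnWith
  obtain ⟨δ, hδ, hball⟩ := Metric.mem_nhds_iff.1 ht
  set L : ℝ := K + 1 with hL
  have hL1 : 1 ≤ L := by have : (0 : ℝ) ≤ K := K.2; linarith
  have hlip : ∀ x ∈ ball x₀ δ, ∀ y ∈ ball x₀ δ, |u x - u y| ≤ L * dist x y := by
    intro x hx y hy
    have := hK.dist_le_mul x (hball hx) y (hball hy)
    rw [Real.dist_eq] at this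
    refine this.trans ?_
    gcongr
    linarith
  have hcont : ContinuousOn u (ball x₀ δ) := hK.continuousOn.mono hball
  set V : ℝ := volume.real (ball (0 : Eu N) 1) with hV
  have hVp : 0 < V := by
    rw [hV, measureReal_def]
    exact ENNReal.toReal_pos (measure_ball_pos _ _ one_pos).ne' measure_ball_lt_top.ne
  have key : ∀ m : ℕ, ∀ᶠ x in nhds x₀, x ≠ x₀ → |u x| ≤ ‖x - x₀‖ ^ (m + 1) := by
    intro m
    set M : ℝ := (m + 1) * ε + (m + 1) * N with hM
    have hMp : 0 < M := by positivity
    -- `κ` is the constant in `κ ρ ^ M`, a lower bound for the integral over the ball of radius `2 ρ`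
    -- if the claimed bound fails at distance `ρ`.
    set κ : ℝ := (1 / 2) ^ ε * ((1 / (2 * L)) ^ N * V) with hκ
    have hκp : 0 < κ := by positivity
    have hc : 0 < κ / 2 / 2 ^ M := by positivity
    have hev := (hvan M hMp).bound hc
    rw [eventually_nhdsWithin_iff] at hev
    obtain ⟨η, hη, hηb⟩ := Metric.eventually_nhds_iff.1 hev
    have hr : 0 < min (min (δ / 4) (η / 2)) 1 := by positivity
    filter_upwards [Metric.ball_mem_nhds x₀ hr] with x hx hxne
    have hx' : ‖x - x₀‖ < min (min (δ / 4) (η / 2)) 1 := by simpa [dist_eq_norm] using hx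
    set ρ := ‖x - x₀‖ with hρ
    have hρp : 0 < ρ := norm_pos_iff.2 (sub_ne_zero.2 hxne)
    have hρδ : ρ < δ / 4 := hx'.trans_le ((min_le_left _ _).trans (min_le_left _ _))
    have hρη : ρ < η / 2 := hx'.trans_le ((min_le_left _ _).trans (min_le_right _ _))
    have hρ1 : ρ < 1 := hx'.trans_le (min_le_right _ _)
    by_contra hcon
    push Not at hcon
    set a := ρ ^ (m + 1) with ha
    have hap : 0 < a := by positivity
    have haρ : a ≤ ρ := by
      rw [ha, pow_succ]
      exact mul_le_of_le_one_left hρp.le (pow_le_one₀ hρp.le hρ1.le)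
    set b := a / (2 * L) with hb
    have hbp : 0 < b := by positivity
    have hba : b ≤ a := div_le_self hap.le (by linarith)
    have hLb : L * b = a / 2 := by rw [hb]; field_simp
    have hsub : ball x b ⊆ ball x₀ (2 * ρ) := by
      refine ball_subset_ball' ?_
      rw [dist_eq_norm]
      linarith
    have hsub2 : closedBall x₀ (2 * ρ) ⊆ ball x₀ δ := closedBall_subset_ball (by linarith)
    have hint : IntegrableOn (fun z => |u z| ^ ε) (ball x₀ (2 * ρ)) := by
      refine IntegrableOn.mono_set ?_ ball_subset_closedBall
      refine ContinuousOn.integrableOn_compact (isCompact_closedBall _ _) ?_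
      exact ((hcont.mono hsub2).abs).rpow_const fun z _ => Or.inr hε.le
    have hlow : ∀ z ∈ ball x b, (a / 2) ^ ε ≤ |u z| ^ ε := by
      intro z hz
      refine Real.rpow_le_rpow (by positivity) ?_ hε.le
      have hxm : x ∈ ball x₀ δ := hsub2 (ball_subset_closedBall (hsub (mem_ball_self hbp)))
      have h1 := hlip x hxm z (hsub2 (ball_subset_closedBall (hsub hz)))
      have h2 : dist x z ≤ b := by rw [dist_comm]; exact (mem_ball.1 hz).le
      have h3 : L * dist x z ≤ a / 2 := by
        rw [← hLb]; gcongr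
      have h4 := abs_sub_abs_le_abs_sub (u x) (u z)
      linarith
    have hI1 := setIntegral_ge_of_const_le_real measurableSet_ball measure_ball_lt_top.ne hlow
      (hint.mono_set hsub)
    have hI2 : ∫ z in ball x b, |u z| ^ ε ≤ ∫ z in ball x₀ (2 * ρ), |u z| ^ ε :=
      setIntegral_mono_set hint (Eventually.of_forall fun z => Real.rpow_nonneg (abs_nonneg _) _)
        hsub.eventuallyLE
    have hI3 := hηb (y := 2 * ρ) (by
      rw [Real.dist_eq, sub_zero, abs_of_pos (by positivity)]; linarith)
      (by simpa using hρp)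
    have hI4 := (le_abs_self _).trans hI3
    rw [Real.norm_of_nonneg (by positivity), Real.mul_rpow (by norm_num) hρp.le] at hI4
    have hvol : volume.real (ball x b) = b ^ N * V := by
      rw [measureReal_def, Measure.addHaar_ball _ _ hbp.le, ENNReal.toReal_mul,
        ENNReal.toReal_ofReal (by positivity), hV, measureReal_def, finrank_euclideanSpace,
        Fintype.card_fin]
    have hpow : ρ ^ M = a ^ ε * a ^ N := by
      rw [hM, Real.rpow_add hρp, ha, ← Real.rpow_natCast (ρ ^ (m + 1)) N,
        ← Real.rpow_natCast ρ (m + 1), ← Real.rpow_mul hρp.le, ← Real.rpow_mul hρp.le]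
      push_cast
      rfl
    have hE : (a / 2) ^ ε * volume.real (ball x b) = κ * ρ ^ M := by
      rw [hvol, hpow, hκ, hb, div_eq_mul_one_div a 2, Real.mul_rpow hap.le (by norm_num),
        div_eq_mul_one_div a (2 * L), mul_pow]
      ring
    have hF : κ / 2 / 2 ^ M * (2 ^ M * ρ ^ M) = κ / 2 * ρ ^ M := by
      have : (2 : ℝ) ^ M ≠ 0 := by positivity
      field_simp
    rw [hE] at hI1
    rw [hF] at hI4
    have : 0 < κ * ρ ^ M := by positivity
    linarith
  -- The bound at `x₀` itself comes from continuity.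
  have hu0 : u x₀ = 0 := by
    have hc : Tendsto (fun x => |u x|) (nhdsWithin x₀ {x₀}ᶜ) (nhds |u x₀|) :=
      (hu.continuousAt.abs).tendsto.mono_left nhdsWithin_le_nhds
    have hn : Tendsto (fun x => ‖x - x₀‖ ^ (0 + 1)) (nhdsWithin x₀ {x₀}ᶜ) (nhds 0) := by
      have : Continuous fun x : Eu N => ‖x - x₀‖ ^ (0 + 1) := by fun_prop
      have := (this.tendsto x₀).mono_left (nhdsWithin_le_nhds (s := {x₀}ᶜ))
      simpa using this
    have : |u x₀| ≤ 0 := by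
      refine le_of_tendsto_of_tendsto hc hn ?_
      exact eventually_nhdsWithin_iff.2 (key 0)
    exact abs_nonpos_iff.1 this
  intro m
  refine IsBigO.of_bound 1 ?_
  have ht : Tendsto (fun x : Eu N => x + x₀) (nhds 0) (nhds x₀) := by
    have : Continuous fun x : Eu N => x + x₀ := by fun_prop
    simpa using this.tendsto 0
  filter_upwards [ht.eventually (key m), Metric.ball_mem_nhds (0 : Eu N) one_pos] with x hx hx1
  have hx1' : ‖x‖ < 1 := by simpa using hx1
  by_cases hx0 : x = 0
  · rw [hx0, zero_add, hu0, norm_zero]; positivity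
  · have := hx (by simpa using hx0)
    rw [add_sub_cancel_right] at this
    rw [Real.norm_eq_abs, norm_pow, norm_norm, one_mul]
    exact this.trans (pow_le_pow_of_le_one (norm_nonneg _) hx1'.le (Nat.le_succ m))

end flatness

/-! ### Unique continuation on a ball -/

section localucp
variable {N : ℕ}

/-- Multiplication by a radial cutoff: a globally `C²` function supported in the closed ball of radius
`R` that agrees with `f` where `‖x‖² < R² / 2`. -/
lemma exists_cut {R : ℝ} (hR : 0 < R) {f : Eu N → ℝ}
    (hf : ∀ x ∈ closedBall (0 : Eu N) R, ContDiffAt ℝ 2 f x) :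
    ∃ w : Eu N → ℝ, ContDiff ℝ 2 w ∧ tsupport w ⊆ closedBall 0 R ∧
      ∀ x : Eu N, ‖x‖ ^ 2 < R ^ 2 / 2 → w =ᶠ[nhds x] f := by
  set A : ℝ → ℝ := fun s => Real.smoothTransition (2 - 2 * s / R ^ 2) with hA
  have hAc : ContDiff ℝ 2 A := by
    have h : ContDiff ℝ 2 Real.smoothTransition := Real.smoothTransition.contDiff (n := 2)
    exact h.comp (by fun_prop)
  have hts : tsupport (fun y : Eu N => A (‖y‖ ^ 2) * f y) ⊆ closedBall 0 R := by
    refine closure_minimal (fun x hx => ?_) isClosed_closedBall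
    by_contra hc
    have hc' : R < ‖x‖ := by simpa using hc
    refine hx ?_
    have : A (‖x‖ ^ 2) = 0 := by
      refine Real.smoothTransition.zero_of_nonpos ?_
      rw [sub_nonpos, le_div_iff₀ (by positivity)]
      nlinarith
    simp [this]
  refine ⟨fun y => A (‖y‖ ^ 2) * f y, ?_, hts, ?_⟩
  · exact contDiff_of_tsupport' fun x hx =>
      (contDiffAt_radial hAc.contDiffAt).mul (hf x (hts hx))
  · intro x hx
    have hc : Continuous fun y : Eu N => ‖y‖ ^ 2 := by fun_prop
    filter_upwards [hc.continuousAt.eventually (gt_mem_nhds hx)] with y hy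
    have : A (‖y‖ ^ 2) = 1 := by
      refine Real.smoothTransition.one_of_one_le ?_
      have : 2 * ‖y‖ ^ 2 / R ^ 2 ≤ 1 := by
        rw [div_le_one (by positivity)]; linarith
      linarith
    simp [this]

lemma flats_congr {f w : Eu N → ℝ} (h : w =ᶠ[nhds 0] f) (hf : Flat f)
    (hf1 : ∀ i, Flat (pd i f)) (hf2 : Flat (laplacian f)) :
    Flat w ∧ (∀ i, Flat (pd i w)) ∧ Flat (laplacian w) := by
  have h' : ∀ᶠ x in nhds 0, f =ᶠ[nhds x] w := h.symm.eventually_nhds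
  refine ⟨hf.congr h.symm, fun i => (hf1 i).congr ?_, hf2.congr ?_⟩
  · filter_upwards [h'] with x hx using pd_congr hx
  · filter_upwards [h'] with x hx using laplacian_congr hx

/-- Strong unique continuation at the origin for `|Δ²u| ≤ K |u|`. -/
theorem local_ucp (hN : 2 ≤ N) {R K : ℝ} (hR : 0 < R) (hR2 : R ≤ 1 / 2) {u : Eu N → ℝ}
    (hu : ∀ x ∈ closedBall (0 : Eu N) R, ContDiffAt ℝ 4 u x)
    (hb : ∀ x ∈ closedBall (0 : Eu N) R, |laplacian (laplacian u) x| ≤ K * |u x|)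
    (hfl : Flat u) : ∀ x ∈ ball (0 : Eu N) (R / 2), u x = 0 := by
  have hu0 := hu 0 (mem_closedBall_self hR.le)
  have hl : ∀ x ∈ closedBall (0 : Eu N) R, ContDiffAt ℝ 2 (laplacian u) x := fun x hx =>
    contDiffAt_laplacian (m := 2) (by exact_mod_cast hu x hx)
  have hl0 := hl 0 (mem_closedBall_self hR.le)
  have f0 : Flat (laplacian u) := hfl.laplacian (hu0.of_le (by norm_num))
  have f1 : ∀ i, Flat (pd i u) := hfl.pd (hu0.of_le (by norm_num))
  have f2 : ∀ i, Flat (pd i (laplacian u)) := f0.pd hl0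
  have f3 : Flat (laplacian (laplacian u)) := by
    refine hfl.of_le (K := K) ?_
    filter_upwards [closedBall_mem_nhds (0 : Eu N) hR] with x hx using hb x hx
  obtain ⟨w1, c1, t1, e1⟩ := exists_cut hR fun x hx => (hu x hx).of_le (m := 2) (by norm_num)
  obtain ⟨w2, c2, t2, e2⟩ := exists_cut hR hl
  have hsub : closedBall (0 : Eu N) R ⊆ closedBall 0 (1 / 2) := closedBall_subset_closedBall hR2
  obtain ⟨g1, g2, g3⟩ := flats_congr (e1 0 (by simp; positivity)) hfl f1 f0
  obtain ⟨g4, g5, g6⟩ := flats_congr (e2 0 (by simp; positivity)) f0 f2 f3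
  have w1c := c1.continuous
  have w2c := c2.continuous
  have l1c := continuous_laplacian c1
  have l2c := continuous_laplacian c2
  set B : Set (Eu N) := {x | ‖x‖ ^ 2 < R ^ 2 / 2} with hB
  have hBo : IsOpen B := isOpen_lt (by fun_prop) (by fun_prop)
  set W : Eu N → ℝ := fun x => ‖x‖ ^ 2 * (w1 x ^ 2 + w2 x ^ 2) with hW
  have hW0 : ∀ x, 0 ≤ W x := fun x => by positivity
  have hWc : Continuous W := by fun_prop
  set T : Eu N → ℝ := fun x => (‖x‖ ^ 2 * laplacian w1 x) ^ 2 + (‖x‖ ^ 2 * laplacian w2 x) ^ 2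
    with hT
  have hTc : Continuous T := by fun_prop
  obtain ⟨M, hM⟩ := (isCompact_closedBall (0 : Eu N) R).exists_bound_of_continuousOn
    hTc.continuousOn
  have hM0 : 0 ≤ M := (norm_nonneg _).trans (hM 0 (mem_closedBall_self hR.le))
  set V := volume.real (closedBall (0 : Eu N) R) with hV
  have hV0 : 0 ≤ V := measureReal_nonneg
  have n1 : ∀ x, x ∉ closedBall (0 : Eu N) R → w1 x = 0 ∧ w2 x = 0 ∧ laplacian w1 x = 0 ∧
      laplacian w2 x = 0 := fun x hx =>
    ⟨image_eq_zero_of_notMem_tsupport fun h => hx (t1 h),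
     image_eq_zero_of_notMem_tsupport fun h => hx (t2 h),
     laplacian_zero_of_notMem fun h => hx (t1 h), laplacian_zero_of_notMem fun h => hx (t2 h)⟩
  have hWi : IntegrableOn W B := by
    have : B ⊆ closedBall 0 R := fun x hx => by
      have hx' : ‖x‖ ^ 2 < R ^ 2 / 2 := hx
      simp only [mem_closedBall, dist_zero_right]
      nlinarith [norm_nonneg x]
    exact (hWc.continuousOn.integrableOn_compact (isCompact_closedBall 0 R)).mono_set this
  set J := ∫ x in B, W x with hJ
  have hJ0 : 0 ≤ J := setIntegral_nonneg hBo.measurableSet fun x _ => hW0 x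
  have main : ∀ τ : ℝ, 4 ≤ τ → 1 + K ^ 2 ≤ 2 * τ ^ 3 → 2 * τ ^ 3 * J ≤ M * V := by
    intro τ hτ hτK
    have hτ0 : 0 ≤ τ := by linarith
    set ω := cw N τ (R ^ 2 / 2) with hω
    have hωp : 0 < ω := cw_pos (by positivity)
    have q : ∀ f g : Eu N → ℝ, Continuous f → Continuous g → Flat f →
        (∀ x, x ∉ closedBall (0 : Eu N) R → f x = 0) →
        Integrable (fun x => cw N τ (‖x‖ ^ 2) * (g x * f x)) := by
      intro f g hf hg hff hz
      refine integrable_cw_mul hτ0 (by fun_prop) (hff.mul_left hg.continuousAt) fun x hx => ?_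
      rw [hz x fun h => hx (hsub h), mul_zero]
    have q1 : Integrable (fun x : Eu N => cw N τ (‖x‖ ^ 2) * (4 * τ ^ 3 * ‖x‖ ^ 2 * w1 x ^ 2)) :=
      (q w1 (fun x => 4 * τ ^ 3 * ‖x‖ ^ 2 * w1 x) w1c (by fun_prop) g1
        fun x hx => (n1 x hx).1).congr (Eventually.of_forall fun x => by ring)
    have q2 : Integrable (fun x : Eu N => cw N τ (‖x‖ ^ 2) * (4 * τ ^ 3 * ‖x‖ ^ 2 * w2 x ^ 2)) :=
      (q w2 (fun x => 4 * τ ^ 3 * ‖x‖ ^ 2 * w2 x) w2c (by fun_prop) g4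
        fun x hx => (n1 x hx).2.1).congr (Eventually.of_forall fun x => by ring)
    have q3 : Integrable (fun x : Eu N => cw N τ (‖x‖ ^ 2) * (‖x‖ ^ 2 * laplacian w1 x) ^ 2) :=
      (q (laplacian w1) (fun x => ‖x‖ ^ 4 * laplacian w1 x) l1c (by fun_prop) g3
        fun x hx => (n1 x hx).2.2.1).congr (Eventually.of_forall fun x => by ring)
    have q4 : Integrable (fun x : Eu N => cw N τ (‖x‖ ^ 2) * (‖x‖ ^ 2 * laplacian w2 x) ^ 2) :=
      (q (laplacian w2) (fun x => ‖x‖ ^ 4 * laplacian w2 x) l2c (by fun_prop) g6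
        fun x hx => (n1 x hx).2.2.2).congr (Eventually.of_forall fun x => by ring)
    have qW : Integrable (fun x : Eu N => cw N τ (‖x‖ ^ 2) * W x) :=
      ((q w1 (fun x => ‖x‖ ^ 2 * w1 x) w1c (by fun_prop) g1 fun x hx => (n1 x hx).1).add
      (q w2 (fun x => ‖x‖ ^ 2 * w2 x) w2c (by fun_prop) g4 fun x hx => (n1 x hx).2.1)).congr
      (Eventually.of_forall fun x => by simp only [hW, Pi.add_apply]; ring)
    have k1 := carleman_flat hN hτ c1 (t1.trans hsub) g1 g2 g3
    have k2 := carleman_flat hN hτ c2 (t2.trans hsub) g4 g5 g6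
    set I := ∫ x : Eu N, cw N τ (‖x‖ ^ 2) * W x with hI
    -- The two Carleman inequalities, added.
    have s1 : 4 * τ ^ 3 * I ≤ ∫ x : Eu N, cw N τ (‖x‖ ^ 2) * T x := by
      have a1 : 4 * τ ^ 3 * I = (∫ x : Eu N, cw N τ (‖x‖ ^ 2) * (4 * τ ^ 3 * ‖x‖ ^ 2 * w1 x ^ 2))
          + ∫ x : Eu N, cw N τ (‖x‖ ^ 2) * (4 * τ ^ 3 * ‖x‖ ^ 2 * w2 x ^ 2) := by
        rw [← integral_add q1 q2, hI, ← integral_const_mul]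
        refine integral_congr_ae (Eventually.of_forall fun x => ?_)
        simp only [hW]; ring
      have a2 : ∫ x : Eu N, cw N τ (‖x‖ ^ 2) * T x
          = (∫ x : Eu N, cw N τ (‖x‖ ^ 2) * (‖x‖ ^ 2 * laplacian w1 x) ^ 2)
          + ∫ x : Eu N, cw N τ (‖x‖ ^ 2) * (‖x‖ ^ 2 * laplacian w2 x) ^ 2 := by
        rw [← integral_add q3 q4]
        refine integral_congr_ae (Eventually.of_forall fun x => ?_)
        simp only [hT]; ring
      rw [a1, a2]
      exact add_le_add k1 k2
    have qT : Integrable (fun x : Eu N => cw N τ (‖x‖ ^ 2) * T x) :=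
      (q3.add q4).congr (Eventually.of_forall fun x => by simp only [hT, Pi.add_apply]; ring)
    have qc : Integrable ((closedBall (0 : Eu N) R).indicator fun _ => ω * M) :=
      (integrable_indicator_iff measurableSet_closedBall).2
        (integrableOn_const measure_closedBall_lt_top.ne)
    -- Where the cutoffs equal `1`, the system bounds `T` by `(1 + K²) W`; elsewhere the weight is at
    -- most `ω`, its value on the sphere `‖x‖² = R² / 2`.
    have s2 : ∫ x : Eu N, cw N τ (‖x‖ ^ 2) * T x ≤ (1 + K ^ 2) * I + ω * M * V := by
      have : (1 + K ^ 2) * I + ω * M * V = ∫ x : Eu N, ((1 + K ^ 2) * (cw N τ (‖x‖ ^ 2) * W x)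
          + (closedBall (0 : Eu N) R).indicator (fun _ => ω * M) x) := by
        rw [integral_add (qW.const_mul _) qc, integral_const_mul,
          integral_indicator measurableSet_closedBall, setIntegral_const, smul_eq_mul,
          mul_comm (ω * M)]
      rw [this]
      refine integral_mono qT ((qW.const_mul _).add qc) fun x => ?_
      simp only
      have hcw : 0 ≤ cw N τ (‖x‖ ^ 2) := cw_nonneg (sq_nonneg _)
      by_cases hx : x ∈ closedBall (0 : Eu N) R
      · rw [indicator_of_mem hx]
        have hxR : ‖x‖ ≤ R := by simpa using hx
        have hs4 : ‖x‖ ^ 2 ≤ 1 / 4 := by nlinarith [norm_nonneg x]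
        by_cases hxB : ‖x‖ ^ 2 < R ^ 2 / 2
        · have y1 : laplacian w1 x = w2 x := by
            rw [laplacian_congr (e1 x hxB), (e2 x hxB).self_of_nhds]
          have y2 : laplacian w2 x ^ 2 ≤ K ^ 2 * w1 x ^ 2 := by
            rw [laplacian_congr (e2 x hxB), (e1 x hxB).self_of_nhds, ← sq_abs, ← sq_abs (u x),
              ← mul_pow]
            have := hb x hx
            gcongr
          have y3 : T x ≤ (1 + K ^ 2) * W x := by
            have z0 := sq_nonneg ‖x‖
            have z1 : (‖x‖ ^ 2) ^ 2 ≤ ‖x‖ ^ 2 := by nlinarith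
            have z2 : laplacian w1 x ^ 2 + laplacian w2 x ^ 2
                ≤ (1 + K ^ 2) * (w1 x ^ 2 + w2 x ^ 2) := by
              rw [y1]; nlinarith [sq_nonneg (w1 x), mul_nonneg (sq_nonneg K) (sq_nonneg (w2 x))]
            calc T x = (‖x‖ ^ 2) ^ 2 * (laplacian w1 x ^ 2 + laplacian w2 x ^ 2) := by
                  simp only [hT]; ring
              _ ≤ ‖x‖ ^ 2 * ((1 + K ^ 2) * (w1 x ^ 2 + w2 x ^ 2)) := by gcongr
              _ = _ := by simp only [hW]; ring
          have := mul_le_mul_of_nonneg_left y3 hcw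
          nlinarith [mul_nonneg hωp.le hM0]
        · have y1 : cw N τ (‖x‖ ^ 2) ≤ ω :=
            cw_anti hτ0 (by positivity) (not_lt.1 hxB) (by linarith)
          have y2 : T x ≤ M := (le_abs_self _).trans (hM x hx)
          have y3 : cw N τ (‖x‖ ^ 2) * T x ≤ ω * M :=
            (mul_le_mul_of_nonneg_left y2 hcw).trans (mul_le_mul_of_nonneg_right y1 hM0)
          have := mul_nonneg (by positivity : (0 : ℝ) ≤ 1 + K ^ 2) (mul_nonneg hcw (hW0 x))
          linarith
      · obtain ⟨_, _, z3, z4⟩ := n1 x hx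
        have : T x = 0 := by simp [hT, z3, z4]
        rw [this, indicator_of_notMem hx]
        have := mul_nonneg (by positivity : (0 : ℝ) ≤ 1 + K ^ 2) (mul_nonneg hcw (hW0 x))
        linarith
    -- Inside that sphere the weight is at least `ω`.
    have s3 : ω * J ≤ I := by
      rw [hJ, ← integral_const_mul]
      refine (setIntegral_mono_on (hWi.const_mul _) qW.integrableOn hBo.measurableSet ?_).trans
        (setIntegral_le_integral qW (Eventually.of_forall fun x =>
          mul_nonneg (cw_nonneg (sq_nonneg _)) (hW0 x)))
      intro x hx
      by_cases hx0 : x = 0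
      · simp [hW, hx0]
      · have hx' : ‖x‖ ^ 2 < R ^ 2 / 2 := hx
        exact mul_le_mul_of_nonneg_right
          (cw_anti hτ0 (normsq_pos hx0) hx'.le (by nlinarith)) (hW0 x)
    have hI0 : 0 ≤ I := (mul_nonneg hωp.le hJ0).trans s3
    have s4 : 2 * τ ^ 3 * I ≤ ω * M * V := by nlinarith
    have s5 : ω * (2 * τ ^ 3 * J) ≤ ω * (M * V) := by
      have : 2 * τ ^ 3 * (ω * J) ≤ 2 * τ ^ 3 * I := by gcongr
      linarith
    exact le_of_mul_le_mul_left s5 hωp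
  have hJz : J = 0 := by
    by_contra hne
    have hJp : 0 < J := lt_of_le_of_ne hJ0 (Ne.symm hne)
    set τ := max (max 4 (1 + K ^ 2)) ((M * V + 1) / J) with hτ
    have a1 : 4 ≤ τ := (le_max_left _ _).trans (le_max_left _ _)
    have a2 : 1 + K ^ 2 ≤ τ := (le_max_right _ _).trans (le_max_left _ _)
    have a3 : M * V + 1 ≤ τ * J := (div_le_iff₀ hJp).1 (le_max_right _ _)
    have a4 : τ ≤ τ ^ 3 := le_self_pow₀ (by linarith) (by norm_num)
    have := main τ a1 (by linarith)
    nlinarith [mul_le_mul_of_nonneg_right a4 hJ0, mul_nonneg hM0 hV0]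
  have hae := (setIntegral_eq_zero_iff_of_nonneg_ae (Eventually.of_forall hW0) hWi).1 hJz
  have hEq := Measure.eqOn_open_of_ae_eq hae hBo hWc.continuousOn continuousOn_const
  intro x hx
  by_cases hx0 : x = 0
  · rw [hx0]; exact hfl.eq_zero
  have hx' : ‖x‖ < R / 2 := by simpa using hx
  have hxB : ‖x‖ ^ 2 < R ^ 2 / 2 := by nlinarith [norm_nonneg x]
  have h0 : W x = 0 := hEq hxB
  have hs := normsq_pos hx0
  rcases mul_eq_zero.1 h0 with h | h
  · exact absurd h hs.ne'
  · rw [← (e1 x hxB).self_of_nhds]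
    have h1 : w1 x ^ 2 = 0 := by linarith [sq_nonneg (w1 x), sq_nonneg (w2 x)]
    exact pow_eq_zero_iff two_ne_zero |>.1 h1

lemma laplacian_translate (u : Eu N → ℝ) (y : Eu N) :
    laplacian (fun x => u (x + y)) = fun x => laplacian u (x + y) := by
  funext x
  simp only [laplacian, iteratedFDeriv_comp_add_right]

/-- Strong unique continuation at a point `y`, with a radius that depends only on the domain; this
uniformity is what makes the zero set propagate. -/
theorem local_ucp_at (hN : 2 ≤ N) {p C R : ℝ} (hp : 1 < p) (hC : 0 < C) (hR : 0 < R)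
    (hR2 : R ≤ 1 / 2) {u : Eu N → ℝ} {y : Eu N}
    (hu : ∀ x ∈ closedBall y R, ContDiffAt ℝ 4 u x)
    (hb : ∀ x ∈ closedBall y R, |laplacian (laplacian u) x| ≤ C * |u x| ^ p)
    (hfl : Flat fun x => u (x + y)) : ∀ x ∈ ball y (R / 2), u x = 0 := by
  obtain ⟨M, hM⟩ := (isCompact_closedBall y R).exists_bound_of_continuousOn
    (f := u) fun x hx => (hu x hx).continuousAt.continuousWithinAt
  have hmem : ∀ x ∈ closedBall (0 : Eu N) R, x + y ∈ closedBall y R := fun x hx => by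
    simpa [dist_eq_norm] using hx
  have h := local_ucp hN (K := C * M ^ (p - 1)) hR hR2 (u := fun x => u (x + y)) (fun x hx => by
      exact (hu _ (hmem x hx)).comp x (by fun_prop)) (fun x hx => by
      rw [laplacian_translate, laplacian_translate]
      refine (hb _ (hmem x hx)).trans ?_
      have h1 : |u (x + y)| ≤ M := hM _ (hmem x hx)
      have h2 : |u (x + y)| ^ p = |u (x + y)| ^ (p - 1) * |u (x + y)| := by
        rcases (abs_nonneg (u (x + y))).eq_or_lt with h0 | h0
        · rw [← h0, mul_zero, Real.zero_rpow (by linarith)]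
        · rw [← Real.rpow_add_one h0.ne', sub_add_cancel]
      rw [h2, ← mul_assoc]
      gcongr) hfl
  intro x hx
  have := h (x - y) (by simpa [dist_eq_norm] using hx)
  simpa using this

end localucp

/-! ### Propagation through the connected domain -/

theorem ucp_fourth_order {N : ℕ} (hN : 2 ≤ N) {Ω : Set (EuclideanSpace ℝ (Fin N))}
    (hΩopen : IsOpen Ω) (hΩconn : IsConnected Ω)
    {p C : ℝ} (hp : 1 < p) (hC : 0 < C)
    {u : EuclideanSpace ℝ (Fin N) → ℝ} (hu : ContDiffOn ℝ 4 u Ω)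
    (hbound : ∀ x ∈ Ω, |laplacian (laplacian u) x| ≤ C * |u x| ^ p)
    {x₀ : EuclideanSpace ℝ (Fin N)} (hx₀ : x₀ ∈ Ω)
    (hu0 : VanishesInfOrder u x₀) :
    ∀ x ∈ Ω, u x = 0 := by
  have hud : ∀ x ∈ Ω, ContDiffAt ℝ 4 u x := fun x hx => hu.contDiffAt (hΩopen.mem_nhds hx)
  have hloc : ∀ y R, 0 < R → R ≤ 1 / 2 → closedBall y R ⊆ Ω → Flat (fun x => u (x + y)) →
      ∀ x ∈ ball y (R / 2), u x = 0 := fun y R hR hR2 hsub hfl =>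
    local_ucp_at hN hp hC hR hR2 (fun x hx => hud x (hsub hx)) (fun x hx => hbound x (hsub hx)) hfl
  have hrad : ∀ y ∈ Ω, ∃ R, 0 < R ∧ R ≤ 1 / 2 ∧ closedBall y R ⊆ Ω := by
    intro y hy
    obtain ⟨r, hr, hsub⟩ := Metric.isOpen_iff.1 hΩopen y hy
    refine ⟨min (r / 2) (1 / 2), by positivity, min_le_right _ _, ?_⟩
    refine (closedBall_subset_ball ?_).trans hsub
    exact (min_le_left _ _).trans_lt (by linarith)
  set Z : Set (EuclideanSpace ℝ (Fin N)) := {x | u =ᶠ[nhds x] 0} with hZ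
  have hZo : IsOpen Z := by
    rw [isOpen_iff_mem_nhds]
    intro x hx
    have hx' : u =ᶠ[nhds x] 0 := hx
    exact hx'.eventually_nhds
  have hsubset : Ω ⊆ Z := by
    refine hΩconn.isPreconnected.subset_of_closure_inter_subset hZo ⟨x₀, hx₀, ?_⟩ ?_
    · obtain ⟨R, hR, hR2, hsub⟩ := hrad x₀ hx₀
      have h := hloc x₀ R hR hR2 hsub
        (flat_of_vanishes hN ((hud x₀ hx₀).of_le (by norm_num)) hu0)
      filter_upwards [ball_mem_nhds x₀ (half_pos hR)] with x hx using h x hx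
    · rintro x ⟨hxc, hxΩ⟩
      obtain ⟨R, hR, hR2, hsub⟩ := hrad x hxΩ
      obtain ⟨y, hyZ, hxy⟩ := Metric.mem_closure_iff.1 hxc (R / 4) (by positivity)
      have hyZ' : u =ᶠ[nhds y] 0 := hyZ
      have hfl : Flat (fun z => u (z + y)) := by
        have h0 : (fun z : EuclideanSpace ℝ (Fin N) => u (z + y)) =ᶠ[nhds 0] fun _ => 0 := by
          have ht : Tendsto (fun z : EuclideanSpace ℝ (Fin N) => z + y) (nhds 0) (nhds y) := by
            have : Continuous fun z : EuclideanSpace ℝ (Fin N) => z + y := by fun_prop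
            simpa using this.tendsto 0
          exact ht.eventually hyZ'
        have hz : Flat (fun _ : EuclideanSpace ℝ (Fin N) => (0 : ℝ)) := fun m => isBigO_zero _ _
        exact hz.congr h0.symm
      have h := hloc y (R / 2) (by positivity) (by linarith)
        ((closedBall_subset_closedBall' (by rw [dist_comm]; linarith)).trans hsub) hfl
      have hxm : x ∈ ball y (R / 2 / 2) := by
        rw [mem_ball]; linarith
      filter_upwards [isOpen_ball.mem_nhds hxm] with z hz using h z hz
  intro x hx
  have hxZ : u =ᶠ[nhds x] 0 := hsubset hx
  exact hxZ.self_of_nhds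
end

section
/- Let N ≥ 2, R > 0, and let B_R ⊆ ℝ^N be the open ball of radius R centered at the origin. Let α, β ≥ 0 and p, q > 0 with pq ≥ 1. Let u, v : ℝ^N → ℝ be radial functions, continuously differentiable on the closed ball cl(B_R) and twice continuously differentiable on B_R, satisfying Δu(x) + |x|^β |v(x)|^{q−1} v(x) = 0 and Δv(x) + |x|^α |u(x)|^{p−1} u(x) = 0 for all x ∈ B_R. If u and v vanish at every point of the sphere {|x| = R}, and in addition the derivative Du vanishes at every point of {|x| = R} or the derivative Dv vanishes at every point of {|x| = R}, then u ≡ 0 and v ≡ 0 on cl(B_R). -/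
/-!
In the radial variable `r = |x|` put `f(r) = u(r e)`, `g(r) = v(r e)` for a unit vector `e`, and
consider the fluxes `P = r^(N-1) f'`, `Q = r^(N-1) g'`. The system becomes
`P' = -r^(N-1+β) |g|^(q-1) g`, `Q' = -r^(N-1+α) |f|^(p-1) f` on `(0, R)`, with `P(0) = Q(0) = 0`
because `N ≥ 2` (`exists_radial_deriv`, `FluxSystem`). By symmetry, assume `P(R) = 0`.

* If `Q(R) < 0`, let `s < R` be the largest point of `[0, R]` where `Q ≥ 0`. On `(s, R)` the function
  `g` decreases to `0`, hence `g ≥ 0`; so `P` decreases to `0`, hence `P ≥ 0`; so `f` increases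
  to `0`, hence `f ≤ 0`; so `Q` increases, and `Q(s) ≤ Q(R) < 0`, a contradiction. The case
  `Q(R) > 0` follows by changing the signs of both functions (`FluxSystem.flux_eq_zero`).
* If `Q(R) = 0`, all Cauchy data vanish at `R`. The nonlinearity need not be Lipschitz, but if the
  data vanish at `s > 0`, then on `[s - δ, s]` one has `max |f| ≤ k (max |g|)^q` and
  `max |g| ≤ k (max |f|)^p` with `k = O(δ)`; since `p q ≥ 1` these combine to
  `max |f| ≤ (max |f|) / 2` for small `δ` (`FluxSystem.local_zero`). So the zero set propagates
  down to the origin (`FluxSystem.eq_zero`).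
-/

open MeasureTheory Asymptotics Filter Metric Set

/-! ### The signed power -/

lemma spow_nonneg {t s : ℝ} (ht : 0 ≤ t) : 0 ≤ spow t s := by
  unfold spow
  have h : 0 ≤ Real.sign t := by
    rcases ht.eq_or_lt with h | h
    · simp [← h]
    · simp [Real.sign_of_pos h]
  exact mul_nonneg h (by positivity)

lemma spow_neg (t s : ℝ) : spow (-t) s = - spow t s := by
  unfold spow
  rw [Real.sign_neg, abs_neg, neg_mul]

lemma spow_nonpos {t s : ℝ} (ht : t ≤ 0) : spow t s ≤ 0 := by
  have h := spow_nonneg (t := -t) (s := s) (by linarith)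
  rw [spow_neg] at h
  linarith

lemma abs_spow_le (t s : ℝ) : |spow t s| ≤ |t| ^ s := by
  unfold spow
  rw [abs_mul, abs_of_nonneg (Real.rpow_nonneg (abs_nonneg t) s)]
  have h : |Real.sign t| ≤ 1 := by
    rcases Real.sign_apply_eq t with h | h | h <;> rw [h] <;> norm_num
  have := Real.rpow_nonneg (abs_nonneg t) s
  nlinarith

/-! ### Mean value estimates with derivatives in the open interval only -/

lemma le_of_deriv_nonneg' {h h' : ℝ → ℝ} {r s : ℝ} (hrs : r ≤ s) (hc : ContinuousOn h (Icc r s))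
    (hd : ∀ x ∈ Ioo r s, HasDerivAt h (h' x) x) (hn : ∀ x ∈ Ioo r s, 0 ≤ h' x) : h r ≤ h s := by
  rcases hrs.eq_or_lt with rfl | hlt
  · exact le_rfl
  obtain ⟨c, hcm, he⟩ := exists_hasDerivAt_eq_slope h h' hlt hc hd
  have h1 := hn c hcm
  rw [he] at h1
  have h2 : 0 < s - r := by linarith
  have := mul_nonneg h1 h2.le
  rw [div_mul_cancel₀ _ h2.ne'] at this
  linarith

lemma le_of_deriv_nonpos' {h h' : ℝ → ℝ} {r s : ℝ} (hrs : r ≤ s) (hc : ContinuousOn h (Icc r s))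
    (hd : ∀ x ∈ Ioo r s, HasDerivAt h (h' x) x) (hn : ∀ x ∈ Ioo r s, h' x ≤ 0) : h s ≤ h r := by
  have := le_of_deriv_nonneg' (h := fun x => - h x) (h' := fun x => - h' x) hrs hc.neg
    (fun x hx => (hd x hx).neg) (fun x hx => by linarith [hn x hx])
  simpa using this

lemma abs_le_of_deriv_bound {h h' : ℝ → ℝ} {r s δ K : ℝ} (hr : r ∈ Icc (s - δ) s) (hK : 0 ≤ K)
    (hs : h s = 0) (hc : ContinuousOn h (Icc (s - δ) s))
    (hd : ∀ x ∈ Ioo (s - δ) s, HasDerivAt h (h' x) x)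
    (hb : ∀ x ∈ Ioo (s - δ) s, |h' x| ≤ K) : |h r| ≤ K * δ := by
  obtain ⟨hr1, hr2⟩ := hr
  rcases hr2.eq_or_lt with rfl | hlt
  · rw [hs, abs_zero]
    exact mul_nonneg hK (by linarith)
  obtain ⟨c, hcm, he⟩ := exists_hasDerivAt_eq_slope h h' hlt (hc.mono (Icc_subset_Icc_left hr1))
    (fun x hx => hd x ⟨by linarith [hx.1], hx.2⟩)
  have h1 := hb c ⟨by linarith [hcm.1], hcm.2⟩
  have h2 : 0 < s - r := by linarith
  rw [he, hs, zero_sub, abs_div, abs_neg, abs_of_pos h2, div_le_iff₀ h2] at h1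
  exact h1.trans (mul_le_mul_of_nonneg_left (by linarith) hK)

/-! ### The one-dimensional system -/

/-- The radial system on `[0, R]` in first-order form: `P = r^n f'` and `Q = r^n g'` are the fluxes,
`P' = -a |g|^(q-1) g`, `Q' = -b |f|^(p-1) f` with weights `0 ≤ a, b ≤ C`, zero flux at the origin
and `f(R) = g(R) = 0`. -/
structure FluxSystem (n : ℕ) (R C p q : ℝ) (a b f g P Q : ℝ → ℝ) : Prop where
  R_pos : 0 < R
  C_pos : 0 < C
  cf : ContinuousOn f (Icc 0 R)
  cg : ContinuousOn g (Icc 0 R)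
  cP : ContinuousOn P (Icc 0 R)
  cQ : ContinuousOn Q (Icc 0 R)
  df : ∀ r ∈ Ioo 0 R, HasDerivAt f (P r / r ^ n) r
  dg : ∀ r ∈ Ioo 0 R, HasDerivAt g (Q r / r ^ n) r
  dP : ∀ r ∈ Ioo 0 R, HasDerivAt P (-(a r * spow (g r) q)) r
  dQ : ∀ r ∈ Ioo 0 R, HasDerivAt Q (-(b r * spow (f r) p)) r
  a_nonneg : ∀ r ∈ Ioo 0 R, 0 ≤ a r
  a_le : ∀ r ∈ Ioo 0 R, a r ≤ C
  b_nonneg : ∀ r ∈ Ioo 0 R, 0 ≤ b r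
  b_le : ∀ r ∈ Ioo 0 R, b r ≤ C
  P_zero : P 0 = 0
  Q_zero : Q 0 = 0
  f_R : f R = 0
  g_R : g R = 0

namespace FluxSystem

variable {n : ℕ} {R C p q : ℝ} {a b f g P Q : ℝ → ℝ}

lemma symm (S : FluxSystem n R C p q a b f g P Q) : FluxSystem n R C q p b a g f Q P :=
  ⟨S.R_pos, S.C_pos, S.cg, S.cf, S.cQ, S.cP, S.dg, S.df, S.dQ, S.dP, S.b_nonneg, S.b_le,
    S.a_nonneg, S.a_le, S.Q_zero, S.P_zero, S.g_R, S.f_R⟩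

lemma neg (S : FluxSystem n R C p q a b f g P Q) :
    FluxSystem n R C p q a b (fun r => - f r) (fun r => - g r) (fun r => - P r)
      (fun r => - Q r) where
  R_pos := S.R_pos
  C_pos := S.C_pos
  cf := S.cf.neg
  cg := S.cg.neg
  cP := S.cP.neg
  cQ := S.cQ.neg
  df r hr := (S.df r hr).neg.congr_deriv (by rw [neg_div])
  dg r hr := (S.dg r hr).neg.congr_deriv (by rw [neg_div])
  dP r hr := (S.dP r hr).neg.congr_deriv (by rw [spow_neg, mul_neg])
  dQ r hr := (S.dQ r hr).neg.congr_deriv (by rw [spow_neg, mul_neg])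
  a_nonneg := S.a_nonneg
  a_le := S.a_le
  b_nonneg := S.b_nonneg
  b_le := S.b_le
  P_zero := by simp [S.P_zero]
  Q_zero := by simp [S.Q_zero]
  f_R := by simp [S.f_R]
  g_R := by simp [S.g_R]

/-- A negative outer flux `Q(R)` would force `Q < 0` all the way down to the origin. -/
lemma flux_nonneg (S : FluxSystem n R C p q a b f g P Q) (hP : P R = 0) : 0 ≤ Q R := by
  by_contra! hQ
  -- `s` is the largest point of `[0, R]` at which `Q ≥ 0`.
  have hcl : IsClosed (Icc 0 R ∩ Q ⁻¹' Ici 0) :=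
    S.cQ.preimage_isClosed_of_isClosed isClosed_Icc isClosed_Ici
  have hcpt : IsCompact (Icc 0 R ∩ Q ⁻¹' Ici 0) :=
    isCompact_Icc.of_isClosed_subset hcl inter_subset_left
  have hne : (Icc 0 R ∩ Q ⁻¹' Ici 0).Nonempty :=
    ⟨0, ⟨le_rfl, S.R_pos.le⟩, by simp [S.Q_zero]⟩
  obtain ⟨s, ⟨⟨hs0, hsR⟩, hsQ⟩, hmax⟩ := hcpt.exists_isGreatest hne
  have hsQ' : 0 ≤ Q s := hsQ
  have hneg : ∀ r ∈ Ioo s R, Q r < 0 := by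
    intro r hr
    by_contra! h
    have := hmax ⟨⟨by linarith [hr.1], hr.2.le⟩, h⟩
    linarith [hr.1]
  have sub : ∀ r ∈ Icc s R, Icc r R ⊆ Icc 0 R := fun r hr =>
    Icc_subset_Icc_left (hs0.trans hr.1)
  have mem : ∀ r ∈ Icc s R, ∀ x ∈ Ioo r R, x ∈ Ioo s R ∧ x ∈ Ioo 0 R := fun r hr x hx =>
    ⟨⟨by linarith [hr.1, hx.1], hx.2⟩, ⟨by linarith [hr.1, hx.1], hx.2⟩⟩
  have hg : ∀ r ∈ Icc s R, 0 ≤ g r := by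
    intro r hr
    rw [← S.g_R]
    refine le_of_deriv_nonpos' hr.2 (S.cg.mono (sub r hr))
      (fun x hx => S.dg x (mem r hr x hx).2) (fun x hx => ?_)
    have := (mem r hr x hx).2.1
    exact div_nonpos_of_nonpos_of_nonneg (hneg x (mem r hr x hx).1).le (by positivity)
  have hPn : ∀ r ∈ Icc s R, 0 ≤ P r := by
    intro r hr
    rw [← hP]
    refine le_of_deriv_nonpos' hr.2 (S.cP.mono (sub r hr))
      (fun x hx => S.dP x (mem r hr x hx).2) (fun x hx => ?_)
    have := mul_nonneg (S.a_nonneg x (mem r hr x hx).2)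
      (spow_nonneg (s := q) (hg x (Ioo_subset_Icc_self (mem r hr x hx).1)))
    linarith
  have hf : ∀ r ∈ Icc s R, f r ≤ 0 := by
    intro r hr
    rw [← S.f_R]
    refine le_of_deriv_nonneg' hr.2 (S.cf.mono (sub r hr))
      (fun x hx => S.df x (mem r hr x hx).2) (fun x hx => ?_)
    have := (mem r hr x hx).2.1
    exact div_nonneg (hPn x (Ioo_subset_Icc_self (mem r hr x hx).1)) (by positivity)
  have hs : s ∈ Icc s R := ⟨le_rfl, hsR⟩
  have : Q s ≤ Q R := by
    refine le_of_deriv_nonneg' hsR (S.cQ.mono (sub s hs))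
      (fun x hx => S.dQ x (mem s hs x hx).2) (fun x hx => ?_)
    have := mul_nonneg (S.b_nonneg x (mem s hs x hx).2)
      (neg_nonneg.2 (spow_nonpos (s := p) (hf x (Ioo_subset_Icc_self hx))))
    linarith
  linarith

lemma flux_eq_zero (S : FluxSystem n R C p q a b f g P Q) (hP : P R = 0) : Q R = 0 := by
  have h1 := S.flux_nonneg hP
  have h2 := S.neg.flux_nonneg (by simp [hP])
  linarith

/-- Two integrations: near a point `s` where `f` and its flux vanish, `|f|` is controlled by
`|g|^q` with a small constant. -/
lemma bound (S : FluxSystem n R C p q a b f g P Q) (hq : 0 < q) {s δ G : ℝ}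
    (hs : s ∈ Ioc 0 R) (hδ : 0 < δ) (hδ1 : δ ≤ 1) (hδs : δ ≤ s / 2) (hfs : f s = 0) (hPs : P s = 0)
    (hG : ∀ r ∈ Icc (s - δ) s, |g r| ≤ G) :
    ∀ r ∈ Icc (s - δ) s, |P r| ≤ C * G ^ q ∧ |f r| ≤ C * δ / (s / 2) ^ n * G ^ q := by
  obtain ⟨hs0, hsR⟩ := hs
  have hG0 : 0 ≤ G := (abs_nonneg _).trans (hG s ⟨by linarith, le_rfl⟩)
  have hGq : 0 ≤ G ^ q := Real.rpow_nonneg hG0 q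
  have hC := S.C_pos
  have hCG : 0 ≤ C * G ^ q := by positivity
  have sub : Icc (s - δ) s ⊆ Icc 0 R := Icc_subset_Icc (by linarith) hsR
  have mem : ∀ x ∈ Ioo (s - δ) s, x ∈ Ioo 0 R := fun x hx =>
    ⟨by linarith [hx.1], by linarith [hx.2]⟩
  have hP : ∀ r ∈ Icc (s - δ) s, |P r| ≤ C * G ^ q := by
    intro r hr
    have h := abs_le_of_deriv_bound hr hCG hPs (S.cP.mono sub) (fun x hx => S.dP x (mem x hx))
      (fun x hx => by
        rw [abs_neg, abs_mul, abs_of_nonneg (S.a_nonneg x (mem x hx))]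
        refine mul_le_mul (S.a_le x (mem x hx)) ((abs_spow_le _ _).trans ?_) (abs_nonneg _) hC.le
        exact Real.rpow_le_rpow (abs_nonneg _) (hG x (Ioo_subset_Icc_self hx)) hq.le)
    nlinarith
  intro r hr
  refine ⟨hP r hr, ?_⟩
  have hm : 0 < (s / 2) ^ n := by positivity
  have h := abs_le_of_deriv_bound (K := C * G ^ q / (s / 2) ^ n) hr (by positivity) hfs
    (S.cf.mono sub) (fun x hx => S.df x (mem x hx))
    (fun x hx => by
      have hx0 : s / 2 ≤ x := by linarith [hx.1]
      have hxp : (s / 2) ^ n ≤ x ^ n := pow_le_pow_left₀ (by linarith) hx0 n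
      rw [abs_div, abs_of_pos (hm.trans_le hxp)]
      exact div_le_div₀ hCG (hP x (Ioo_subset_Icc_self hx)) hm hxp)
  calc |f r| ≤ _ := h
    _ = _ := by ring

/-- Local uniqueness to the left of a point with vanishing Cauchy data; this is where `p q ≥ 1`
is used. -/
lemma local_zero (S : FluxSystem n R C p q a b f g P Q) (hp : 0 < p) (hq : 0 < q)
    (hpq : 1 ≤ p * q) {s : ℝ} (hs : s ∈ Ioc 0 R) (hfs : f s = 0) (hgs : g s = 0) (hPs : P s = 0)
    (hQs : Q s = 0) :
    ∃ δ > 0, δ < s ∧ ∀ r ∈ Icc (s - δ) s, f r = 0 ∧ g r = 0 ∧ P r = 0 ∧ Q r = 0 := by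
  obtain ⟨M, hM⟩ := isCompact_Icc.exists_bound_of_continuousOn S.cf
  have hC := S.C_pos
  have hs0 := hs.1
  -- `L` bounds `|f|^(p q - 1)` on `[0, R]`; `δ` makes the constant `k` of `bound` at most `1/(2L)`.
  set L : ℝ := (max M 1) ^ (p * q - 1) with hLdef
  have hL : 1 ≤ L := Real.one_le_rpow (le_max_right _ _) (by linarith)
  set m : ℝ := (s / 2) ^ n with hm
  have hm0 : 0 < m := by positivity
  set δ : ℝ := min (min (s / 2) 1) (m / (2 * L * C)) with hδ
  have hδ0 : 0 < δ := by
    refine lt_min (lt_min (by linarith) one_pos) (by positivity)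
  have hδs : δ ≤ s / 2 := (min_le_left _ _).trans (min_le_left _ _)
  have hδ1 : δ ≤ 1 := (min_le_left _ _).trans (min_le_right _ _)
  have hδL : δ ≤ m / (2 * L * C) := min_le_right _ _
  set k : ℝ := C * δ / m with hk
  have hk0 : 0 ≤ k := by positivity
  have hkL : k * L ≤ 1 / 2 := by
    rw [le_div_iff₀ (by positivity)] at hδL
    rw [hk, div_mul_eq_mul_div, div_le_iff₀ hm0]
    nlinarith
  have hk1 : k ≤ 1 := by nlinarith
  have sub : Icc (s - δ) s ⊆ Icc 0 R := Icc_subset_Icc (by linarith) hs.2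
  have hne : (Icc (s - δ) s).Nonempty := ⟨s, by linarith, le_rfl⟩
  obtain ⟨x, hx, hxmax⟩ := isCompact_Icc.exists_isMaxOn hne (S.cf.mono sub).abs
  obtain ⟨y, hy, hymax⟩ := isCompact_Icc.exists_isMaxOn hne (S.cg.mono sub).abs
  have hF : ∀ r ∈ Icc (s - δ) s, |f r| ≤ |f x| := fun r hr => hxmax hr
  have hG : ∀ r ∈ Icc (s - δ) s, |g r| ≤ |g y| := fun r hr => hymax hr
  have B1 := S.bound hq hs hδ0 hδ1 hδs hfs hPs hG
  have B2 := S.symm.bound hp hs hδ0 hδ1 hδs hgs hQs hF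
  have h1 : |f x| ≤ k * |g y| ^ q := (B1 x hx).2
  have h2 : |g y| ≤ k * |f x| ^ p := (B2 y hy).2
  have hF0 : |f x| = 0 := by
    by_contra hne0
    have hpos : 0 < |f x| := lt_of_le_of_ne (abs_nonneg _) (Ne.symm hne0)
    have h3 : |g y| ^ q ≤ |f x| ^ (p * q) := by
      rw [Real.rpow_mul hpos.le]
      refine Real.rpow_le_rpow (abs_nonneg _) (h2.trans ?_) hq.le
      have := Real.rpow_nonneg hpos.le p
      nlinarith
    have h4 : |f x| ^ (p * q) ≤ |f x| * L := by
      have : |f x| ^ (p * q) = |f x| * |f x| ^ (p * q - 1) := by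
        rw [Real.rpow_sub hpos, Real.rpow_one]
        field_simp
      rw [this]
      refine mul_le_mul_of_nonneg_left ?_ hpos.le
      exact Real.rpow_le_rpow hpos.le ((hM x (sub hx)).trans (le_max_left _ _)) (by linarith)
    have h5 : |f x| ≤ k * (|f x| * L) :=
      h1.trans (mul_le_mul_of_nonneg_left (h3.trans h4) hk0)
    nlinarith
  have hG0 : |g y| = 0 := by
    rw [hF0, Real.zero_rpow hp.ne', mul_zero] at h2
    exact le_antisymm h2 (abs_nonneg _)
  refine ⟨δ, hδ0, by linarith, fun r hr => ?_⟩
  have e1 := hF r hr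
  have e2 := hG r hr
  have e3 := (B1 r hr).1
  have e4 := (B2 r hr).1
  rw [hF0] at e1
  rw [hG0] at e2
  rw [hG0, Real.zero_rpow hq.ne', mul_zero] at e3
  rw [hF0, Real.zero_rpow hp.ne', mul_zero] at e4
  exact ⟨abs_nonpos_iff.1 e1, abs_nonpos_iff.1 e2, abs_nonpos_iff.1 e3, abs_nonpos_iff.1 e4⟩

lemma eq_zero (S : FluxSystem n R C p q a b f g P Q) (hp : 0 < p) (hq : 0 < q)
    (hpq : 1 ≤ p * q) (hP : P R = 0) : ∀ r ∈ Icc 0 R, f r = 0 ∧ g r = 0 := by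
  have hQ := S.flux_eq_zero hP
  by_contra! hcon
  obtain ⟨r₀, hr₀, hr₀'⟩ := hcon
  -- `s` is the supremum of the radii at which the data do not all vanish.
  set T : Set ℝ := {r | r ∈ Icc 0 R ∧ ¬ (f r = 0 ∧ g r = 0 ∧ P r = 0 ∧ Q r = 0)} with hT
  have hr₀T : r₀ ∈ T := ⟨hr₀, fun h => hr₀' h.1 h.2.1⟩
  have hbdd : BddAbove T := ⟨R, fun r hr => hr.1.2⟩
  set s := sSup T with hs
  have hsR : s ≤ R := csSup_le ⟨r₀, hr₀T⟩ fun r hr => hr.1.2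
  have hr₀s : r₀ ≤ s := le_csSup hbdd hr₀T
  have hs0 : 0 ≤ s := hr₀.1.trans hr₀s
  have hz : ∀ r ∈ Ioc s R, f r = 0 ∧ g r = 0 ∧ P r = 0 ∧ Q r = 0 := by
    intro r hr
    by_contra h
    have := le_csSup hbdd (show r ∈ T from ⟨⟨by linarith [hr.1], hr.2⟩, h⟩)
    linarith [hr.1]
  have hzs : f s = 0 ∧ g s = 0 ∧ P s = 0 ∧ Q s = 0 := by
    rcases hsR.eq_or_lt with h | h
    · rw [h]
      exact ⟨S.f_R, S.g_R, hP, hQ⟩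
    · have key : ∀ h : ℝ → ℝ, ContinuousOn h (Icc 0 R) → (∀ r ∈ Ioc s R, h r = 0) → h s = 0 := by
        intro φ hc hφ
        have hc' : ContinuousWithinAt φ (Ioc s R) s :=
          (hc s ⟨hs0, hsR⟩).mono fun x hx => ⟨by linarith [hx.1], hx.2⟩
        have hcl : s ∈ closure (Ioc s R) := by
          rw [closure_Ioc h.ne]
          exact ⟨le_rfl, hsR⟩
        have := hc'.mem_closure hcl (t := {0}) (fun x hx => hφ x hx)
        simpa using this
      exact ⟨key f S.cf fun r hr => (hz r hr).1, key g S.cg fun r hr => (hz r hr).2.1,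
        key P S.cP fun r hr => (hz r hr).2.2.1, key Q S.cQ fun r hr => (hz r hr).2.2.2⟩
  rcases hs0.eq_or_lt with h0 | hpos
  · have : r₀ = s := le_antisymm hr₀s (by linarith [hr₀.1])
    exact hr₀' (this ▸ hzs.1) (this ▸ hzs.2.1)
  · obtain ⟨δ, hδ, hδs, hloc⟩ :=
      S.local_zero hp hq hpq ⟨hpos, hsR⟩ hzs.1 hzs.2.1 hzs.2.2.1 hzs.2.2.2
    have : s ≤ s - δ := by
      refine csSup_le ⟨r₀, hr₀T⟩ fun r hr => ?_
      by_contra! h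
      exact hr.2 (hloc r ⟨h.le, le_csSup hbdd hr⟩)
    linarith

end FluxSystem

/-! ### The Laplacian of a radial function -/

/-- For a radial function, the second derivative at `r e` in a direction `e'` orthogonal to `e` is
`(∂_e u) / r`: differentiate twice the constant function `t ↦ u(r cos t e + r sin t e')`. -/
lemma second_deriv_tangential {N : ℕ} {u : EuclideanSpace ℝ (Fin N) → ℝ} (hur : IsRadial u)
    {R : ℝ} (hu2 : ContDiffOn ℝ 2 u (ball 0 R)) {r : ℝ} (hr : r ∈ Ioo 0 R) {i j : Fin N}
    (hij : i ≠ j) :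
    fderiv ℝ (fderiv ℝ u) (r • EuclideanSpace.single i 1) (EuclideanSpace.single j 1)
        (EuclideanSpace.single j 1) =
      fderiv ℝ u (r • EuclideanSpace.single i 1) (EuclideanSpace.single i 1) / r := by
  set e : EuclideanSpace ℝ (Fin N) := EuclideanSpace.single i 1 with he
  set e' : EuclideanSpace ℝ (Fin N) := EuclideanSpace.single j 1 with he'
  obtain ⟨hr0, hrR⟩ := hr
  obtain ⟨U, hU⟩ := hur
  have hinner : inner ℝ e e' = 0 := by
    simp [he, he', EuclideanSpace.inner_single_left, hij]
  have hne : ‖e‖ = 1 := by simp [he]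
  have hne' : ‖e'‖ = 1 := by simp [he']
  let γ : ℝ → EuclideanSpace ℝ (Fin N) := fun t => (r * Real.cos t) • e + (r * Real.sin t) • e'
  let γ' : ℝ → EuclideanSpace ℝ (Fin N) := fun t => (-(r * Real.sin t)) • e + (r * Real.cos t) • e'
  have hγn : ∀ t, ‖γ t‖ = r := by
    intro t
    have h1 : ‖γ t‖ ^ 2 = r ^ 2 := by
      have := norm_add_sq_real ((r * Real.cos t) • e) ((r * Real.sin t) • e')
      simp only [inner_smul_left, inner_smul_right, hinner, norm_smul, hne, hne', mul_one,
        mul_zero, add_zero, Real.norm_eq_abs, sq_abs] at this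
      simp only [γ]
      rw [this]
      nlinarith [Real.sin_sq_add_cos_sq t]
    exact (sq_eq_sq₀ (norm_nonneg _) hr0.le).1 h1
  have hγb : ∀ t, γ t ∈ ball (0 : EuclideanSpace ℝ (Fin N)) R := fun t => by
    simpa [hγn t] using hrR
  have hγd : ∀ t, HasDerivAt γ (γ' t) t := by
    intro t
    have h1 := (((Real.hasDerivAt_cos t).const_mul r).smul_const e).add
      (((Real.hasDerivAt_sin t).const_mul r).smul_const e')
    exact h1.congr_deriv (by simp [γ'])
  have hγ'd : HasDerivAt γ' (-(r • e)) 0 := by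
    have h1 := ((((Real.hasDerivAt_sin 0).const_mul r).neg).smul_const e).add
      (((Real.hasDerivAt_cos 0).const_mul r).smul_const e')
    exact h1.congr_deriv (by simp)
  have hC : ∀ t, ContDiffAt ℝ 2 u (γ t) := fun t =>
    hu2.contDiffAt (isOpen_ball.mem_nhds (hγb t))
  have hconst : ∀ t, fderiv ℝ u (γ t) (γ' t) = 0 := by
    intro t
    have h1 : HasDerivAt (fun t => u (γ t)) (fderiv ℝ u (γ t) (γ' t)) t :=
      (((hC t).differentiableAt (by norm_num)).hasFDerivAt).comp_hasDerivAt t (hγd t)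
    have h2 : (fun t => u (γ t)) = fun _ => U r := by
      funext t
      rw [hU, hγn]
    rw [h2] at h1
    exact h1.unique (hasDerivAt_const t _)
  have hγ0 : γ 0 = r • e := by simp [γ]
  have hγ'0 : γ' 0 = r • e' := by simp [γ']
  have hD : DifferentiableAt ℝ (fderiv ℝ u) (γ 0) :=
    ((hC 0).fderiv_right (m := 1) (by norm_num)).differentiableAt (by norm_num)
  have h3 : HasDerivAt (fun t => fderiv ℝ u (γ t)) (fderiv ℝ (fderiv ℝ u) (γ 0) (γ' 0)) 0 :=
    hD.hasFDerivAt.comp_hasDerivAt (0 : ℝ) (hγd 0)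
  have h4 := h3.clm_apply hγ'd
  have h5 : (fun t => fderiv ℝ u (γ t) (γ' t)) = fun _ => (0 : ℝ) := funext hconst
  rw [h5] at h4
  have h6 := h4.unique (hasDerivAt_const (0 : ℝ) (0 : ℝ))
  rw [hγ0, hγ'0] at h6
  simp only [map_smul, map_neg, smul_eq_mul, smul_apply] at h6
  rw [eq_div_iff hr0.ne']
  have h7 : r * (fderiv ℝ (fderiv ℝ u) (r • e) e' e' * r - fderiv ℝ u (r • e) e) = 0 := by
    linarith
  rcases mul_eq_zero.1 h7 with h | h
  · exact absurd h hr0.ne'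
  · linarith

/-- The radial derivative `A` of a radial function, continuous up to the boundary, satisfies
`A' = Δu - (N - 1) A / r`. -/
lemma exists_radial_deriv {N : ℕ} {u : EuclideanSpace ℝ (Fin N) → ℝ} (hur : IsRadial u)
    {R : ℝ} (hR : 0 < R) (hu1 : ContDiffOn ℝ 1 u (closedBall 0 R))
    (hu2 : ContDiffOn ℝ 2 u (ball 0 R)) (i : Fin N) :
    ∃ A : ℝ → ℝ, ContinuousOn A (Icc 0 R) ∧
      (∀ r ∈ Ioo 0 R, HasDerivAt (fun r : ℝ => u (r • EuclideanSpace.single i 1)) (A r) r) ∧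
      (∀ r ∈ Ioo 0 R, HasDerivAt A
        (laplacian u (r • EuclideanSpace.single i 1) - ((N - 1 : ℕ) : ℝ) * (A r / r)) r) ∧
      ((∀ x ∈ sphere (0 : EuclideanSpace ℝ (Fin N)) R,
        fderivWithin ℝ u (closedBall 0 R) x = 0) → A R = 0) := by
  set e : EuclideanSpace ℝ (Fin N) := EuclideanSpace.single i 1 with he
  have hne : ‖e‖ = 1 := by simp [he]
  have hnorm : ∀ r : ℝ, 0 ≤ r → ‖r • e‖ = r := fun r hr => by
    rw [norm_smul, hne, mul_one, Real.norm_of_nonneg hr]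
  have hball : ∀ r ∈ Ioo 0 R, r • e ∈ ball (0 : EuclideanSpace ℝ (Fin N)) R := fun r hr => by
    simpa [hnorm r hr.1.le] using hr.2
  have hline : ∀ r : ℝ, HasDerivAt (fun r : ℝ => r • e) e r := fun r => by
    simpa using (hasDerivAt_id r).smul_const e
  have hC : ∀ r ∈ Ioo 0 R, ContDiffAt ℝ 2 u (r • e) := fun r hr =>
    hu2.contDiffAt (isOpen_ball.mem_nhds (hball r hr))
  have hA : ∀ r ∈ Ioo 0 R, fderivWithin ℝ u (closedBall 0 R) (r • e) = fderiv ℝ u (r • e) :=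
    fun r hr => fderivWithin_of_mem_nhds
      (mem_of_superset (isOpen_ball.mem_nhds (hball r hr)) ball_subset_closedBall)
  have hud : UniqueDiffOn ℝ (closedBall (0 : EuclideanSpace ℝ (Fin N)) R) :=
    uniqueDiffOn_convex (convex_closedBall _ _)
      ⟨0, interior_mono ball_subset_closedBall
        (by rw [isOpen_ball.interior_eq]; exact mem_ball_self hR)⟩
  refine ⟨fun r => fderivWithin ℝ u (closedBall 0 R) (r • e) e, ?_, ?_, ?_, ?_⟩
  · have h1 : ContinuousOn (fun r : ℝ => fderivWithin ℝ u (closedBall 0 R) (r • e)) (Icc 0 R) := by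
      refine (hu1.continuousOn_fderivWithin hud le_rfl).comp
        (Continuous.continuousOn (by fun_prop)) ?_
      intro r hr
      simpa [hnorm r hr.1] using hr.2
    exact h1.clm_apply continuousOn_const
  · intro r hr
    beta_reduce
    rw [hA r hr]
    exact (((hC r hr).differentiableAt (by norm_num)).hasFDerivAt).comp_hasDerivAt r (hline r)
  · intro r hr
    have hD : DifferentiableAt ℝ (fderiv ℝ u) (r • e) :=
      ((hC r hr).fderiv_right (m := 1) (by norm_num)).differentiableAt (by norm_num)
    have h3 : HasDerivAt (fun r : ℝ => fderiv ℝ u (r • e)) (fderiv ℝ (fderiv ℝ u) (r • e) e) r :=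
      hD.hasFDerivAt.comp_hasDerivAt r (hline r)
    have h4 : HasDerivAt (fun r : ℝ => fderiv ℝ u (r • e) e)
        (fderiv ℝ (fderiv ℝ u) (r • e) e e) r := by
      simpa using h3.clm_apply (hasDerivAt_const r e)
    have hlap : laplacian u (r • e) - ((N - 1 : ℕ) : ℝ) * (fderiv ℝ u (r • e) e / r) =
        fderiv ℝ (fderiv ℝ u) (r • e) e e := by
      unfold laplacian
      simp only [iteratedFDeriv_two_apply, Matrix.cons_val_zero, Matrix.cons_val_one]
      rw [← Finset.add_sum_erase _ _ (Finset.mem_univ i), Finset.sum_congr rfl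
        (fun j hj => second_deriv_tangential hur hu2 hr (Finset.ne_of_mem_erase hj).symm)]
      rw [Finset.sum_const, Finset.card_erase_of_mem (Finset.mem_univ i), Finset.card_univ,
        Fintype.card_fin, nsmul_eq_mul]
      ring
    beta_reduce
    rw [hA r hr, hlap]
    refine h4.congr_of_eventuallyEq ?_
    filter_upwards [isOpen_Ioo.mem_nhds hr] with x hx
    rw [hA x hx]
  · intro h
    beta_reduce
    rw [h (R • e) (by simp [hnorm R hR.le])]
    rfl

/-- The flux `r^n A` has derivative `r^n Δu`. -/
lemma hasDerivAt_flux {A : ℝ → ℝ} {n : ℕ} {r l : ℝ} (hr : 0 < r) (hn : 1 ≤ n)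
    (h : HasDerivAt A (l - (n : ℝ) * (A r / r)) r) :
    HasDerivAt (fun r => r ^ n * A r) (r ^ n * l) r := by
  have h1 := (hasDerivAt_pow n r).mul h
  refine h1.congr_deriv ?_
  obtain ⟨k, rfl⟩ := Nat.exists_eq_add_of_le' hn
  simp only [Nat.add_sub_cancel, pow_succ]
  field_simp
  ring

theorem ucp_radial {N : ℕ} (hN : 2 ≤ N) {R : ℝ} (hR : 0 < R)
    {α β p q : ℝ} (hα : 0 ≤ α) (hβ : 0 ≤ β) (hp : 0 < p) (hq : 0 < q) (hpq : 1 ≤ p * q)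
    {u v : EuclideanSpace ℝ (Fin N) → ℝ} (hur : IsRadial u) (hvr : IsRadial v)
    (hu1 : ContDiffOn ℝ 1 u (closedBall 0 R)) (hv1 : ContDiffOn ℝ 1 v (closedBall 0 R))
    (hu2 : ContDiffOn ℝ 2 u (ball 0 R)) (hv2 : ContDiffOn ℝ 2 v (ball 0 R))
    (heq1 : ∀ x ∈ ball (0 : EuclideanSpace ℝ (Fin N)) R,
      laplacian u x + ‖x‖ ^ β * spow (v x) q = 0)
    (heq2 : ∀ x ∈ ball (0 : EuclideanSpace ℝ (Fin N)) R,
      laplacian v x + ‖x‖ ^ α * spow (u x) p = 0)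
    (hub : ∀ x ∈ sphere (0 : EuclideanSpace ℝ (Fin N)) R, u x = 0)
    (hvb : ∀ x ∈ sphere (0 : EuclideanSpace ℝ (Fin N)) R, v x = 0)
    (hder : (∀ x ∈ sphere (0 : EuclideanSpace ℝ (Fin N)) R,
              fderivWithin ℝ u (closedBall 0 R) x = 0) ∨
            (∀ x ∈ sphere (0 : EuclideanSpace ℝ (Fin N)) R,
              fderivWithin ℝ v (closedBall 0 R) x = 0)) :
    ∀ x ∈ closedBall (0 : EuclideanSpace ℝ (Fin N)) R, u x = 0 ∧ v x = 0 := by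
  set i : Fin N := ⟨0, by omega⟩
  obtain ⟨A, hAc, hAd, hA', hAR⟩ := exists_radial_deriv hur hR hu1 hu2 i
  obtain ⟨B, hBc, hBd, hB', hBR⟩ := exists_radial_deriv hvr hR hv1 hv2 i
  set e : EuclideanSpace ℝ (Fin N) := EuclideanSpace.single i 1 with he
  have hne : ‖e‖ = 1 := by simp [he]
  have hnorm : ∀ r : ℝ, 0 ≤ r → ‖r • e‖ = r := fun r hr => by
    rw [norm_smul, hne, mul_one, Real.norm_of_nonneg hr]
  have hball : ∀ r ∈ Ioo 0 R, r • e ∈ ball (0 : EuclideanSpace ℝ (Fin N)) R := fun r hr => by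
    simpa [hnorm r hr.1.le] using hr.2
  have hcball : MapsTo (fun r : ℝ => r • e) (Icc 0 R)
      (closedBall (0 : EuclideanSpace ℝ (Fin N)) R) := fun r hr => by
    simpa [hnorm r hr.1] using hr.2
  have hlc : ContinuousOn (fun r : ℝ => r • e) (Icc 0 R) :=
    Continuous.continuousOn (by fun_prop)
  set n := N - 1 with hn
  have hn1 : 1 ≤ n := by omega
  have hwle : ∀ γ : ℝ, 0 ≤ γ → ∀ r ∈ Ioo 0 R, r ^ n * r ^ γ ≤ R ^ n * R ^ γ := by
    intro γ hγ r hr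
    have h1 := pow_le_pow_left₀ hr.1.le hr.2.le n
    have h2 := Real.rpow_le_rpow hr.1.le hr.2.le hγ
    exact mul_le_mul h1 h2 (Real.rpow_nonneg hr.1.le _) (by positivity)
  have hwpos : ∀ γ : ℝ, ∀ r ∈ Ioo 0 R, 0 ≤ r ^ n * r ^ γ := fun γ r hr =>
    mul_nonneg (pow_nonneg hr.1.le _) (Real.rpow_nonneg hr.1.le _)
  have S : FluxSystem n R (max (R ^ n * R ^ β) (R ^ n * R ^ α)) p q
      (fun r => r ^ n * r ^ β) (fun r => r ^ n * r ^ α)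
      (fun r => u (r • e)) (fun r => v (r • e)) (fun r => r ^ n * A r) (fun r => r ^ n * B r) := by
    refine ⟨hR, lt_max_of_lt_left (by positivity), hu1.continuousOn.comp hlc hcball,
      hv1.continuousOn.comp hlc hcball, ((continuous_pow n).continuousOn).mul hAc,
      ((continuous_pow n).continuousOn).mul hBc, ?_, ?_, ?_, ?_, hwpos β,
      fun r hr => (hwle β hβ r hr).trans (le_max_left _ _), hwpos α,
      fun r hr => (hwle α hα r hr).trans (le_max_right _ _), ?_, ?_, ?_, ?_⟩
    · intro r hr
      have := pow_pos hr.1 n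
      simpa [this.ne'] using hAd r hr
    · intro r hr
      have := pow_pos hr.1 n
      simpa [this.ne'] using hBd r hr
    · intro r hr
      refine (hasDerivAt_flux hr.1 hn1 (hA' r hr)).congr_deriv ?_
      have h := heq1 _ (hball r hr)
      rw [hnorm r hr.1.le] at h
      rw [eq_neg_of_add_eq_zero_left h]
      ring
    · intro r hr
      refine (hasDerivAt_flux hr.1 hn1 (hB' r hr)).congr_deriv ?_
      have h := heq2 _ (hball r hr)
      rw [hnorm r hr.1.le] at h
      rw [eq_neg_of_add_eq_zero_left h]
      ring
    · simp [show n ≠ 0 by omega]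
    · simp [show n ≠ 0 by omega]
    · exact hub _ (by simp [hnorm R hR.le])
    · exact hvb _ (by simp [hnorm R hR.le])
  have hzero : ∀ r ∈ Icc 0 R, u (r • e) = 0 ∧ v (r • e) = 0 := by
    rcases hder with h | h
    · exact S.eq_zero hp hq hpq (by simp [hAR h])
    · exact fun r hr =>
        (S.symm.eq_zero hq hp (by rwa [mul_comm]) (by simp [hBR h]) r hr).symm
  intro x hx
  obtain ⟨U, hU⟩ := hur
  obtain ⟨V, hV⟩ := hvr
  have h := hzero ‖x‖ ⟨norm_nonneg x, by simpa using hx⟩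
  rw [hU, hV, hnorm _ (norm_nonneg x)] at h
  rwa [hU, hV]
end

section
/- Let N ≥ 3, let α, β ≥ 0 and p, q > 0 satisfy (N+α)/(p+1) + (N+β)/(q+1) ≤ N − 2. Let R > 0 and let Ω = B_R ⊆ ℝ^N be the open ball of radius R centered at the origin. Then the weighted Lane–Emden system Δu(x) + |x|^β |v(x)|^{q−1} v(x) = 0, Δv(x) + |x|^α |u(x)|^{p−1} u(x) = 0 in Ω, with boundary conditions u = v = 0 on ∂Ω, admits no nontrivial radial classical solution: if u, v : ℝ^N → ℝ are radial, twice continuously differentiable on cl(Ω), satisfy the system in Ω and vanish on ∂Ω, then u ≡ 0 and v ≡ 0 on cl(Ω). -/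
/-!
Write `N = n + 1`. On the first coordinate axis a radial solution reduces to profiles `U`, `V` on
`[0, R]` with `(r ^ n U')' = -r ^ (n + β) |V| ^ (q - 1) V` and
`(r ^ n V')' = -r ^ (n + α) |U| ^ (p - 1) U` (`RadialSystem`, `radial_profile`).
No sign is assumed on the solution, so Pohozaev's identity alone does not conclude.

Suppose the profiles are not both identically zero, and let `T` be the supremum of the points where
one of them is nonzero; then `U T = V T = 0` and `T > 0`. The proof excludes every possibility for
the pair `(U' T, V' T)`.

* The radial Pohozaev energy
  `r ^ N U' V' + r ^ (N + β) |V| ^ (q + 1) / (q + 1) + r ^ (N + α) |U| ^ (p + 1) / (p + 1)`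
  `+ a r ^ n U' V + b r ^ n V' U`, with `a = (N + β) / (q + 1)` and `a + b = N - 2`, has derivative
  `r ^ (n + α) |U| ^ (p + 1) ((N + α) / (p + 1) - b) ≤ 0` and vanishes at `0`. Hence
  `U' T * V' T ≤ 0` (`RadialSystem.deriv_mul_deriv_nonpos`).
* If `U' T * V' T ≤ 0` and the two derivatives are not both zero, then `U` and `V` have opposite
  signs just before `T`. The equations propagate this backwards to the origin, keeping the flux of
  one profile away from zero, whereas `r ^ n U'` and `r ^ n V'` vanish at `r = 0`
  (`RadialSystem.false_of_opposite`, used for `(U, V)`, `(V, U)` and their negatives).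
* If `U' T = V' T = 0`, then `U = V = 0` on a left neighbourhood of `T`, contrary to the choice of
  `T`. This local uniqueness only needs `p q > 1`, which follows from the hyperbola condition
  (`RadialSystem.eq_zero_near`).
-/

open MeasureTheory Asymptotics Filter Metric Set

/-! ### The odd power function -/

lemma spow_neg_left (t s : ℝ) : spow (-t) s = -spow t s := by
  simp [spow, Real.sign_neg]

lemma spow_of_pos {t : ℝ} (ht : 0 < t) (s : ℝ) : 0 < spow t s := by
  rw [spow, Real.sign_of_pos ht, one_mul]
  exact Real.rpow_pos_of_pos (abs_pos.2 ht.ne') _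

lemma spow_of_neg {t : ℝ} (ht : t < 0) (s : ℝ) : spow t s < 0 := by
  have := spow_of_pos (neg_pos.2 ht) s
  rw [spow_neg_left] at this
  linarith

lemma abs_spow (t : ℝ) {s : ℝ} (hs : 0 < s) : |spow t s| = |t| ^ s := by
  rcases lt_trichotomy t 0 with h | h | h
  · simp [spow, Real.sign_of_neg h, abs_of_nonneg (Real.rpow_nonneg (abs_nonneg t) s)]
  · simp [spow, h, Real.zero_rpow hs.ne']
  · simp [spow, Real.sign_of_pos h, abs_of_nonneg (Real.rpow_nonneg (abs_nonneg t) s)]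

lemma spow_mul_self (t : ℝ) {s : ℝ} (hs : 0 < s) : spow t s * t = |t| ^ (s + 1) := by
  rcases eq_or_ne t 0 with h | h
  · simp [h, Real.zero_rpow (by linarith : s + 1 ≠ 0)]
  · have h1 : Real.sign t * t = |t| := by
      rcases lt_or_gt_of_ne h with h | h
      · rw [Real.sign_of_neg h, abs_of_neg h]; ring
      · rw [Real.sign_of_pos h, abs_of_pos h]; ring
    rw [Real.rpow_add_one (abs_pos.2 h).ne', spow, ← h1]
    ring

/-- `spow · s` has the even primitive `|x| ^ (s + 1) / (s + 1)`. -/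
lemma hasDerivAt_abs_rpow_div (t : ℝ) {s : ℝ} (hs : 0 < s) :
    HasDerivAt (fun x : ℝ => |x| ^ (s + 1) / (s + 1)) (spow t s) t := by
  have h := (hasDerivAt_abs_rpow t (by linarith : 1 < s + 1)).div_const (s + 1)
  refine h.congr_deriv (Eq.symm ?_)
  have hs1 : s + 1 ≠ 0 := by linarith
  rcases eq_or_ne t 0 with h0 | h0
  · simp [h0, spow]
  · have h1 : Real.sign t * |t| = t := by
      rcases lt_or_gt_of_ne h0 with h | h
      · rw [Real.sign_of_neg h, abs_of_neg h]; ring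
      · rw [Real.sign_of_pos h, abs_of_pos h]; ring
    have h2 : |t| ^ s = |t| ^ (s + 1 - 2) * |t| := by
      rw [← Real.rpow_add_one (abs_pos.2 h0).ne']; congr 1; ring
    rw [spow, h2]
    field_simp
    exact h1

/-! ### The radial system -/

/-- First-order form of the radial Lane–Emden system on `[0, R]` in dimension `n + 1`: `dU`, `dV`
are the radial derivatives of the profiles `U`, `V`, continuous up to both endpoints. -/
structure RadialSystem (n : ℕ) (R β q α p : ℝ) (U V dU dV : ℝ → ℝ) : Prop where
  contU : ContinuousOn U (Icc 0 R)
  contV : ContinuousOn V (Icc 0 R)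
  contdU : ContinuousOn dU (Icc 0 R)
  contdV : ContinuousOn dV (Icc 0 R)
  derivU : ∀ r ∈ Ioo 0 R, HasDerivAt U (dU r) r
  derivV : ∀ r ∈ Ioo 0 R, HasDerivAt V (dV r) r
  derivdU : ∀ r ∈ Ioo 0 R, HasDerivAt dU (-(n / r * dU r) - r ^ β * spow (V r) q) r
  derivdV : ∀ r ∈ Ioo 0 R, HasDerivAt dV (-(n / r * dV r) - r ^ α * spow (U r) p) r

namespace RadialSystem

variable {n : ℕ} {R β q α p : ℝ} {U V dU dV : ℝ → ℝ}

lemma swap (h : RadialSystem n R β q α p U V dU dV) : RadialSystem n R α p β q V U dV dU :=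
  ⟨h.contV, h.contU, h.contdV, h.contdU, h.derivV, h.derivU, h.derivdV, h.derivdU⟩

lemma neg (h : RadialSystem n R β q α p U V dU dV) :
    RadialSystem n R β q α p (-U) (-V) (-dU) (-dV) := by
  refine ⟨h.contU.neg, h.contV.neg, h.contdU.neg, h.contdV.neg, fun r hr => (h.derivU r hr).neg,
    fun r hr => (h.derivV r hr).neg, fun r hr => ?_, fun r hr => ?_⟩
  · refine (h.derivdU r hr).neg.congr_deriv ?_
    simp [spow_neg_left]; ring
  · refine (h.derivdV r hr).neg.congr_deriv ?_
    simp [spow_neg_left]; ring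

/-- Divergence form of the equation for `U`. -/
lemma hasDerivAt_flux (h : RadialSystem n R β q α p U V dU dV) {r : ℝ} (hr : r ∈ Ioo 0 R) :
    HasDerivAt (fun s => s ^ n * dU s) (-(r ^ n * r ^ β * spow (V r) q)) r := by
  refine ((hasDerivAt_pow n r).mul (h.derivdU r hr)).congr_deriv ?_
  have hr0 : r ≠ 0 := hr.1.ne'
  rcases n with _ | n
  · simp
  · simp only [Nat.add_sub_cancel]
    field_simp
    push_cast
    ring

lemma cont_flux (h : RadialSystem n R β q α p U V dU dV) :
    ContinuousOn (fun s => s ^ n * dU s) (Icc 0 R) :=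
  (continuous_pow n).continuousOn.mul h.contdU

/-- Backward propagation of opposite signs: if both profiles vanish at `T` and leave `T` (to the
left) with opposite signs, they keep opposite signs down to the origin, and then the flux
`r ^ n * U'` cannot vanish at `r = 0`. -/
lemma false_of_opposite (h : RadialSystem n R β q α p U V dU dV) (hn : n ≠ 0) {T : ℝ} (hT : 0 < T)
    (hTR : T ≤ R) (hU : U T = 0) (hV : V T = 0) (hdU : 0 < dU T) (hdV : dV T ≤ 0) : False := by
  have hsub : ∀ {a}, 0 ≤ a → Icc a T ⊆ Icc 0 R := fun ha => Icc_subset_Icc ha hTR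
  have hsubo : ∀ {a}, 0 ≤ a → Ioo a T ⊆ Ioo 0 R := fun ha => Ioo_subset_Ioo ha hTR
  -- on `[a, T)`: the flux of `V` stays negative as long as `U` is negative
  have keyV : ∀ a, 0 ≤ a → (∀ r ∈ Ioo a T, U r < 0) → a < T → ∀ r ∈ Ico a T, 0 < V r := by
    intro a ha hneg haT
    have hz : StrictMonoOn (fun s => s ^ n * dV s) (Icc a T) := by
      apply strictMonoOn_of_deriv_pos (convex_Icc a T) (h.swap.cont_flux.mono (hsub ha))
      intro r hr
      rw [interior_Icc] at hr
      have hr' := hsubo ha hr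
      rw [(h.swap.hasDerivAt_flux hr').deriv]
      have h1 := spow_of_neg (hneg r hr) p
      have h2 : 0 < r ^ n * r ^ α := mul_pos (pow_pos hr'.1 _) (Real.rpow_pos_of_pos hr'.1 _)
      nlinarith
    have hVa : StrictAntiOn V (Icc a T) := by
      apply strictAntiOn_of_deriv_neg (convex_Icc a T) (h.contV.mono (hsub ha))
      intro r hr
      rw [interior_Icc] at hr
      have hr' := hsubo ha hr
      rw [(h.derivV r hr').deriv]
      have h1 := hz (Ioo_subset_Icc_self hr) (right_mem_Icc.2 haT.le) hr.2
      have h2 : T ^ n * dV T ≤ 0 := mul_nonpos_of_nonneg_of_nonpos (pow_pos hT _).le hdV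
      have h3 : r ^ n * dV r < 0 := lt_of_lt_of_le h1 h2
      by_contra hc
      push Not at hc
      have := mul_nonneg (pow_pos hr'.1 n).le hc
      linarith
    intro r hr
    have := hVa (Ico_subset_Icc_self hr) (right_mem_Icc.2 haT.le) hr.2
    linarith
  -- on `[a, T]`: the flux of `U` is at least its positive value at `T` as long as `V` is positive
  have keyW : ∀ a, 0 ≤ a → (∀ r ∈ Ioo a T, 0 < V r) → a < T →
      ∀ r ∈ Icc a T, 0 < r ^ n * dU r := by
    intro a ha hpos haT r hr
    have hw : AntitoneOn (fun s => s ^ n * dU s) (Icc a T) := by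
      apply antitoneOn_of_deriv_nonpos (convex_Icc a T) (h.cont_flux.mono (hsub ha))
      · intro r hr
        rw [interior_Icc] at hr
        exact (h.hasDerivAt_flux (hsubo ha hr)).differentiableAt.differentiableWithinAt
      · intro r hr
        rw [interior_Icc] at hr
        have hr' := hsubo ha hr
        rw [(h.hasDerivAt_flux hr').deriv]
        have h1 := spow_of_pos (hpos r hr) q
        have h2 : 0 < r ^ n * r ^ β := mul_pos (pow_pos hr'.1 _) (Real.rpow_pos_of_pos hr'.1 _)
        nlinarith
    exact lt_of_lt_of_le (mul_pos (pow_pos hT n) hdU) (hw hr (right_mem_Icc.2 haT.le) hr.2)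
  have keyU : ∀ a, 0 ≤ a → (∀ r ∈ Ioo a T, 0 < dU r) → a < T → ∀ r ∈ Ico a T, U r < 0 := by
    intro a ha hpos haT r hr
    have hm : StrictMonoOn U (Icc a T) := by
      apply strictMonoOn_of_deriv_pos (convex_Icc a T) (h.contU.mono (hsub ha))
      intro r hr
      rw [interior_Icc] at hr
      rw [(h.derivU r (hsubo ha hr)).deriv]
      exact hpos r hr
    have := hm (Ico_subset_Icc_self hr) (right_mem_Icc.2 haT.le) hr.2
    linarith
  -- `U < 0` on some interval `[c, T)`
  obtain ⟨c, hc0, hcT, hc⟩ : ∃ c, 0 ≤ c ∧ c < T ∧ ∀ r ∈ Ico c T, U r < 0 := by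
    have h1 : ContinuousWithinAt dU (Icc 0 T) T :=
      (h.contdU.mono (hsub le_rfl)) T (right_mem_Icc.2 hT.le)
    have h2 : ∀ᶠ r in nhdsWithin T (Icc 0 T), 0 < dU r := h1.eventually (lt_mem_nhds hdU)
    obtain ⟨ε, hε, hb⟩ := Metric.mem_nhdsWithin_iff.1 h2
    refine ⟨max 0 (T - ε), le_max_left _ _, max_lt hT (by linarith),
      keyU _ (le_max_left _ _) (fun r hr => hb ⟨?_, ?_⟩) (max_lt hT (by linarith))⟩
    · rw [Metric.mem_ball, Real.dist_eq, abs_lt]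
      have := (max_lt_iff.1 hr.1).2
      constructor <;> linarith [hr.2]
    · exact ⟨(max_lt_iff.1 hr.1).1.le, hr.2.le⟩
  -- if `U < 0` failed somewhere, the largest point `s` of failure would satisfy `U s < 0`
  have hall : ∀ r ∈ Ico 0 T, U r < 0 := by
    by_contra hcon
    push Not at hcon
    obtain ⟨r₁, hr₁, hUr₁⟩ := hcon
    have hcR : c ≤ R := by linarith
    have hcomp : IsCompact (Icc 0 c ∩ U ⁻¹' Ici 0) :=
      isCompact_Icc.of_isClosed_subset
        ((h.contU.mono (Icc_subset_Icc le_rfl hcR)).preimage_isClosed_of_isClosed isClosed_Icc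
          isClosed_Ici) inter_subset_left
    have hne : (Icc 0 c ∩ U ⁻¹' Ici 0).Nonempty := by
      refine ⟨r₁, ⟨hr₁.1, ?_⟩, hUr₁⟩
      by_contra hlt
      push Not at hlt
      exact absurd (hc r₁ ⟨hlt.le, hr₁.2⟩) (not_lt.2 hUr₁)
    obtain ⟨s, ⟨⟨hs0, hsc⟩, hsU⟩, hmax⟩ := hcomp.exists_isGreatest hne
    have hsT : s < T := by linarith
    have hUs : ∀ r ∈ Ioo s T, U r < 0 := by
      intro r hr
      by_contra hge
      push Not at hge
      have hrc : r ≤ c := by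
        by_contra hlt
        push Not at hlt
        exact absurd (hc r ⟨hlt.le, hr.2⟩) (not_lt.2 hge)
      have := hmax ⟨⟨hs0.trans hr.1.le, hrc⟩, hge⟩
      linarith [hr.1]
    have hVs := keyV s hs0 hUs hsT
    have hWs := keyW s hs0 (fun r hr => hVs r (Ioo_subset_Ico_self hr)) hsT
    have := keyU s hs0 (fun r hr => ?_) hsT s ⟨le_rfl, hsT⟩
    · exact absurd this (not_lt.2 hsU)
    · exact pos_of_mul_pos_right (hWs r (Ioo_subset_Icc_self hr))
        (pow_pos (hs0.trans_lt hr.1) n).le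
  have hV0 := keyV 0 le_rfl (fun r hr => hall r (Ioo_subset_Ico_self hr)) hT
  have := keyW 0 le_rfl (fun r hr => hV0 r (Ioo_subset_Ico_self hr)) hT 0 ⟨le_rfl, hT.le⟩
  simp [hn] at this


/-! ### Pohozaev energy -/

/-- The Pohozaev-type energy is nonincreasing on the critical or supercritical range and vanishes at
the origin, so at a common zero `T` of the profiles it reduces to `T ^ (n + 1) * U' * V' ≤ 0`. -/
lemma deriv_mul_deriv_nonpos (h : RadialSystem n R β q α p U V dU dV) (hα : 0 ≤ α) (hβ : 0 ≤ β)
    (hp : 0 < p) (hq : 0 < q) (hn : n ≠ 0)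
    (hcrit : (n + 1 + α) / (p + 1) + (n + 1 + β) / (q + 1) ≤ (n : ℝ) - 1)
    {T : ℝ} (hT : 0 < T) (hTR : T ≤ R) (hU : U T = 0) (hV : V T = 0) : dU T * dV T ≤ 0 := by
  -- the multipliers satisfy `a + b = n - 1`, which cancels the `U' * V'` terms of the derivative
  set a : ℝ := (n + 1 + β) / (q + 1) with ha
  set b : ℝ := n - 1 - a with hb
  let E : ℝ → ℝ := fun r =>
    r * dU r * (r ^ n * dV r) + r ^ (n + 1) * r ^ β * (|V r| ^ (q + 1) / (q + 1))
      + r ^ (n + 1) * r ^ α * (|U r| ^ (p + 1) / (p + 1))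
      + a * (r ^ n * dU r * V r) + b * (r ^ n * dV r * U r)
  have hE0 : E 0 = 0 := by simp [E, hn]
  have hET : E T = T ^ (n + 1) * (dU T * dV T) := by
    simp only [E, hU, hV, abs_zero]
    rw [Real.zero_rpow (by linarith), Real.zero_rpow (by linarith)]
    ring
  have hcont : ContinuousOn E (Icc 0 T) := by
    have hs : Icc 0 T ⊆ Icc 0 R := Icc_subset_Icc le_rfl hTR
    have c1 := h.contU.mono hs
    have c2 := h.contV.mono hs
    have c3 := h.contdU.mono hs
    have c4 := h.contdV.mono hs
    have c5 : ContinuousOn (fun r : ℝ => r ^ β) (Icc 0 T) :=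
      (Real.continuous_rpow_const hβ).continuousOn
    have c6 : ContinuousOn (fun r : ℝ => r ^ α) (Icc 0 T) :=
      (Real.continuous_rpow_const hα).continuousOn
    have c7 : ContinuousOn (fun r : ℝ => |V r| ^ (q + 1)) (Icc 0 T) :=
      c2.abs.rpow_const fun _ _ => Or.inr (by linarith)
    have c8 : ContinuousOn (fun r : ℝ => |U r| ^ (p + 1)) (Icc 0 T) :=
      c1.abs.rpow_const fun _ _ => Or.inr (by linarith)
    have c9 : ∀ m : ℕ, ContinuousOn (fun r : ℝ => r ^ m) (Icc 0 T) :=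
      fun m => (continuous_pow m).continuousOn
    exact (((((continuousOn_id.mul c3).mul ((c9 n).mul c4)).add
      (((c9 (n + 1)).mul c5).mul (c7.div_const _))).add
      (((c9 (n + 1)).mul c6).mul (c8.div_const _))).add
      (continuousOn_const.mul (((c9 n).mul c3).mul c2))).add
      (continuousOn_const.mul (((c9 n).mul c4).mul c1))
  have hder : ∀ r ∈ Ioo 0 T, HasDerivAt E
      (r ^ n * r ^ α * |U r| ^ (p + 1) * ((n + 1 + α) / (p + 1) - b)) r := by
    intro r hr
    have hr' : r ∈ Ioo 0 R := ⟨hr.1, hr.2.trans_le hTR⟩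
    have hr0 : r ≠ 0 := hr.1.ne'
    have d1 := h.hasDerivAt_flux hr'
    have d2 := h.swap.hasDerivAt_flux hr'
    have d3 : HasDerivAt (fun r : ℝ => r ^ β) (β * (r ^ β / r)) r := by
      have := Real.hasDerivAt_rpow_const (p := β) (Or.inl hr0)
      rwa [Real.rpow_sub_one hr0] at this
    have d4 : HasDerivAt (fun r : ℝ => r ^ α) (α * (r ^ α / r)) r := by
      have := Real.hasDerivAt_rpow_const (p := α) (Or.inl hr0)
      rwa [Real.rpow_sub_one hr0] at this
    have d5 : HasDerivAt (fun r => |V r| ^ (q + 1) / (q + 1)) (spow (V r) q * dV r) r :=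
      HasDerivAt.comp r (hasDerivAt_abs_rpow_div (V r) hq) (h.derivV r hr')
    have d6 : HasDerivAt (fun r => |U r| ^ (p + 1) / (p + 1)) (spow (U r) p * dU r) r :=
      HasDerivAt.comp r (hasDerivAt_abs_rpow_div (U r) hp) (h.derivU r hr')
    have d7 : HasDerivAt (fun r : ℝ => r ^ (n + 1)) ((n + 1) * r ^ n) r := by
      simpa using hasDerivAt_pow (n + 1) r
    refine (((((((hasDerivAt_id r).mul (h.derivdU r hr')).mul d2).add
      ((d7.mul d3).mul d5)).add ((d7.mul d4).mul d6)).add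
      ((d1.mul (h.derivV r hr')).const_mul a)).add
      ((d2.mul (h.derivU r hr')).const_mul b)).congr_deriv ?_
    have e1 : |V r| ^ (q + 1) = spow (V r) q * V r := (spow_mul_self _ hq).symm
    have e2 : |U r| ^ (p + 1) = spow (U r) p * U r := (spow_mul_self _ hp).symm
    simp only [id, Pi.mul_apply]
    rw [e1, e2, hb, ha]
    have hq1 : q + 1 ≠ 0 := by linarith
    have hp1 : p + 1 ≠ 0 := by linarith
    field_simp
    ring
  have hanti : AntitoneOn E (Icc 0 T) := by
    apply antitoneOn_of_deriv_nonpos (convex_Icc 0 T) hcont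
    · intro r hr
      rw [interior_Icc] at hr
      exact (hder r hr).differentiableAt.differentiableWithinAt
    · intro r hr
      rw [interior_Icc] at hr
      rw [(hder r hr).deriv]
      have h1 : 0 ≤ r ^ n * r ^ α * |U r| ^ (p + 1) := by
        have := hr.1
        positivity
      exact mul_nonpos_of_nonneg_of_nonpos h1 (by rw [hb]; linarith)
  have := hanti (left_mem_Icc.2 hT.le) (right_mem_Icc.2 hT.le) hT.le
  rw [hE0, hET] at this
  have h2 := pow_pos hT (n + 1)
  by_contra hc
  push Not at hc
  nlinarith [mul_pos h2 hc]

/-! ### Local uniqueness of the zero solution -/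

/-- Integrating the equation for `U` twice backwards from a zero of `(U, U')`. -/
lemma abs_le_of_zero_data (h : RadialSystem n R β q α p U V dU dV) (hβ : 0 ≤ β) (hq : 0 < q)
    {T δ K : ℝ} (hT : 0 < T) (hTR : T ≤ R) (hδ0 : 0 < δ) (hδ : δ ≤ T / 2) (hU : U T = 0)
    (hdU : dU T = 0) (hK : ∀ r ∈ Icc (T - δ) T, |V r| ≤ K) :
    ∀ r ∈ Icc (T - δ) T, |U r| ≤ 2 ^ n * T ^ β * δ ^ 2 * K ^ q := by
  have hK0 : 0 ≤ K := (abs_nonneg _).trans (hK T ⟨by linarith, le_rfl⟩)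
  have hsub : ∀ r ∈ Icc (T - δ) T, Icc r T ⊆ Icc 0 R := fun r hr =>
    Icc_subset_Icc (by linarith [hr.1]) hTR
  have hflux : ∀ r ∈ Icc (T - δ) T, |dU r| ≤ 2 ^ n * T ^ β * K ^ q * δ := by
    intro r hr
    have hr0 : 0 < r := by linarith [hr.1]
    have h1 := norm_image_sub_le_of_norm_deriv_right_le_segment (f := fun s => s ^ n * dU s)
      (f' := fun s => -(s ^ n * s ^ β * spow (V s) q)) (C := T ^ n * T ^ β * K ^ q)
      (h.cont_flux.mono (hsub r hr))
      (fun s hs => (h.hasDerivAt_flux ⟨hr0.trans_le hs.1, hs.2.trans_le hTR⟩).hasDerivWithinAt)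
      (fun s hs => by
        have hs0 : 0 < s := hr0.trans_le hs.1
        rw [norm_neg, norm_mul, Real.norm_eq_abs, Real.norm_eq_abs, abs_spow _ hq,
          abs_of_pos (mul_pos (pow_pos hs0 n) (Real.rpow_pos_of_pos hs0 β))]
        have := hK s ⟨hr.1.trans hs.1, hs.2.le⟩
        have := hs.2.le
        gcongr) T ⟨hr.2, le_rfl⟩
    simp only [hdU, mul_zero, zero_sub, norm_neg, norm_mul, Real.norm_eq_abs,
      abs_of_pos (pow_pos hr0 n)] at h1
    have h2 : T ^ n ≤ 2 ^ n * r ^ n := by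
      rw [← mul_pow]
      exact pow_le_pow_left₀ hT.le (by linarith [hr.1]) n
    have h3 : r ^ n * |dU r| ≤ r ^ n * (2 ^ n * T ^ β * K ^ q * δ) := by
      calc r ^ n * |dU r| ≤ T ^ n * T ^ β * K ^ q * (T - r) := by simpa using h1
        _ ≤ (2 ^ n * r ^ n) * T ^ β * K ^ q * δ := by
          have : T - r ≤ δ := by linarith [hr.1]
          have : 0 ≤ T - r := by linarith [hr.2]
          gcongr
        _ = _ := by ring
    exact le_of_mul_le_mul_left h3 (pow_pos hr0 n)
  intro r hr
  have hr0 : 0 < r := by linarith [hr.1]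
  have h1 := norm_image_sub_le_of_norm_deriv_right_le_segment (f := U) (f' := dU)
    (C := 2 ^ n * T ^ β * K ^ q * δ) (h.contU.mono (hsub r hr))
    (fun s hs => (h.derivU s ⟨hr0.trans_le hs.1, hs.2.trans_le hTR⟩).hasDerivWithinAt)
    (fun s hs => hflux s ⟨hr.1.trans hs.1, hs.2.le⟩) T ⟨hr.2, le_rfl⟩
  rw [hU, zero_sub, norm_neg, Real.norm_eq_abs] at h1
  calc |U r| ≤ 2 ^ n * T ^ β * K ^ q * δ * (T - r) := h1
    _ ≤ 2 ^ n * T ^ β * K ^ q * δ * δ := by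
      have : T - r ≤ δ := by linarith [hr.1]
      gcongr
    _ = _ := by ring

/-- Local backward uniqueness of the zero solution. The nonlinearities need not be Lipschitz
individually; superlinearity `1 < p * q` of their composition suffices. -/
lemma eq_zero_near (h : RadialSystem n R β q α p U V dU dV) (hα : 0 ≤ α) (hβ : 0 ≤ β)
    (hp : 0 < p) (hq : 0 < q) (hpq : 1 < p * q) {T : ℝ} (hT : 0 < T) (hTR : T ≤ R)
    (hU : U T = 0) (hV : V T = 0) (hdU : dU T = 0) (hdV : dV T = 0) :
    ∃ δ > 0, ∀ r ∈ Icc (T - δ) T, U r = 0 ∧ V r = 0 := by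
  obtain ⟨ε, hε, hεU⟩ : ∃ ε > 0, ∀ r ∈ Icc 0 T, |r - T| < ε → |U r| < 1 := by
    have h1 : ContinuousWithinAt U (Icc 0 T) T :=
      (h.contU.mono (Icc_subset_Icc le_rfl hTR)) T (right_mem_Icc.2 hT.le)
    obtain ⟨ε, hε, hb⟩ := Metric.continuousWithinAt_iff.1 h1 1 one_pos
    refine ⟨ε, hε, fun r hr hrT => ?_⟩
    simpa [hU, Real.dist_eq] using hb hr hrT
  have hsmall : ∀ γ : ℝ, ∀ᶠ δ in nhdsWithin (0 : ℝ) (Ioi 0), 2 ^ n * T ^ γ * δ ^ 2 ≤ 1 := by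
    intro γ
    have h1 : Continuous fun δ : ℝ => 2 ^ n * T ^ γ * δ ^ 2 := by fun_prop
    have h2 : Tendsto (fun δ : ℝ => 2 ^ n * T ^ γ * δ ^ 2) (nhds 0) (nhds 0) := by
      simpa using h1.tendsto 0
    exact ((h2.eventually (gt_mem_nhds one_pos)).mono fun _ h => h.le).filter_mono
      nhdsWithin_le_nhds
  have hlt : ∀ x : ℝ, 0 < x → ∀ᶠ δ in nhdsWithin (0 : ℝ) (Ioi 0), δ < x := fun x hx =>
    (gt_mem_nhds hx).filter_mono nhdsWithin_le_nhds
  obtain ⟨δ, hδβ, hδα, hδε, hδT, hδ0⟩ := ((hsmall β).and ((hsmall α).and ((hlt ε hε).and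
    ((hlt (T / 2) (by linarith)).and self_mem_nhdsWithin)))).exists
  replace hδ0 : 0 < δ := hδ0
  have hsub : Icc (T - δ) T ⊆ Icc 0 R := Icc_subset_Icc (by linarith) hTR
  have hne : (Icc (T - δ) T).Nonempty := nonempty_Icc.2 (by linarith)
  obtain ⟨x, hx, hxm⟩ := isCompact_Icc.exists_isMaxOn hne (h.contU.mono hsub).abs
  obtain ⟨y, hy, hym⟩ := isCompact_Icc.exists_isMaxOn hne (h.contV.mono hsub).abs
  have bU : |U x| ≤ |V y| ^ q := by
    refine (h.abs_le_of_zero_data hβ hq hT hTR hδ0 hδT.le hU hdU (K := |V y|) hym x hx).trans ?_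
    exact mul_le_of_le_one_left (by positivity) hδβ
  have bV : |V y| ≤ |U x| ^ p := by
    refine (h.swap.abs_le_of_zero_data hα hp hT hTR hδ0 hδT.le hV hdV (K := |U x|) hxm y
      hy).trans ?_
    exact mul_le_of_le_one_left (by positivity) hδα
  have hUx1 : |U x| < 1 := by
    refine hεU x ⟨(hsub hx).1, hx.2⟩ ?_
    rw [abs_lt]
    constructor <;> linarith [hx.1, hx.2]
  have hUx : |U x| = 0 := by
    by_contra hne0
    have hpos : 0 < |U x| := lt_of_le_of_ne (abs_nonneg _) (Ne.symm hne0)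
    have h1 : |U x| ≤ |U x| ^ (p * q) := by
      rw [Real.rpow_mul hpos.le]
      exact bU.trans (Real.rpow_le_rpow (abs_nonneg _) bV hq.le)
    have h2 := Real.rpow_lt_rpow_of_exponent_gt hpos hUx1 hpq
    rw [Real.rpow_one] at h2
    linarith
  have hVy : |V y| = 0 := by
    rw [hUx, Real.zero_rpow hp.ne'] at bV
    exact le_antisymm bV (abs_nonneg _)
  refine ⟨δ, hδ0, fun r hr => ⟨?_, ?_⟩⟩
  · exact abs_eq_zero.1 (le_antisymm ((hxm hr).trans hUx.le) (abs_nonneg _))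
  · exact abs_eq_zero.1 (le_antisymm ((hym hr).trans hVy.le) (abs_nonneg _))

/-! ### Nonexistence for the radial system -/

/-- The radial form of the nonexistence result. The argument is run at the supremum `T` of the
points where one of the profiles is nonzero. -/
lemma eq_zero (h : RadialSystem n R β q α p U V dU dV) (hα : 0 ≤ α) (hβ : 0 ≤ β)
    (hp : 0 < p) (hq : 0 < q) (hn : n ≠ 0)
    (hcrit : (n + 1 + α) / (p + 1) + (n + 1 + β) / (q + 1) ≤ (n : ℝ) - 1)
    (hU : U R = 0) (hV : V R = 0) : ∀ r ∈ Icc 0 R, U r = 0 ∧ V r = 0 := by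
  have hpq : 1 < p * q := by
    have hn0 : (0 : ℝ) ≤ n := n.cast_nonneg
    have h1 : (n + 1 + α) / (p + 1) ≥ (n + 1) / (p + 1) := 
      div_le_div_of_nonneg_right (by linarith) (by linarith)
    have h2 : (n + 1 + β) / (q + 1) ≥ (n + 1) / (q + 1) := 
      div_le_div_of_nonneg_right (by linarith) (by linarith)
    have h3 : ((n : ℝ) + 1) / (p + 1) + (n + 1) / (q + 1) < n + 1 := by linarith
    rw [div_add_div _ _ (by linarith) (by linarith), div_lt_iff₀ (by positivity)] at h3
    have h4 : ((n : ℝ) + 1) * (p + q + 2) < (n + 1) * ((p + 1) * (q + 1)) := by linarith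
    have := lt_of_mul_lt_mul_left h4 (by linarith)
    linarith
  by_contra hcon
  set Z : Set ℝ := {r | r ∈ Icc 0 R ∧ ¬ (U r = 0 ∧ V r = 0)} with hZ
  have hZne : Z.Nonempty := by
    push Not at hcon
    obtain ⟨r, hr, hr'⟩ := hcon
    exact ⟨r, hr, fun hh => hr' hh.1 hh.2⟩
  have hZb : BddAbove Z := ⟨R, fun r hr => hr.1.2⟩
  set T := sSup Z with hTdef
  have hT0 : 0 ≤ T := by
    obtain ⟨r, hr⟩ := hZne
    exact hr.1.1.trans (le_csSup hZb hr)
  have hTR : T ≤ R := csSup_le hZne fun r hr => hr.1.2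
  have hafter : ∀ r, T < r → r ≤ R → U r = 0 ∧ V r = 0 := by
    intro r hr hrR
    by_contra hc
    exact absurd (le_csSup hZb (show r ∈ Z from ⟨⟨hT0.trans hr.le, hrR⟩, hc⟩)) (not_le.2 hr)
  have hlim : ∀ f : ℝ → ℝ, ContinuousOn f (Icc 0 R) → f R = 0 →
      (∀ r, T < r → r ≤ R → f r = 0) → f T = 0 := by
    intro f hf hfR hfz
    rcases hTR.eq_or_lt with hE | hlt
    · rw [hE, hfR]
    · have h1 : Tendsto f (nhdsWithin T (Ioc T R)) (nhds (f T)) :=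
        (hf T ⟨hT0, hTR⟩).mono (fun r hr => ⟨hT0.trans hr.1.le, hr.2⟩)
      have : (nhdsWithin T (Ioc T R)).NeBot := by
        rw [nhdsWithin_Ioc_eq_nhdsGT hlt]; infer_instance
      refine tendsto_nhds_unique h1 (tendsto_const_nhds.congr' ?_)
      filter_upwards [self_mem_nhdsWithin] with r hr using (hfz r hr.1 hr.2).symm
  have hUT := hlim U h.contU hU fun r hr hrR => (hafter r hr hrR).1
  have hVT := hlim V h.contV hV fun r hr hrR => (hafter r hr hrR).2
  have hTZ : T ∉ Z := fun hT => hT.2 ⟨hUT, hVT⟩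
  have happrox : ∀ x < T, ∃ s ∈ Z, x < s ∧ s < T := by
    intro x hx
    obtain ⟨s, hs, hxs⟩ := exists_lt_of_lt_csSup hZne hx
    exact ⟨s, hs, hxs, lt_of_le_of_ne (le_csSup hZb hs) fun hE => hTZ (hE ▸ hs)⟩
  have hTpos : 0 < T := by
    obtain ⟨s, hs⟩ := hZne
    exact hs.1.1.trans_lt (lt_of_le_of_ne (le_csSup hZb hs) fun hE => hTZ (hE ▸ hs))
  have hprod := h.deriv_mul_deriv_nonpos hα hβ hp hq hn hcrit hTpos hTR hUT hVT
  have hnU : (-U) T = 0 := by simp [hUT]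
  have hnV : (-V) T = 0 := by simp [hVT]
  rcases lt_trichotomy (dU T) 0 with h1 | h1 | h1
  · refine h.neg.false_of_opposite hn hTpos hTR hnU hnV (by simpa using h1) ?_
    simp only [Pi.neg_apply, neg_nonpos]
    by_contra hc
    push Not at hc
    nlinarith [mul_pos_of_neg_of_neg h1 hc]
  · rcases lt_trichotomy (dV T) 0 with h2 | h2 | h2
    · exact h.swap.neg.false_of_opposite hn hTpos hTR hnV hnU (by simpa using h2) (by simp [h1])
    · obtain ⟨δ, hδ, hz⟩ := h.eq_zero_near hα hβ hp hq hpq hTpos hTR hUT hVT h1 h2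
      obtain ⟨s, hs, hs1, hs2⟩ := happrox (T - δ) (by linarith)
      exact hs.2 (hz s ⟨hs1.le, hs2.le⟩)
    · exact h.swap.false_of_opposite hn hTpos hTR hVT hUT h2 h1.le
  · refine h.false_of_opposite hn hTpos hTR hUT hVT h1 ?_
    by_contra hc
    push Not at hc
    nlinarith [mul_pos h1 hc]

end RadialSystem

/-! ### Reduction of the system to the radial profiles -/

/-- The second derivative in a direction `y` is computed along the line `x + t • y`. -/
lemma iteratedFDeriv_two_eq_of_line {E : Type*} [NormedAddCommGroup E] [NormedSpace ℝ E]
    {w : E → ℝ} {x y : E} (hw : ContDiffAt ℝ 2 w x) {g' : ℝ → ℝ} {c : ℝ}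
    (hg : ∀ᶠ t in nhds (0 : ℝ), HasDerivAt (fun t : ℝ => w (x + t • y)) (g' t) t)
    (hg' : HasDerivAt g' c 0) : iteratedFDeriv ℝ 2 w x ![y, y] = c := by
  rw [iteratedFDeriv_two_apply]
  have hline : ∀ t : ℝ, HasDerivAt (fun t : ℝ => x + t • y) y t := fun t => by
    simpa using ((hasDerivAt_id t).smul_const y).const_add x
  have htend : Tendsto (fun t : ℝ => x + t • y) (nhds 0) (nhds x) := by
    simpa using (hline 0).continuousAt.tendsto
  have hdiff : ∀ᶠ z in nhds x, DifferentiableAt ℝ w z :=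
    (hw.eventually (by simp)).mono fun z hz => hz.differentiableAt (by simp)
  have hev : (fun t : ℝ => fderiv ℝ w (x + t • y) y) =ᶠ[nhds 0] g' := by
    filter_upwards [hg, htend.eventually hdiff] with t h1 h2
    exact (h2.hasFDerivAt.comp_hasDerivAt t (hline t)).unique h1
  have hfd : DifferentiableAt ℝ (fderiv ℝ w) x :=
    (hw.fderiv_right (m := 1) (by norm_num)).differentiableAt (by simp)
  have h1 : HasDerivAt (fun t : ℝ => fderiv ℝ w (x + t • y)) (fderiv ℝ (fderiv ℝ w) x y) 0 := by
    have h0 : HasFDerivAt (fderiv ℝ w) (fderiv ℝ (fderiv ℝ w) x) (x + (0 : ℝ) • y) := by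
      simpa using hfd.hasFDerivAt
    exact h0.comp_hasDerivAt 0 (hline 0)
  have h2 : HasDerivAt (fun t : ℝ => fderiv ℝ w (x + t • y) y)
      (fderiv ℝ (fderiv ℝ w) x y y) 0 := by
    simpa using h1.clm_apply (hasDerivAt_const (0 : ℝ) y)
  exact h2.unique (hg'.congr_of_eventuallyEq hev)

/-- The polar form `Δu = U'' + (n / r) U'` of the Laplacian of a radial function, evaluated on
the first coordinate axis of `ℝ ^ (n + 1)`. -/
lemma laplacian_radial {n : ℕ} {u : EuclideanSpace ℝ (Fin (n + 1)) → ℝ} {U : ℝ → ℝ}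
    (hu : ∀ x, u x = U ‖x‖) {r : ℝ} (hr : 0 < r)
    (hur : ContDiffAt ℝ 2 u (r • EuclideanSpace.single 0 1)) (hU : ContDiffAt ℝ 2 U r) :
    laplacian u (r • EuclideanSpace.single 0 1) = deriv (deriv U) r + n / r * deriv U r := by
  have hdU : ∀ᶠ s in nhds r, HasDerivAt U (deriv U s) s :=
    (hU.eventually (by simp)).mono fun s hs => (hs.differentiableAt (by simp)).hasDerivAt
  have hddU : HasDerivAt (deriv U) (deriv (deriv U) r) r := by
    have h1 : ContDiffAt ℝ 1 (deriv U) r := hU.derivWithin (by norm_num)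
    exact (h1.differentiableAt (by simp)).hasDerivAt
  have hrad : iteratedFDeriv ℝ 2 u (r • EuclideanSpace.single 0 1)
      ![EuclideanSpace.single 0 1, EuclideanSpace.single 0 1] = deriv (deriv U) r := by
    have htend : Tendsto (fun t : ℝ => r + t) (nhds 0) (nhds r) := by
      simpa using (continuous_const_add r).tendsto 0
    refine iteratedFDeriv_two_eq_of_line hur (g' := fun t => deriv U (r + t)) ?_ ?_
    · filter_upwards [htend.eventually hdU, htend.eventually (lt_mem_nhds hr),
        htend.eventually (eventually_eventually_nhds.2 (lt_mem_nhds hr))] with t h1 h2 h3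
      refine (h1.comp_const_add r t).congr_of_eventuallyEq ?_
      have h4 : ∀ᶠ s in nhds t, 0 < r + s :=
        (continuous_const_add r).continuousAt.eventually h3
      filter_upwards [h4] with s hs
      rw [hu, ← add_smul, norm_smul]
      simp [abs_of_pos hs]
    · exact HasDerivAt.comp_const_add r 0 (by simpa using hddU)
  have htan : ∀ i : Fin n, iteratedFDeriv ℝ 2 u (r • EuclideanSpace.single 0 1)
      ![EuclideanSpace.single i.succ 1, EuclideanSpace.single i.succ 1] = deriv U r / r := by
    intro i
    have hnorm : ∀ t : ℝ, ‖r • (EuclideanSpace.single 0 1 : EuclideanSpace ℝ (Fin (n + 1))) +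
        t • EuclideanSpace.single i.succ 1‖ = √(r ^ 2 + t ^ 2) := by
      intro t
      have h1 := norm_add_sq_real
        (r • (EuclideanSpace.single 0 1 : EuclideanSpace ℝ (Fin (n + 1))))
        (t • EuclideanSpace.single i.succ 1)
      rw [eq_comm, Real.sqrt_eq_iff_eq_sq (by positivity) (norm_nonneg _), h1]
      have h2 : inner ℝ (EuclideanSpace.single 0 1 : EuclideanSpace ℝ (Fin (n + 1)))
          (EuclideanSpace.single i.succ 1) = 0 := by
        rw [EuclideanSpace.inner_single_left]
        simp
      simp [norm_smul, inner_smul_left, inner_smul_right, h2]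
    have hpos : ∀ t : ℝ, 0 < r ^ 2 + t ^ 2 := fun t => by positivity
    have hsq : ∀ t : ℝ, HasDerivAt (fun t : ℝ => √(r ^ 2 + t ^ 2)) (t / √(r ^ 2 + t ^ 2)) t := by
      intro t
      refine (((hasDerivAt_pow 2 t).const_add (r ^ 2)).sqrt (hpos t).ne').congr_deriv ?_
      have := (Real.sqrt_pos.2 (hpos t)).ne'
      field_simp
      simp
    have hs0 : √(r ^ 2 + (0 : ℝ) ^ 2) = r := by simp [Real.sqrt_sq hr.le]
    have htend : Tendsto (fun t : ℝ => √(r ^ 2 + t ^ 2)) (nhds 0) (nhds r) := by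
      have := (hsq 0).continuousAt.tendsto
      rwa [hs0] at this
    refine iteratedFDeriv_two_eq_of_line hur
      (g' := fun t => deriv U (√(r ^ 2 + t ^ 2)) * (t / √(r ^ 2 + t ^ 2))) ?_ ?_
    · filter_upwards [htend.eventually hdU] with t h1
      have h2 : HasDerivAt (fun t : ℝ => U (√(r ^ 2 + t ^ 2)))
        (deriv U (√(r ^ 2 + t ^ 2)) * (t / √(r ^ 2 + t ^ 2))) t := HasDerivAt.comp t h1 (hsq t)
      refine h2.congr_of_eventuallyEq (Eventually.of_forall fun s => ?_)
      simp only [hu, hnorm]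
    · have h1 : HasDerivAt (deriv U) (deriv (deriv U) r) (√(r ^ 2 + (0 : ℝ) ^ 2)) := by
        rwa [hs0]
      have h2 := (HasDerivAt.comp (0 : ℝ) h1 (hsq 0)).mul
        ((hasDerivAt_id (0 : ℝ)).div (hsq 0) (by rw [hs0]; exact hr.ne'))
      refine h2.congr_deriv ?_
      simp only [Pi.div_apply, Function.comp_apply, id, hs0]
      field_simp
      ring
  rw [laplacian, Fin.sum_univ_succ, hrad]
  simp only [htan, Finset.sum_const, Finset.card_univ, Fintype.card_fin, nsmul_eq_mul]
  ring

/-- A radial `C²` function on the closed ball has a profile `U`, given by its restriction to the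
first coordinate axis, with one-sided derivative `dU` on `[0, R]`. -/
lemma radial_profile {n : ℕ} {R : ℝ} (hR : 0 < R) {u : EuclideanSpace ℝ (Fin (n + 1)) → ℝ}
    (hur : IsRadial u) (hu : ContDiffOn ℝ 2 u (closedBall 0 R)) :
    ∃ U dU : ℝ → ℝ, (∀ x, u x = U ‖x‖) ∧ ContinuousOn U (Icc 0 R) ∧ ContinuousOn dU (Icc 0 R) ∧
      (∀ r ∈ Ioo 0 R, HasDerivAt U (dU r) r) ∧
      ∀ r ∈ Ioo 0 R, HasDerivAt dU
        (-(n / r * dU r) + laplacian u (r • EuclideanSpace.single 0 1)) r := by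
  obtain ⟨U₀, hU₀⟩ := hur
  set e : EuclideanSpace ℝ (Fin (n + 1)) := EuclideanSpace.single 0 1 with he
  have hne : ‖e‖ = 1 := by simp [he]
  set U : ℝ → ℝ := fun r => u (r • e) with hU
  have huU : ∀ x, u x = U ‖x‖ := fun x => by
    simp [hU, hU₀, norm_smul, hne]
  have hC : ContDiffOn ℝ 2 U (Icc 0 R) := by
    refine hu.comp (g := u) (f := fun r : ℝ => r • e) (by fun_prop) fun r hr => ?_
    simp [norm_smul, hne, abs_of_nonneg hr.1, hr.2]
  have hcd : ContinuousOn (derivWithin U (Icc 0 R)) (Icc 0 R) :=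
    hC.continuousOn_derivWithin (uniqueDiffOn_Icc hR) (by simp)
  have hCr : ∀ r ∈ Ioo 0 R, ContDiffAt ℝ 2 U r := fun r hr =>
    hC.contDiffAt (Icc_mem_nhds hr.1 hr.2)
  have hdw : ∀ r ∈ Ioo 0 R, derivWithin U (Icc 0 R) r = deriv U r := fun r hr =>
    derivWithin_of_mem_nhds (Icc_mem_nhds hr.1 hr.2)
  refine ⟨U, derivWithin U (Icc 0 R), huU, hC.continuousOn, hcd, fun r hr => ?_, fun r hr => ?_⟩
  · rw [hdw r hr]
    exact ((hCr r hr).differentiableAt (by simp)).hasDerivAt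
  · have hball : ContDiffAt ℝ 2 u (r • e) := by
      refine hu.contDiffAt (closedBall_mem_nhds_of_mem ?_)
      simp [norm_smul, hne, abs_of_pos hr.1, hr.2]
    rw [laplacian_radial huU hr.1 hball (hCr r hr), hdw r hr]
    have h1 : ContDiffAt ℝ 1 (deriv U) r := (hCr r hr).derivWithin (by norm_num)
    refine ((h1.differentiableAt (by simp)).hasDerivAt.congr_of_eventuallyEq ?_).congr_deriv
      (by ring)
    filter_upwards [Ioo_mem_nhds hr.1 hr.2] with s hs using hdw s hs

theorem nonexistence_critical_supercritical {N : ℕ} (hN : 3 ≤ N)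
    {α β p q : ℝ} (hα : 0 ≤ α) (hβ : 0 ≤ β) (hp : 0 < p) (hq : 0 < q)
    (hcrit : (N + α) / (p + 1) + (N + β) / (q + 1) ≤ (N : ℝ) - 2)
    {R : ℝ} (hR : 0 < R)
    {u v : EuclideanSpace ℝ (Fin N) → ℝ} (hur : IsRadial u) (hvr : IsRadial v)
    (hu : ContDiffOn ℝ 2 u (closedBall 0 R)) (hv : ContDiffOn ℝ 2 v (closedBall 0 R))
    (heq1 : ∀ x ∈ ball (0 : EuclideanSpace ℝ (Fin N)) R,
      laplacian u x + ‖x‖ ^ β * spow (v x) q = 0)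
    (heq2 : ∀ x ∈ ball (0 : EuclideanSpace ℝ (Fin N)) R,
      laplacian v x + ‖x‖ ^ α * spow (u x) p = 0)
    (hub : ∀ x ∈ sphere (0 : EuclideanSpace ℝ (Fin N)) R, u x = 0)
    (hvb : ∀ x ∈ sphere (0 : EuclideanSpace ℝ (Fin N)) R, v x = 0) :
    ∀ x ∈ closedBall (0 : EuclideanSpace ℝ (Fin N)) R, u x = 0 ∧ v x = 0 := by
  obtain ⟨n, rfl⟩ : ∃ n, N = n + 1 := ⟨N - 1, by omega⟩
  obtain ⟨U, dU, huU, cU, cdU, hU1, hU2⟩ := radial_profile hR hur hu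
  obtain ⟨V, dV, hvV, cV, cdV, hV1, hV2⟩ := radial_profile hR hvr hv
  have hnorm : ∀ {r : ℝ}, 0 ≤ r →
      ‖r • (EuclideanSpace.single 0 1 : EuclideanSpace ℝ (Fin (n + 1)))‖ = r := fun hr => by
    simp [norm_smul, abs_of_nonneg hr]
  have hsys : RadialSystem n R β q α p U V dU dV := by
    refine ⟨cU, cV, cdU, cdV, hU1, hV1, fun r hr => ?_, fun r hr => ?_⟩
    · refine (hU2 r hr).congr_deriv ?_
      have h1 := heq1 (r • EuclideanSpace.single 0 1)
        (by rw [mem_ball_zero_iff, hnorm hr.1.le]; exact hr.2)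
      rw [hvV, hnorm hr.1.le] at h1
      linarith
    · refine (hV2 r hr).congr_deriv ?_
      have h1 := heq2 (r • EuclideanSpace.single 0 1)
        (by rw [mem_ball_zero_iff, hnorm hr.1.le]; exact hr.2)
      rw [huU, hnorm hr.1.le] at h1
      linarith
  have hmem : R • (EuclideanSpace.single 0 1 : EuclideanSpace ℝ (Fin (n + 1))) ∈
      sphere (0 : EuclideanSpace ℝ (Fin (n + 1))) R := by
    rw [mem_sphere_zero_iff_norm, hnorm hR.le]
  have hUR : U R = 0 := by
    have := hub _ hmem
    rwa [huU, hnorm hR.le] at this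
  have hVR : V R = 0 := by
    have := hvb _ hmem
    rwa [hvV, hnorm hR.le] at this
  push_cast at hcrit
  intro x hx
  rw [huU, hvV]
  exact hsys.eq_zero hα hβ hp hq (by omega) (by linarith) hUR hVR ‖x‖
    ⟨norm_nonneg x, by simpa using hx⟩
end

section
/- Let p, q be real numbers with 0 < q < 1 < p and pq > 1, and let ĉ ∈ (0, min{⟨q⟩, 1/10}], where ⟨q⟩ denotes the distance from q to the set of integers. Then there exist sequences (ϑ_k)_{k≥1} and (γ_k)_{k≥1} with ϑ_k, γ_k ∈ [0,1) for all k, such that the sequences defined by α₁ = q, β_k = (α_k + 2)p − γ_k, and α_{k+1} = (β_k + 2)q − ϑ_k satisfy: (i) (α_k) and (β_k) are strictly increasing in k; (ii) the distance from α_k to ℤ and the distance from β_k to ℤ are both ≥ ĉ for every k (in particular no α_k or β_k is an integer); (iii) there exist constants A, B > 0 such that A·(pq)^k ≤ α_k ≤ B·(pq)^k and A·(pq)^k ≤ β_k ≤ B·(pq)^k for all k; in particular α_k → ∞ and β_k → ∞. -/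
/-!
Let `S` be the closed set of reals at distance at least `c` from `ℤ`. Rounding down to `S`
(`roundDown`) moves a point by at most `2 * c ≤ 1/5`, so `γ` and `ϑ` can be taken to be the rounding
errors of `(α + 2) * p` and `(β + 2) * q`. The shifts `+ 2` outweigh those errors: one full step
`α ↦ α'` satisfies `p * q * α + 8/5 ≤ α' ≤ p * q * α + 4 * (p * q)`. The lower bound gives strict
monotonicity and geometric growth from below. The upper bound says that `α + D`, with
`D = 4 * (p * q) / (p * q - 1)`, grows at most by the factor `p * q` in each step.
-/

open MeasureTheory Asymptotics Filter Metric Set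

/-- The largest number `≤ x` whose distance to `ℤ` is at least `c` (for `0 < c ≤ 1/2`): with
`m = ⌊x - c⌋` one has `m + c ≤ x < m + 1 + c`, and the admissible numbers in that range form the
interval from `m + c` to `m + 1 - c`. -/
noncomputable def roundDown (c x : ℝ) : ℝ := min x (⌊x - c⌋ + 1 - c)

lemma roundDown_le (c x : ℝ) : roundDown c x ≤ x := min_le_left _ _

lemma sub_le_roundDown {c : ℝ} (hc0 : 0 < c) (x : ℝ) : x - 2 * c ≤ roundDown c x := by
  have h := Int.lt_floor_add_one (x - c)
  exact le_min (by linarith) (by linarith)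

lemma le_distToInt_roundDown {c : ℝ} (hc0 : 0 < c) (hc : c ≤ 1 / 10) (x : ℝ) :
    c ≤ distToInt (roundDown c x) := by
  have h1 := Int.floor_le (x - c)
  have h2 : (⌊x - c⌋ : ℝ) + c ≤ roundDown c x := le_min (by linarith) (by linarith)
  have h3 : roundDown c x ≤ ⌊x - c⌋ + 1 - c := min_le_right _ _
  have h4 : ⌊roundDown c x⌋ = ⌊x - c⌋ := by
    rw [Int.floor_eq_iff]
    constructor <;> linarith
  have h5 : Int.fract (roundDown c x) = roundDown c x - ⌊x - c⌋ := by
    rw [Int.fract, h4]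
  unfold distToInt
  rw [h5]
  exact le_min (by linarith) (by linarith)

/-- The sequence `α`, indexed from `0`. -/
noncomputable def alphaSeq (p q c : ℝ) : ℕ → ℝ
  | 0 => q
  | n + 1 => roundDown c ((roundDown c ((alphaSeq p q c n + 2) * p) + 2) * q)

/-- The sequence `β`, indexed from `0`. -/
noncomputable def betaSeq (p q c : ℝ) (n : ℕ) : ℝ := roundDown c ((alphaSeq p q c n + 2) * p)

lemma alphaSeq_succ (p q c : ℝ) (n : ℕ) :
    alphaSeq p q c (n + 1) = roundDown c ((betaSeq p q c n + 2) * q) := rfl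

theorem iteration_sequences {p q : ℝ} (hq0 : 0 < q) (hq1 : q < 1) (hp : 1 < p)
    (hpq : 1 < p * q) {c : ℝ} (hc0 : 0 < c) (hc : c ≤ min (distToInt q) (1 / 10)) :
    ∃ ϑ γ α β : ℕ → ℝ,
      (∀ k, 0 ≤ ϑ k ∧ ϑ k < 1) ∧
      (∀ k, 0 ≤ γ k ∧ γ k < 1) ∧
      α 1 = q ∧
      (∀ k ≥ 1, β k = (α k + 2) * p - γ k) ∧
      (∀ k ≥ 1, α (k + 1) = (β k + 2) * q - ϑ k) ∧
      -- (i) monotonicity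
      (∀ k ≥ 1, α k < α (k + 1) ∧ β k < β (k + 1)) ∧
      -- (ii) distance to the integers
      (∀ k ≥ 1, c ≤ distToInt (α k) ∧ c ≤ distToInt (β k)) ∧
      -- (iii) growth estimates
      (∃ A B : ℝ, 0 < A ∧ 0 < B ∧
        ∀ k ≥ 1, (A * (p * q) ^ k ≤ α k ∧ α k ≤ B * (p * q) ^ k) ∧
          (A * (p * q) ^ k ≤ β k ∧ β k ≤ B * (p * q) ^ k)) ∧
      Tendsto α atTop atTop ∧ Tendsto β atTop atTop := by
  obtain ⟨hcq, hc10⟩ := le_min_iff.mp hc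
  set a := alphaSeq p q c with ha
  set b := betaSeq p q c with hb
  have ha0 : a 0 = q := rfl
  have hbn : ∀ n, b n = roundDown c ((a n + 2) * p) := fun _ => rfl
  have han : ∀ n, a (n + 1) = roundDown c ((b n + 2) * q) := alphaSeq_succ p q c
  have hblo : ∀ n, (a n + 2) * p - 1 / 5 ≤ b n := fun n => by
    have h := sub_le_roundDown hc0 ((a n + 2) * p)
    rw [hbn]
    linarith
  have hbhi : ∀ n, b n ≤ (a n + 2) * p := fun n => roundDown_le _ _
  have halo : ∀ n, p * q * a n + 8 / 5 ≤ a (n + 1) := fun n => by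
    have h := sub_le_roundDown hc0 ((b n + 2) * q)
    have h2 := mul_le_mul_of_nonneg_right (hblo n) hq0.le
    rw [han]
    nlinarith
  have hahi : ∀ n, a (n + 1) ≤ p * q * a n + 4 * (p * q) := fun n => by
    have h := roundDown_le c ((b n + 2) * q)
    have h2 := mul_le_mul_of_nonneg_right (hbhi n) hq0.le
    have h3 : q ≤ p * q := le_mul_of_one_le_left hq0.le hp.le
    rw [han]
    nlinarith
  have hp0 : 0 < p := by linarith
  have hM0 : 0 < p * q := by linarith
  have hgrowlo : ∀ n, 1 / p * (p * q) ^ (n + 1) ≤ a n := by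
    intro n
    induction n with
    | zero => rw [ha0]; apply le_of_eq; field_simp; ring
    | succ n ih =>
      have h := mul_le_mul_of_nonneg_left ih hM0.le
      have h2 := halo n
      calc 1 / p * (p * q) ^ (n + 1 + 1) = p * q * (1 / p * (p * q) ^ (n + 1)) := by ring
        _ ≤ a (n + 1) := by linarith
  have hapos : ∀ n, 0 < a n := fun n => lt_of_lt_of_le (by positivity) (hgrowlo n)
  have hab : ∀ n, a n ≤ b n := fun n => by
    have := hblo n
    nlinarith [hapos n]
  have hainc : ∀ n, a n + 8 / 5 ≤ a (n + 1) := fun n => by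
    nlinarith [halo n, hapos n]
  have hbinc : ∀ n, b n < b (n + 1) := fun n => by
    have h := mul_le_mul_of_nonneg_right (hainc n) hp0.le
    nlinarith [hblo (n + 1), hbhi n]
  obtain ⟨D, hD0, hD⟩ : ∃ D : ℝ, 0 < D ∧ D * (p * q - 1) = 4 * (p * q) := by
    have h : 0 < p * q - 1 := by linarith
    exact ⟨4 * (p * q) / (p * q - 1), by positivity, div_mul_cancel₀ _ h.ne'⟩
  have hgrowhi : ∀ n, a n + D ≤ (q + D) * (p * q) ^ n := by
    intro n
    induction n with
    | zero => simp [ha0]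
    | succ n ih =>
      have h := mul_le_mul_of_nonneg_left ih hM0.le
      have h2 := hahi n
      calc a (n + 1) + D ≤ p * q * (a n + D) := by linarith
        _ ≤ (q + D) * (p * q) ^ (n + 1) := by rw [pow_succ]; linarith
  have hahi' : ∀ n, a n ≤ (q + D) * (p * q) ^ (n + 1) := fun n => by
    have h := hgrowhi n
    have h2 : (p * q) ^ n ≤ (p * q) ^ (n + 1) := pow_le_pow_right₀ hpq.le n.le_succ
    have h3 := mul_le_mul_of_nonneg_left h2 (by positivity : 0 ≤ q + D)
    linarith
  have hbhi' : ∀ n, b n ≤ (p * (q + D) + 2 * p) * (p * q) ^ (n + 1) := fun n => by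
    have h := mul_le_mul_of_nonneg_left (hahi' n) hp0.le
    have h2 : 1 ≤ (p * q) ^ (n + 1) := one_le_pow₀ hpq.le
    nlinarith [hbhi n]
  have hadist : ∀ n, c ≤ distToInt (a n) := by
    rintro (_ | n)
    · exact hcq
    · rw [han]; exact le_distToInt_roundDown hc0 hc10 _
  have hatop : Tendsto a atTop atTop := by
    have h : Tendsto (fun n : ℕ => 1 / p * (p * q) ^ (n + 1)) atTop atTop :=
      ((tendsto_pow_atTop_atTop_of_one_lt hpq).comp (tendsto_add_atTop_nat 1)).const_mul_atTop
        (by positivity)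
    exact tendsto_atTop_mono hgrowlo h
  have hshift : Tendsto (fun k : ℕ => k - 1) atTop atTop := tendsto_sub_atTop_nat 1
  have herr : ∀ x, 0 ≤ x - roundDown c x ∧ x - roundDown c x < 1 := fun x =>
    ⟨by linarith [roundDown_le c x], by linarith [sub_le_roundDown hc0 x]⟩
  refine ⟨fun k => (b (k - 1) + 2) * q - roundDown c ((b (k - 1) + 2) * q),
    fun k => (a (k - 1) + 2) * p - roundDown c ((a (k - 1) + 2) * p),
    fun k => a (k - 1), fun k => b (k - 1), fun k => herr _, fun k => herr _, ha0,
    ?_, ?_, ?_, ?_, ⟨1 / p, p * (q + D) + 2 * p, by positivity, by positivity, ?_⟩,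
    hatop.comp hshift, (tendsto_atTop_mono hab hatop).comp hshift⟩
  all_goals
    intro k hk
    obtain ⟨n, rfl⟩ := Nat.exists_eq_add_of_le' hk
    simp only [Nat.add_sub_cancel]
  · rw [hbn]; ring
  · rw [han]; ring
  · exact ⟨by linarith [hainc n], hbinc n⟩
  · exact ⟨hadist n, by rw [hbn]; exact le_distToInt_roundDown hc0 hc10 _⟩
  · exact ⟨⟨hgrowlo n, (hab n).trans (hbhi' n)⟩, (hgrowlo n).trans (hab n), hbhi' n⟩
end
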